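/- The automorphism group O(L_Q), consisting of all ℤ-linear automorphisms of L_Q preserving the bilinear form, has order 119040. -/

import Mathlib

/-!
The proof replaces `L_Q` by an integral model `LatZ ⊂ ℤ^64`, shows that every automorphism of the
model commutes with an operator `J` with `J² = -31`, deduces that every automorphism is a signed
permutation of the coordinates, and counts by orbits and stabilizers.

**The model.** In the coordinates `a = 7(x₀ + x₁)`, `b = 5(x₀ - x₁)` on each copy of `R∨` the form
is `a²/14 + b²/10`. With `C` the Paley conference matrix of `P¹(F₃₁)` (skew, `C² = -31`) and `D` the
diagonal sign matrix with `-1` at `∞`, the code condition splits into `C b ≡ 2b (mod 5)` and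
`(2 - C) D a ≡ 0 (mod 7)` (`mem_Qcode`, `mem_LQ`). Put `z = (2 - C) D a / 7`
and `w = (b + z, b - z)`. Then `L_Q` becomes the lattice `LatZ` of all `w` whose entries are
congruent mod 2, with `∑ w ≡ 2 wᵢ (mod 4)` and `J w ≡ 2 w (mod 5)`, where `J` is the block matrix
`[[0, C], [C, 0]]`, and the form is the dot product divided by 20 (`Psi`, `mem_Gam_iff`).

**Commutation with `J`** (`J_comm`). The known signed permutations act transitively on the
coordinates, and every alternating form on `LatZ` invariant under them is proportional to
`x ⬝ J y` (`form_eq`). Hence it suffices to find one nonzero alternating form invariant under *all*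
automorphisms. Take eight vectors of norm 120 (in the unscaled dot product) and sum, over the orbit
of this 8-tuple, the determinants `⟨b₀, x⟩⟨b₂, y⟩ - ⟨b₀, y⟩⟨b₂, x⟩`; this is `AF`. Only its value
modulo 5 at one pair of vectors is needed. There is a signed permutation `gu` of order 5, so modulo
5 only the 8-tuples fixed by `gu` contribute (`sum_modp`).

The fixed tuples are found as follows. There are 120 vectors of norm 120 fixed by `gu`
(`M3_complete`). The Gram matrix and the third moments `∑ ⟨c, x⟩³ mod 5` (`Phi`) leave, up to sixteen
known signed permutations, six candidate tuples (`tuples`). The tuple itself is one of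
them; the other five are excluded modulo 31. A candidate in the orbit yields a linear map on the class
sums `hv` which preserves all polynomial moments over the vectors of norm 120 (`Inv_of`). If one of
the five existed, a polynomial identity over `F₃₁` (`cert0`, `cert1`, `cert3`) would write zero as
an average, over maps preserving moments, of a target quartic plus quartics whose moments vanish
because of the translation `ν ↦ ν + 1` of order 31 (`mom_rel`); but the moment of the target is
`19 ≠ 0` (`mom_tgt`). So the fixed tuples are the sixteen known images (`fixed_tuple`), and
`AF ≠ 0` follows (`AF_ne`).

**Signed permutations.** An automorphism commuting with `J` preserves the sublattice
`{x | J x + 2 x ∈ 5 LatZ}`, which consists of the vectors divisible by 5. The vectors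
`10 (eₐ ± e_b)` belong to it, and this forces an automorphism to permute the vectors `± 20 eᵢ`
(`mono`, `signed_perm`).

**Counting.** The group acts transitively on the 128 vectors `± 20 eᵢ` (`orbit_one`). The stabilizer
of the one at `∞` in the first block has an orbit of length 31 (`orbit_two`), the next stabilizer an
orbit of length 30 (`orbit_three`), and an automorphism fixing all three vectors is trivial
(`rigid`, `stab_three`). Hence the order is `128 · 31 · 30 = 119040`.
-/

noncomputable section

/-- The projective line over `F₃₁`: `none` is the point `∞`. -/
abbrev P1 : Type := Option (ZMod 31)

/-- The generator `v_μ` of the generalized quadratic residue code `Q` with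
parameters `(a,b,d,s,t,e) = (0,0,1,7,3,2)`:
`v_μ(μ) = 1`, `v_μ(ν) = 7` if `χ(μ-ν) = 1`, `v_μ(ν) = 3` if `χ(μ-ν) = -1`, `v_μ(∞) = 2`. -/
def vgen (μ : ZMod 31) : P1 → ZMod 35 := fun ν =>
  match ν with
  | none => 2
  | some ν' => if ν' = μ then 1 else if IsSquare (μ - ν') then 7 else 3

/-- The generalized quadratic residue code `Q`, a subgroup of `(ℤ/35ℤ)^{P¹(F₃₁)}`. -/
def Qcode : AddSubgroup (P1 → ZMod 35) := AddSubgroup.closure (Set.range vgen)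
/-- The generator `u = (34 e₁ + 6 e₂)/35` of the discriminant group `D_R = R∨/R ≅ ℤ/35ℤ`. -/
def uvec : Fin 2 → ℚ := ![34/35, 6/35]

/-- The bilinear form `⟨x,y⟩ = xᵀ G y` on `ℚ²`, with `G = [[6,1],[1,6]]`. -/
def B2 (x y : Fin 2 → ℚ) : ℚ :=
  6 * x 0 * y 0 + x 0 * y 1 + x 1 * y 0 + 6 * x 1 * y 1

/-- Membership in the lattice `R = ℤ² ⊆ ℚ²`. -/
def inRlat (x : Fin 2 → ℚ) : Prop := ∀ i, ∃ k : ℤ, x i = (k : ℚ)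
/-- The lattice `L_Q ⊆ (R∨)³² ⊆ ℚ⁶⁴`: the preimage of the code `Q` under the natural
projection `(R∨)³² → (D_R)³² ≅ (ℤ/35ℤ)³²`.  A vector `x` belongs to `L_Q` iff there is a
codeword `w ∈ Q` such that for every `ν ∈ P¹(F₃₁)` the component `x ν` is congruent to
`w(ν)·u` modulo `R = ℤ²`. -/
def LQ : Set (P1 → Fin 2 → ℚ) :=
  {x | ∃ w ∈ Qcode, ∀ ν : P1, ∃ m : ℤ,
    (m : ZMod 35) = w ν ∧ inRlat (x ν - (m : ℚ) • uvec)}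

/-- The orthogonal direct-sum bilinear form of 32 copies of `R∨`. -/
def Bf (x y : P1 → Fin 2 → ℚ) : ℚ := ∑ ν : P1, B2 (x ν) (y ν)

open Matrix

namespace GQR

/-! ### The Paley matrix and the integral model -/

/-- The quadratic character of `F₃₁`, computed by Euler's criterion and extended by `0` at `0`. -/
def chi (x : ZMod 31) : ℤ := if x = 0 then 0 else if x ^ 15 = 1 then 1 else -1

/-- The Paley conference matrix on `P¹(F₃₁)`, with `none` for `∞`: it is skew and `C² = -31`. -/
def Cm : P1 → P1 → ℤ
  | none, none => 0
  | none, some _ => -1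
  | some _, none => 1
  | some μ, some ν => chi (μ - ν)

set_option maxRecDepth 100000 in
theorem chi_sq : ∀ x : ZMod 31, x ≠ 0 → (IsSquare x ↔ chi x = 1) := by decide +kernel
set_option maxRecDepth 100000 in
theorem chi_mul : ∀ x y : ZMod 31, chi (x*y) = chi x * chi y := by decide +kernel
set_option maxRecDepth 100000 in
theorem Cm_skew : ∀ x y, Cm x y = - Cm y x := by decide +kernel
set_option maxRecDepth 100000 in
theorem chi_conv : ∀ x : ZMod 31, ∑ y : ZMod 31, chi (x - y) * chi y = if x = 0 then -30 else 1 := by decide +kernel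
set_option maxRecDepth 100000 in
theorem Cm_sq : ∀ x y, ∑ z, Cm x z * Cm z y = if x = y then -31 else 0 := by decide +kernel

/-- The 64 coordinates: two copies of `P¹(F₃₁)`. The `Bool` names the block, `false` being the first. -/
abbrev Ix : Type := Bool × P1

/-- The block matrix `[[0, C], [C, 0]]`; it satisfies `J² = -31`. -/
def Jm : Matrix Ix Ix ℤ := fun i j => if i.1 = j.1 then 0 else Cm i.2 j.2

theorem Jm_transpose : Jmᵀ = -Jm := by
  ext ⟨b, x⟩ ⟨c, y⟩
  simp only [Matrix.transpose_apply, Matrix.neg_apply, Jm]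
  rw [Cm_skew y x]
  by_cases h : b = c <;> simp [h, eq_comm]

theorem Jm_mul : Jm * Jm = (-31 : ℤ) • (1 : Matrix Ix Ix ℤ) := by
  ext ⟨b, x⟩ ⟨c, y⟩
  have h := Cm_sq x y
  simp only [Matrix.mul_apply, Fintype.sum_prod_type, Jm, Fintype.sum_bool, Matrix.smul_apply,
    Matrix.one_apply, Prod.mk.injEq]
  cases b <;> cases c <;> simp [h]

theorem J_J (x : Ix → ℤ) : Jm *ᵥ (Jm *ᵥ x) = (-31 : ℤ) • x := by
  rw [Matrix.mulVec_mulVec, Jm_mul, Matrix.smul_mulVec, Matrix.one_mulVec]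

theorem dot_J (x y : Ix → ℤ) : x ⬝ᵥ (Jm *ᵥ y) = - ((Jm *ᵥ x) ⬝ᵥ y) := by
  rw [Matrix.dotProduct_mulVec, ← Matrix.mulVec_transpose, Jm_transpose, Matrix.neg_mulVec,
    neg_dotProduct]

theorem J_dot_J (x y : Ix → ℤ) : (Jm *ᵥ x) ⬝ᵥ (Jm *ᵥ y) = 31 * (x ⬝ᵥ y) := by
  rw [dot_J, J_J, smul_dotProduct]; simp

/-- The integral model of `L_Q`, whose form is the dot product divided by 20. -/
def LatZ : AddSubgroup (Ix → ℤ) where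
  carrier := {w | (∀ i j, 2 ∣ w i - w j) ∧ (∀ i, 4 ∣ ∑ j, w j - 2 * w i) ∧
    ∀ i, 5 ∣ (Jm *ᵥ w) i - 2 * w i}
  zero_mem' := by simp
  add_mem' := by
    rintro a b ⟨h1, h2, h3⟩ ⟨k1, k2, k3⟩
    refine ⟨fun i j => ?_, fun i => ?_, fun i => ?_⟩
    · have := h1 i j; have := k1 i j; simp only [Pi.add_apply]; omega
    · have := h2 i; have := k2 i; simp only [Pi.add_apply, Finset.sum_add_distrib]; omega
    · have := h3 i; have := k3 i; simp only [Pi.add_apply, Matrix.mulVec_add]; omega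
  neg_mem' := by
    rintro a ⟨h1, h2, h3⟩
    refine ⟨fun i j => ?_, fun i => ?_, fun i => ?_⟩
    · have := h1 i j; simp only [Pi.neg_apply]; omega
    · have := h2 i; simp only [Pi.neg_apply, Finset.sum_neg_distrib]; omega
    · have := h3 i; simp only [Pi.neg_apply, Matrix.mulVec_neg]; omega

theorem mem_LatZ {w : Ix → ℤ} : w ∈ LatZ ↔ (∀ i j, 2 ∣ w i - w j) ∧
    (∀ i, 4 ∣ ∑ j, w j - 2 * w i) ∧ ∀ i, 5 ∣ (Jm *ᵥ w) i - 2 * w i := Iff.rfl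

theorem card_Ix : Fintype.card Ix = 64 := by decide +kernel

/-- The form of `LatZ` is integral. Modulo 5: `31 x⬝y = Jx⬝Jy ≡ 4 x⬝y`, so `5 ∣ 27 x⬝y`. Modulo 4: subtract a
fixed entry from all entries and use that the differences are even. -/
theorem dvd_dot {x y : Ix → ℤ} (hx : x ∈ LatZ) (hy : y ∈ LatZ) : 20 ∣ x ⬝ᵥ y := by
  obtain ⟨h1, h2, h3⟩ := hx
  obtain ⟨k1, k2, k3⟩ := hy
  have h5 : (5:ℤ) ∣ x ⬝ᵥ y := by
    choose a ha using h3
    choose b hb using k3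
    have ha' : Jm *ᵥ x = (2:ℤ) • x + (5:ℤ) • a := by
      ext i; have := ha i; simp only [Pi.add_apply, Pi.smul_apply, smul_eq_mul]; omega
    have hb' : Jm *ᵥ y = (2:ℤ) • y + (5:ℤ) • b := by
      ext i; have := hb i; simp only [Pi.add_apply, Pi.smul_apply, smul_eq_mul]; omega
    have := J_dot_J x y
    rw [ha', hb'] at this
    simp only [add_dotProduct, dotProduct_add, smul_dotProduct, dotProduct_smul, smul_eq_mul] at this
    omega
  have h4 : (4:ℤ) ∣ x ⬝ᵥ y := by
    set e := x (false, none)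
    set d := y (false, none)
    have key : ∀ i, (4:ℤ) ∣ (x i - e) * (y i - d) := fun i =>
      mul_dvd_mul (h1 i (false, none)) (k1 i (false, none))
    have hs : (4:ℤ) ∣ ∑ i, (x i - e) * (y i - d) := Finset.dvd_sum fun i _ => key i
    have e1 : ∑ i, (x i - e) * (y i - d) = x ⬝ᵥ y - d * ∑ i, x i - e * ∑ i, y i + 64 * (e * d) := by
      have : ∀ i, (x i - e) * (y i - d) = x i * y i - d * x i - e * y i + e * d := fun i => by ring
      simp only [this, Finset.sum_add_distrib, Finset.sum_sub_distrib, ← Finset.mul_sum, dotProduct,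
        Finset.sum_const, Finset.card_univ, card_Ix]
      simp
      ring
    obtain ⟨a, ha⟩ := h2 (false, none)
    obtain ⟨b, hb⟩ := k2 (false, none)
    rw [e1] at hs
    have ha' : ∑ i, x i = 2 * e + 4 * a := by omega
    have hb' : ∑ i, y i = 2 * d + 4 * b := by omega
    rw [ha', hb'] at hs
    have : x ⬝ᵥ y = (x ⬝ᵥ y - d * (2 * e + 4 * a) - e * (2 * d + 4 * b) + 64 * (e * d)) +
      4 * (d * e + d * a + e * b - 16 * (e * d)) := by ring
    rw [this]
    exact dvd_add hs (Dvd.intro _ rfl)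
  omega

theorem J_one : Jm *ᵥ 1 = fun i => if i.2 = none then -31 else (1:ℤ) := by decide +kernel

theorem sum_J (x : Ix → ℤ) :
    ∑ i, (Jm *ᵥ x) i = 32 * (x (false, none) + x (true, none)) - ∑ i, x i := by
  have h : ∑ i, (Jm *ᵥ x) i = 1 ⬝ᵥ (Jm *ᵥ x) := by simp [dotProduct]
  rw [h, dot_J, J_one]
  simp only [dotProduct, Fintype.sum_prod_type, Fintype.sum_bool, Fintype.sum_option]
  simp
  ring

theorem J_mem {x : Ix → ℤ} (hx : x ∈ LatZ) : Jm *ᵥ x ∈ LatZ := by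
  obtain ⟨h1, h2, h3⟩ := hx
  have par : ∀ i, (2:ℤ) ∣ (Jm *ᵥ x) i - x (false, none) := by
    intro i
    have e : (Jm *ᵥ x) i - x (false, none) * (Jm *ᵥ 1) i =
        ∑ j, Jm i j * (x j - x (false, none)) := by
      simp only [Matrix.mulVec, dotProduct, mul_sub, Finset.sum_sub_distrib, Finset.mul_sum,
        Pi.one_apply]
      congr 1
      exact Finset.sum_congr rfl fun _ _ => by ring
    have d : (2:ℤ) ∣ (Jm *ᵥ x) i - x (false, none) * (Jm *ᵥ 1) i := by
      rw [e]; exact Finset.dvd_sum fun j _ => Dvd.dvd.mul_left (h1 _ _) _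
    rw [J_one] at d
    simp only at d
    split_ifs at d <;> omega
  refine ⟨fun i j => ?_, fun i => ?_, fun i => ?_⟩
  · have := par i; have := par j; omega
  · rw [sum_J]; have := par i; have := h2 (false, none); omega
  · rw [J_J]; have := h3 i; simp only [Pi.smul_apply, smul_eq_mul]; omega

theorem smul20_mem (x : Ix → ℤ) : (20:ℤ) • x ∈ LatZ := by
  refine ⟨fun i j => ?_, fun i => ?_, fun i => ?_⟩
  · simp only [Pi.smul_apply, smul_eq_mul]; omega
  · simp only [Pi.smul_apply, smul_eq_mul, ← Finset.mul_sum]; omega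
  · simp only [Pi.smul_apply, smul_eq_mul, Matrix.mulVec_smul]; omega

/-! ### The automorphism group and its signed permutations -/

/-- The rational space spanned by `LatZ`. -/
abbrev VQ : Type := Ix → ℚ

def toQ (w : Ix → ℤ) : VQ := fun i => w i

theorem toQ_inj {v w : Ix → ℤ} (h : toQ v = toQ w) : v = w := by
  ext i; have := congrFun h i; simpa [toQ] using this

theorem toQ_add (v w : Ix → ℤ) : toQ (v + w) = toQ v + toQ w := by ext i; simp [toQ]
theorem toQ_zero : toQ 0 = 0 := by ext i; simp [toQ]
theorem toQ_dot (v w : Ix → ℤ) : toQ v ⬝ᵥ toQ w = ((v ⬝ᵥ w : ℤ) : ℚ) := by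
  simp [toQ, dotProduct]

/-- The automorphism group of `LatZ`, acting on the ambient rational space. -/
def Gam : Subgroup (VQ ≃ₗ[ℚ] VQ) where
  carrier := {f | (∀ w ∈ LatZ, ∃ v ∈ LatZ, toQ v = f (toQ w)) ∧
    (∀ w ∈ LatZ, ∃ v ∈ LatZ, toQ v = f.symm (toQ w)) ∧ ∀ x y, f x ⬝ᵥ f y = x ⬝ᵥ y}
  one_mem' := ⟨fun w hw => ⟨w, hw, rfl⟩, fun w hw => ⟨w, hw, rfl⟩, fun _ _ => rfl⟩
  mul_mem' := by
    rintro f g ⟨f1, f2, f3⟩ ⟨g1, g2, g3⟩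
    refine ⟨fun w hw => ?_, fun w hw => ?_, fun x y => ?_⟩
    · obtain ⟨v, hv, e⟩ := g1 w hw
      obtain ⟨u, hu, e'⟩ := f1 v hv
      exact ⟨u, hu, by rw [e', e]; rfl⟩
    · obtain ⟨v, hv, e⟩ := f2 w hw
      obtain ⟨u, hu, e'⟩ := g2 v hv
      exact ⟨u, hu, by rw [e', e]; rfl⟩
    · exact (f3 _ _).trans (g3 _ _)
  inv_mem' := by
    rintro f ⟨f1, f2, f3⟩
    refine ⟨f2, f1, fun x y => ?_⟩
    have := f3 (f.symm x) (f.symm y)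
    simp only [LinearEquiv.apply_symm_apply] at this
    exact this.symm

/-- The action of an automorphism on the lattice itself. -/
noncomputable def gact (g : Gam) (w : LatZ) : LatZ :=
  ⟨(g.2.1 w.1 w.2).choose, (g.2.1 w.1 w.2).choose_spec.1⟩

theorem toQ_gact (g : Gam) (w : LatZ) : toQ (gact g w).1 = g.1 (toQ w.1) :=
  (g.2.1 w.1 w.2).choose_spec.2

noncomputable instance : DistribMulAction Gam LatZ where
  smul := gact
  one_smul w := Subtype.ext (toQ_inj (toQ_gact 1 w))
  mul_smul g h w := Subtype.ext (toQ_inj (by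
    change toQ (gact (g * h) w).1 = toQ (gact g (gact h w)).1
    rw [toQ_gact, toQ_gact, toQ_gact]; rfl))
  smul_zero g := Subtype.ext (toQ_inj (by
    change toQ (gact g 0).1 = toQ (0 : LatZ).1
    rw [toQ_gact]
    simp [toQ_zero]))
  smul_add g v w := Subtype.ext (toQ_inj (by
    change toQ (gact g (v + w)).1 = toQ (gact g v + gact g w).1
    rw [toQ_gact, AddSubgroup.coe_add, AddSubgroup.coe_add, toQ_add, toQ_add, toQ_gact, toQ_gact,
      map_add]))

theorem toQ_smul (g : Gam) (w : LatZ) : toQ (g • w).1 = g.1 (toQ w.1) := toQ_gact g w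

theorem smul_dot (g : Gam) (v w : LatZ) : (g • v).1 ⬝ᵥ (g • w).1 = v.1 ⬝ᵥ w.1 := by
  have h := g.2.2.2 (toQ v.1) (toQ w.1)
  rw [← toQ_smul, ← toQ_smul, toQ_dot, toQ_dot] at h
  exact_mod_cast h

/-- Data of a signed permutation `(g x) i = s i * x (π i)` commuting with `Jm` and preserving the
condition modulo `4`. -/
structure SP where
  p : Equiv.Perm Ix
  s : Ix → ℤ
  hs : ∀ i, s i * s i = 1
  hJ : ∀ i j, s i * Jm (p i) (p j) = Jm i j * s j
  h4 : 4 ∣ ∑ i, (s i - 1)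

namespace SP

/-- The inverse signed permutation. -/
def inv (d : SP) : SP where
  p := d.p.symm
  s := fun i => d.s (d.p.symm i)
  hs := fun i => d.hs _
  hJ := fun i j => by
    have h := d.hJ (d.p.symm i) (d.p.symm j)
    simp only [Equiv.apply_symm_apply] at h
    have h1 := d.hs (d.p.symm i)
    have h2 := d.hs (d.p.symm j)
    calc _ = d.s (d.p.symm i) * (Jm (d.p.symm i) (d.p.symm j) * d.s (d.p.symm j)) * d.s (d.p.symm j) := by
          linear_combination (-d.s (d.p.symm i) * Jm (d.p.symm i) (d.p.symm j)) * h2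
      _ = _ := by rw [← h]; linear_combination (Jm i j * d.s (d.p.symm j)) * h1
  h4 := by
    have := Equiv.sum_comp d.p.symm (fun i => d.s i - 1)
    rw [this]; exact d.h4

theorem s_cases (d : SP) (i : Ix) : d.s i = 1 ∨ d.s i = -1 := by
  have := d.hs i
  exact mul_self_eq_one_iff.mp this

theorem mem (d : SP) {w : Ix → ℤ} (hw : w ∈ LatZ) : (fun i => d.s i * w (d.p i)) ∈ LatZ := by
  obtain ⟨h1, h2, h3⟩ := hw
  have par : ∀ i, (2:ℤ) ∣ d.s i * w (d.p i) - w (d.p i) := fun i => by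
    rcases d.s_cases i with h | h <;> rw [h] <;> omega
  refine ⟨fun i j => ?_, fun i => ?_, fun i => ?_⟩
  · have := par i; have := par j; have := h1 (d.p i) (d.p j); simp only; omega
  · set e := w (d.p i)
    have e1 : ∑ j, d.s j * w (d.p j) = ∑ j, w j + e * ∑ j, (d.s j - 1) +
        ∑ j, (d.s j - 1) * (w (d.p j) - e) := by
      rw [← Equiv.sum_comp d.p w, Finset.mul_sum, ← Finset.sum_add_distrib, ← Finset.sum_add_distrib]
      exact Finset.sum_congr rfl fun j _ => by ring
    have d1 : (4:ℤ) ∣ ∑ j, (d.s j - 1) * (w (d.p j) - e) := Finset.dvd_sum fun j _ => by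
      have a : (2:ℤ) ∣ d.s j - 1 := by rcases d.s_cases j with h | h <;> rw [h] <;> omega
      exact mul_dvd_mul a (h1 _ _)
    have d2 : (4:ℤ) ∣ e * ∑ j, (d.s j - 1) := Dvd.dvd.mul_left d.h4 _
    have := par i; have := h2 (d.p i)
    simp only
    rw [e1]
    omega
  · have e1 : (Jm *ᵥ fun i => d.s i * w (d.p i)) i = d.s i * (Jm *ᵥ w) (d.p i) := by
      simp only [Matrix.mulVec, dotProduct, Finset.mul_sum]
      rw [← Equiv.sum_comp d.p (fun j => d.s i * (Jm (d.p i) j * w j))]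
      refine Finset.sum_congr rfl fun j _ => ?_
      have := d.hJ i j
      linear_combination (-w (d.p j)) * this
    rw [e1]
    have := h3 (d.p i)
    simp only
    rw [show d.s i * (Jm *ᵥ w) (d.p i) - 2 * (d.s i * w (d.p i)) =
      d.s i * ((Jm *ᵥ w) (d.p i) - 2 * w (d.p i)) by ring]
    exact Dvd.dvd.mul_left this _

/-- The signed permutation as a linear automorphism of the rational space. -/
def lin (d : SP) : VQ ≃ₗ[ℚ] VQ where
  toFun x := fun i => d.s i * x (d.p i)
  invFun x := fun i => d.inv.s i * x (d.inv.p i)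
  map_add' x y := by ext i; simp [mul_add]
  map_smul' c x := by ext i; simp; ring
  left_inv x := by
    ext i
    have : (d.s (d.p.symm i) : ℚ) * d.s (d.p.symm i) = 1 := by exact_mod_cast d.hs _
    simp only [inv, Equiv.apply_symm_apply]
    rw [← mul_assoc, this, one_mul]
  right_inv x := by
    ext i
    have : (d.s i : ℚ) * d.s i = 1 := by exact_mod_cast d.hs _
    simp only [inv, Equiv.symm_apply_apply]
    rw [← mul_assoc, this, one_mul]

/-- The signed permutation as an automorphism of the lattice. -/
def toGam (d : SP) : Gam := ⟨d.lin, by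
  refine ⟨fun w hw => ⟨_, d.mem hw, ?_⟩, fun w hw => ⟨_, d.inv.mem hw, ?_⟩, fun x y => ?_⟩
  · ext i; simp [toQ, lin]
  · ext i; simp [toQ, lin]
  · simp only [lin, LinearEquiv.coe_mk, LinearMap.coe_mk, AddHom.coe_mk, dotProduct]
    rw [← Equiv.sum_comp d.p (fun i => x i * y i)]
    refine Finset.sum_congr rfl fun i _ => ?_
    have : (d.s i : ℚ) * d.s i = 1 := by exact_mod_cast d.hs _
    linear_combination (x (d.p i) * y (d.p i)) * this⟩

theorem toGam_apply (d : SP) (x : VQ) (i : Ix) : d.toGam.1 x i = d.s i * x (d.p i) := rfl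

theorem toGam_smul (d : SP) (w : LatZ) (i : Ix) : (d.toGam • w).1 i = d.s i * w.1 (d.p i) := by
  have h := congrFun (toQ_smul d.toGam w) i
  rw [toGam_apply] at h
  simp only [toQ] at h
  exact_mod_cast h

end SP

/-! ### Known automorphisms -/

/-- The map `ν ↦ a ν + b` of the projective line. -/
def aff (a b : ZMod 31) : P1 → P1
  | none => none
  | some x => some (a * x + b)

/-- The affine map `aff a b` on both blocks, with inverse `aff a' b'`. -/
def affPerm (a b a' b' : ZMod 31) (h : ∀ x, aff a' b' (aff a b x) = x ∧ aff a b (aff a' b' x) = x) :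
    Equiv.Perm Ix where
  toFun i := (i.1, aff a b i.2)
  invFun i := (i.1, aff a' b' i.2)
  left_inv i := Prod.ext rfl (h i.2).1
  right_inv i := Prod.ext rfl (h i.2).2

/-- The map `ν ↦ -1/ν` of `P¹(F₃₁)`, which exchanges `0` and `∞`. -/
def invol : P1 → P1
  | none => some 0
  | some x => if x = 0 then none else some (-x⁻¹)

/-- The signs that make `ν ↦ -1/ν` compatible with the Paley matrix. -/
def invSign : P1 → ℤ
  | none => -1
  | some x => if x = 0 then 1 else chi x

/-- The automorphism `-1`. -/
def gNeg : SP where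
  p := Equiv.refl _
  s := fun _ => -1
  hs := by decide
  hJ := fun i j => by simp
  h4 := by simp

/-- Minus the exchange of the two blocks. -/
def gSig : SP where
  p := ⟨fun i => (!i.1, i.2), fun i => (!i.1, i.2), fun i => by simp, fun i => by simp⟩
  s := fun _ => -1
  hs := by decide
  hJ := by
    rintro ⟨_ | _, x⟩ ⟨_ | _, y⟩ <;> simp [Jm]
  h4 := by simp

/-- The translation `ν ↦ ν + 1`, of order 31. -/
def gT : SP where
  p := affPerm 1 1 1 (-1) (by decide +kernel)
  s := fun _ => 1
  hs := by decide
  hJ := by decide +kernel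
  h4 := by simp

/-- The map `ν ↦ 9ν`; here `9` generates the nonzero squares, so the order is 15. -/
def gt9 : SP where
  p := affPerm 9 0 7 0 (by decide +kernel)
  s := fun _ => 1
  hs := by decide
  hJ := by decide +kernel
  h4 := by simp

/-- The map `ν ↦ 16ν`, of order 5. -/
def gu : SP where
  p := affPerm 16 0 2 0 (by decide +kernel)
  s := fun _ => 1
  hs := by decide
  hJ := by decide +kernel
  h4 := by simp

/-- The map `ν ↦ -ν`, with signs. -/
def gr : SP where
  p := affPerm (-1) 0 (-1) 0 (by decide +kernel)
  s := fun i => if (i.1 = true ↔ i.2 = none) then -1 else 1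
  hs := fun i => by split_ifs <;> rfl
  hJ := by decide +kernel
  h4 := by decide +kernel

/-- The map `ν ↦ -1/ν`, with signs. -/
def gS : SP where
  p := ⟨fun i => (i.1, invol i.2), fun i => (i.1, invol i.2), by decide +kernel, by decide +kernel⟩
  s := fun i => invSign i.2
  hs := by decide +kernel
  hJ := by decide +kernel
  h4 := by decide +kernel

/-! ### Invariant alternating forms -/

/-- The vector `20 eᵢ` of `LatZ`. -/
def ee (i : Ix) : LatZ := ⟨(20:ℤ) • Pi.single i 1, smul20_mem _⟩

theorem ee_apply (i j : Ix) : (ee i).1 j = if j = i then 20 else 0 := by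
  simp only [ee, Pi.smul_apply, Pi.single_apply, smul_eq_mul]; split_ifs <;> simp

theorem sum_ee (x : LatZ) : (20:ℤ) • x = ∑ i, x.1 i • ee i := by
  apply Subtype.ext
  ext j
  rw [AddSubgroup.val_finsetSum, Finset.sum_apply]
  simp only [AddSubgroup.coe_zsmul, Pi.smul_apply, ee_apply, smul_eq_mul]
  simp [mul_comm]

theorem dot_ee (x : Ix → ℤ) (i : Ix) : (ee i).1 ⬝ᵥ x = 20 * x i := by
  simp [dotProduct, ee_apply]

theorem SP.smul_ee (d : SP) (k : Ix) : d.toGam • ee (d.p k) = d.s k • ee k := by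
  apply Subtype.ext
  ext i
  rw [SP.toGam_smul, AddSubgroup.coe_zsmul, Pi.smul_apply, ee_apply, ee_apply]
  by_cases h : i = k
  · simp [h]
  · simp [h]

/-- The operator `J` on `LatZ`. -/
def JL (x : LatZ) : LatZ := ⟨Jm *ᵥ x.1, J_mem x.2⟩

/-- The known signed permutations act transitively on the coordinates. -/
theorem orbit_ind (P : Ix → Prop) (h0 : P (false, none)) (h : ∀ d : SP, ∀ i, P i → P (d.p i)) :
    ∀ i, P i := by
  have h1 : P (false, some 0) := h gS _ h0
  have h2 : ∀ n : ℕ, P (false, some (n : ZMod 31)) := by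
    intro n
    induction n with
    | zero => simpa using h1
    | succ n ih =>
      have := h gT _ ih
      have e : gT.p (false, some (n : ZMod 31)) = (false, some ((n + 1 : ℕ) : ZMod 31)) := by
        simp [gT, affPerm, aff]
      rwa [e] at this
  have h3 : ∀ x, P (false, x) := by
    rintro (_ | x)
    · exact h0
    · have := h2 x.val
      rwa [ZMod.natCast_zmod_val] at this
  rintro ⟨_ | _, x⟩
  · exact h3 x
  · exact h gSig _ (h3 x)

section form
variable (A : LatZ →+ LatZ →+ ℤ) (hsk : ∀ x y, A x y = - A y x)
  (hinv : ∀ (g : Gam) x y, A (g • x) (g • y) = A x y)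
include hsk hinv

/-- An invariant alternating form is proportional to `J` on the coordinate vectors. By transitivity one
argument may be taken at `∞` in the first block. Translations make the values constant along each
affine line, and `gr` kills the values within the block and at `∞` in the other one. -/
theorem form_ee : ∃ c : ℤ, ∀ i j, A (ee i) (ee j) = c * Jm i j := by
  have key : ∀ (d : SP) i j, A (ee (d.p i)) (ee (d.p j)) = d.s i * d.s j * A (ee i) (ee j) := by
    intro d i j
    rw [← hinv d.toGam, d.smul_ee, d.smul_ee]
    simp [mul_assoc]
  refine ⟨- A (ee (false, none)) (ee (true, some 0)), orbit_ind _ ?_ ?_⟩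
  · have hc : ∀ b : Bool, ∀ ν : ZMod 31, A (ee (false, none)) (ee (b, some ν)) =
        A (ee (false, none)) (ee (b, some 0)) := by
      intro b
      have : ∀ n : ℕ, A (ee (false, none)) (ee (b, some (n : ZMod 31))) =
        A (ee (false, none)) (ee (b, some 0)) := by
        intro n
        induction n with
        | zero => simp
        | succ n ih =>
          have := key gT (false, none) (b, some (n : ZMod 31))
          simp only [gT, affPerm, aff, Equiv.coe_fn_mk, one_mul] at this
          rw [← ih, ← this]
          push_cast
          rfl
      intro ν
      have := this ν.val
      rwa [ZMod.natCast_zmod_val] at this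
    rintro ⟨_ | _, _ | ν⟩
    · have := hsk (ee (false, none)) (ee (false, none))
      simp only [Jm, if_true, mul_zero]
      omega
    · have := key gr (false, none) (false, some 0)
      simp only [gr, affPerm, aff, Equiv.coe_fn_mk, mul_zero, add_zero] at this
      simp at this
      simp only [Jm, if_true, mul_zero]
      rw [hc]
      omega
    · have := key gr (false, none) (true, none)
      simp only [gr, affPerm, aff, Equiv.coe_fn_mk, add_zero] at this
      simp at this
      simp [Jm, Cm]
      omega
    · simp [Jm, Cm, hc true ν]
  · intro d i hi j
    obtain ⟨k, rfl⟩ := d.p.surjective j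
    rw [key, hi]
    have h1 := d.hJ i k
    have h2 := d.hs i
    linear_combination (-A (ee (false, none)) (ee (true, some 0)) * (-d.s i)) * h1 +
      (-A (ee (false, none)) (ee (true, some 0)) * Jm (d.p i) (d.p k)) * h2

theorem form_eq : ∃ c : ℤ, ∀ x y, 400 * A x y = c * (x.1 ⬝ᵥ (Jm *ᵥ y.1)) := by
  obtain ⟨c, hc⟩ := form_ee A hsk hinv
  refine ⟨c, fun x y => ?_⟩
  have e : 400 * A x y = A ((20:ℤ) • x) ((20:ℤ) • y) := by simp; ring
  rw [e, sum_ee, sum_ee]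
  simp only [map_sum, AddMonoidHom.finsetSum_apply, map_zsmul, AddMonoidHom.coe_smul, Pi.smul_apply, hc,
    dotProduct, Matrix.mulVec, Finset.mul_sum, smul_eq_mul]
  rw [Finset.sum_comm]
  exact Finset.sum_congr rfl fun i _ => Finset.sum_congr rfl fun j _ => by ring

/-- If the invariant form does not vanish, then it is a nonzero multiple of `x ⬝ J y`, so automorphisms
commute with `J`. -/
theorem J_comm_of_form {x0 y0 : LatZ} (h0 : A x0 y0 ≠ 0) (g : Gam) (x : LatZ) :
    g • JL x = JL (g • x) := by
  obtain ⟨c, hc⟩ := form_eq A hsk hinv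
  have hc0 : c ≠ 0 := by
    rintro rfl
    have := hc x0 y0
    omega
  have key : ∀ y : LatZ, (g • y : LatZ).1 ⬝ᵥ (Jm *ᵥ (g • x : LatZ).1) = y.1 ⬝ᵥ (Jm *ᵥ x.1) := fun (y : LatZ) => by
    apply mul_left_cancel₀ hc0
    rw [← hc, ← hc, hinv]
  apply Subtype.ext
  ext i
  have h := key (g⁻¹ • ee i)
  have h2 := smul_dot g (g⁻¹ • ee i) (JL x)
  rw [smul_inv_smul] at h h2
  rw [show (Jm *ᵥ x.1) = (JL x).1 from rfl, ← h2, dot_ee, dot_ee] at h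
  change _ = (Jm *ᵥ (g • x).1) i
  omega
end form

/-! ### Vectors of norm 120 and sums modulo a prime -/

/-- For a map `T` with `T^p = 1` that preserves the summands, a sum is congruent modulo `p` to the sum over
the fixed points: the other orbits have `p` elements. -/
theorem sum_modp {α : Type*} [DecidableEq α] (p : ℕ) [Fact p.Prime] (s : Finset α) (h : α → α)
    (hs : ∀ x ∈ s, h x ∈ s) (hp : ∀ x ∈ s, h^[p] x = x) (F : α → ZMod p)
    (hF : ∀ x ∈ s, F (h x) = F x) :
    ∑ x ∈ s, F x = ∑ x ∈ s with h x = x, F x := by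
  have e : ∀ t : Finset α, ∑ x ∈ t, F x = ∑ c : ZMod p, ((t.filter (F · = c)).card : ZMod p) * c := by
    intro t
    rw [← Finset.sum_fiberwise t F]
    refine Finset.sum_congr rfl fun c _ => ?_
    rw [Finset.sum_congr rfl (g := fun _ => c) (fun x hx => (Finset.mem_filter.mp hx).2)]
    simp
  rw [e, e]
  refine Finset.sum_congr rfl fun c _ => ?_
  congr 1
  set t := s.filter (F · = c) with ht
  have hm : ∀ x, x ∈ t ↔ x ∈ s ∧ F x = c := fun x => by rw [ht, Finset.mem_filter]
  let f : Function.End t := fun x => ⟨h x.1, by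
    have := (hm _).mp x.2
    exact (hm _).mpr ⟨hs _ this.1, (hF _ this.1).trans this.2⟩⟩
  have fit : ∀ n : ℕ, ∀ x : t, ((f ^ n) x).1 = h^[n] x.1 := by
    intro n
    induction n with
    | zero => intro x; rfl
    | succ n ih =>
      intro x
      rw [pow_succ, Function.iterate_succ_apply]
      exact ih (f x)
  have hf : f ^ p ^ 1 = 1 := by
    rw [pow_one]
    funext x
    apply Subtype.ext
    rw [fit]
    exact hp _ ((hm _).mp x.2).1
  have := Equiv.Perm.card_fixedPoints_modEq hf
  rw [Fintype.card_coe] at this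
  rw [(ZMod.natCast_eq_natCast_iff _ _ _).mpr this]
  congr 1
  rw [← Fintype.card_coe]
  refine Fintype.card_congr
    { toFun := fun x => ⟨x.1.1, ?_⟩
      invFun := fun x => ⟨⟨x.1, ?_⟩, ?_⟩
      left_inv := fun x => rfl
      right_inv := fun x => rfl }
  · have h1 := (hm _).mp x.1.2
    have h2 := x.2
    rw [Finset.mem_filter, Finset.mem_filter]
    exact ⟨⟨h1.1, congrArg Subtype.val h2⟩, h1.2⟩
  · have h1 := x.2
    rw [Finset.mem_filter, Finset.mem_filter] at h1
    exact (hm _).mpr ⟨h1.1.1, h1.2⟩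
  · have h1 := x.2
    rw [Finset.mem_filter, Finset.mem_filter] at h1
    exact Subtype.ext h1.1.2

theorem finite_norm (n : ℤ) : {x : LatZ | x.1 ⬝ᵥ x.1 = n}.Finite := by
  have h : (Set.pi Set.univ fun _ : Ix => Set.Icc (-n) n).Finite :=
    Set.Finite.pi fun _ => Set.finite_Icc _ _
  refine Set.Finite.of_finite_image (f := Subtype.val) (h.subset ?_) Subtype.val_injective.injOn
  rintro _ ⟨x, hx, rfl⟩ i -
  have hx : x.1 ⬝ᵥ x.1 = n := hx
  have h1 : x.1 i * x.1 i ≤ n := by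
    rw [← hx]
    exact Finset.single_le_sum (f := fun i => x.1 i * x.1 i) (fun i _ => mul_self_nonneg _)
      (Finset.mem_univ i)
  constructor <;> nlinarith

/-- Vectors of norm `120`, i.e. of norm `6` for the scaled form. -/
noncomputable def M6 : Finset LatZ := (finite_norm 120).toFinset

theorem mem_M6 {x : LatZ} : x ∈ M6 ↔ x.1 ⬝ᵥ x.1 = 120 := by
  rw [M6, Set.Finite.mem_toFinset]; rfl

theorem smul_M6 (g : Gam) {x : LatZ} (hx : x ∈ M6) : g • x ∈ M6 := by
  rw [mem_M6, smul_dot]; exact mem_M6.mp hx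

theorem sum_M6_smul {M : Type*} [AddCommMonoid M] (g : Gam) (F : LatZ → M) :
    ∑ x ∈ M6, F (g • x) = ∑ x ∈ M6, F x :=
  Finset.sum_bij' (fun x _ => g • x) (fun x _ => g⁻¹ • x) (fun _ hx => smul_M6 g hx)
    (fun _ hx => smul_M6 g⁻¹ hx) (fun x _ => inv_smul_smul g x) (fun x _ => smul_inv_smul g x)
    (fun _ _ => rfl)

/-- The integral bilinear form, normalised as in `L_Q`. -/
def ip (x y : LatZ) : ℤ := (x.1 ⬝ᵥ y.1) / 20

theorem ip_mul (x y : LatZ) : 20 * ip x y = x.1 ⬝ᵥ y.1 := Int.mul_ediv_cancel' (dvd_dot x.2 y.2)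

theorem ip_smul (g : Gam) (x y : LatZ) : ip (g • x) (g • y) = ip x y := by
  rw [ip, smul_dot]; rfl

theorem ip_comm (x y : LatZ) : ip x y = ip y x := by
  rw [ip, dotProduct_comm]; rfl

theorem ip_add_right (x y z : LatZ) : ip x (y + z) = ip x y + ip x z := by
  have h1 := ip_mul x (y + z); have h2 := ip_mul x y; have h3 := ip_mul x z
  rw [AddSubgroup.coe_add, dotProduct_add] at h1
  omega

/-- `ip` as a biadditive map. -/
def ipH : LatZ →+ LatZ →+ ℤ :=
  AddMonoidHom.mk' (fun x => AddMonoidHom.mk' (fun y => ip x y) (ip_add_right x)) (fun x y => by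
    ext z
    change ip (x + y) z = ip x z + ip y z
    rw [ip_comm, ip_add_right, ip_comm z x, ip_comm z y])

theorem iter_of_sign_one (d : SP) (hs : ∀ i, d.s i = 1) (n : ℕ) (x : LatZ) (i : Ix) :
    ((d.toGam • ·)^[n] x).1 i = x.1 (d.p^[n] i) := by
  induction n generalizing i with
  | zero => rfl
  | succ n ih =>
    rw [Function.iterate_succ_apply', SP.toGam_smul, hs, one_mul, ih, ← Function.iterate_succ_apply]

theorem gu_iter (x : LatZ) : (gu.toGam • ·)^[5] x = x := by
  apply Subtype.ext; ext i
  rw [iter_of_sign_one _ (fun _ => rfl)]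
  have : ∀ i, gu.p^[5] i = i := by decide +kernel
  rw [this]

theorem gT_iter (x : LatZ) : (gT.toGam • ·)^[31] x = x := by
  apply Subtype.ext; ext i
  rw [iter_of_sign_one _ (fun _ => rfl)]
  have : ∀ i, gT.p^[31] i = i := by decide +kernel
  rw [this]

/-! ### Search for the fixed vectors of norm 120 -/


/-- The index `0, …, 15` of the orbit of `gu` that contains a coordinate. The second block starts at `8`;
in each block `∞` comes first, then `0`, then the six cosets of `{1, 2, 4, 8, 16}`. -/
def clsN (i : Ix) : ℕ := (bif i.1 then 8 else 0) + match i.2 with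
  | none => 0
  | some x => [1, 2, 2, 3, 2, 4, 3, 6, 2, 4, 4, 7, 3, 7, 6, 5, 2, 3, 4, 6, 4, 7, 7, 5, 3, 6, 7, 5, 6,
      5, 5].getD x.val 0

/-- A representative of each orbit of `gu`. -/
def repN (k : ℕ) : Ix := (8 ≤ k, [none, some 0, some 1, some 3, some 9, some 27, some 19,
  some 26].getD (k % 8) none)

/-- The sizes of the orbits of `gu`. -/
def szs : List ℤ := [1, 1, 5, 5, 5, 5, 5, 5, 1, 1, 5, 5, 5, 5, 5, 5]

/-- The matrix `C` on functions constant on the orbits of `gu`: the entry `(k, l)` is the sum of `C` over the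
orbit `l`, from a point of the orbit `k`. -/
def C8 : List (List ℤ) := [[0, -1, -5, -5, -5, -5, -5, -5],
  [1, 0, -5, 5, -5, 5, -5, 5],
  [1, 1, 0, -1, -3, 1, 3, -1],
  [1, -1, 1, 0, 1, 3, -1, -3],
  [1, 1, 3, -1, 0, -1, -3, 1],
  [1, -1, -1, -3, 1, 0, 1, 3],
  [1, 1, -3, 1, 3, -1, 0, -1],
  [1, -1, 1, 3, -1, -3, 1, 0]]

/-- The vector whose coordinate is `v k` on the `k`-th orbit of `gu`. -/
def Ev (v : List ℤ) : Ix → ℤ := fun i => v.getD (clsN i) 0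

/-- Base `16` digits of `n`, shifted by `8`, most significant first. -/
def decV (n : ℕ) : List ℤ :=
  [((n / 16 ^ 15 % 16 : ℕ) : ℤ) - 8, ((n / 16 ^ 14 % 16 : ℕ) : ℤ) - 8,
   ((n / 16 ^ 13 % 16 : ℕ) : ℤ) - 8, ((n / 16 ^ 12 % 16 : ℕ) : ℤ) - 8,
   ((n / 16 ^ 11 % 16 : ℕ) : ℤ) - 8, ((n / 16 ^ 10 % 16 : ℕ) : ℤ) - 8,
   ((n / 16 ^ 9 % 16 : ℕ) : ℤ) - 8, ((n / 16 ^ 8 % 16 : ℕ) : ℤ) - 8,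
   ((n / 16 ^ 7 % 16 : ℕ) : ℤ) - 8, ((n / 16 ^ 6 % 16 : ℕ) : ℤ) - 8,
   ((n / 16 ^ 5 % 16 : ℕ) : ℤ) - 8, ((n / 16 ^ 4 % 16 : ℕ) : ℤ) - 8,
   ((n / 16 ^ 3 % 16 : ℕ) : ℤ) - 8, ((n / 16 ^ 2 % 16 : ℕ) : ℤ) - 8,
   ((n / 16 % 16 : ℕ) : ℤ) - 8, ((n % 16 : ℕ) : ℤ) - 8]

/-- Codes, to be read by `decV`, of the 120 vectors of norm 120 fixed by `gu`. -/
def M3codes : List ℕ := [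
  0x17777777b7777777, 0x1999999957777777, 0x24a8a8a8aa888888, 0x2c8686866a888888,
  0x357777777d797979, 0x37999999b3797979, 0x3977777753979797, 0x3b9999999d979797,
  0x4268686866888888, 0x4488888aa68aa688, 0x44888a88a6a6888a, 0x448a8888a6888aa6,
  0x4c6888886688aa68, 0x4c886888666888aa, 0x4c88886866aa6888, 0x4e8a8a8aa6888888,
  0x5397979739777777, 0x5777777719999999, 0x57777979b999977b, 0x57777995b9999797,
  0x57797779b97b9997, 0x57797977b9977b99, 0x57799577b9979799, 0x57957779b9979997,
  0x5977b99959797999, 0x597979995977b999, 0x5979997959b99977, 0x599977b959997979,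
  0x59997979599977b9, 0x59999999f9999999, 0x59b9997759799979, 0x5d979797d9777777,
  0x666888aa4c886888, 0x6688888842686868, 0x66888888ec686868, 0x6688aa684c688888,
  0x66aa68884c888868, 0x6a6a8886cc888688, 0x6a866a88cc888886, 0x6a88866acc868888,
  0x6a8888882c868686, 0x6a888888c2868686, 0x7197979795797979, 0x73797979d5777777,
  0x7579979575999799, 0x7595799775999997, 0x7597957975979999, 0x759797977f979797,
  0x7597999975979579, 0x7599979975799795, 0x7599999775957997, 0x7b77779795579979,
  0x7b77977795997957, 0x7b7797b995997999, 0x7b97777795795799, 0x7b9797979f797979,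
  0x7b97b97795799999, 0x7bb9779795999979, 0x7d79797935777777, 0x7f97979775979797,
  0x917979799b797979, 0x93979797db999999, 0x955799797b777797, 0x957957997b977777,
  0x9579797971979797, 0x957999997b97b977, 0x959979577b779777, 0x959979997b7797b9,
  0x959999797bb97797, 0x9b7777799b7b9779, 0x9b7779779b97797b, 0x9b7977779b797b97,
  0x9b79797991797979, 0x9b797b979b797777, 0x9b7b97799b777779, 0x9b97797b9b777977,
  0x9d9797973b999999, 0x9f7979797b979797, 0xa68888884e8a8a8a, 0xa6888888e48a8a8a,
  0xa6888aa6448a8888, 0xa68aa6884488888a, 0xa6a6888a44888a88, 0xaa66a888c48888a8,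
  0xaa8866a8c4a88888, 0xaa88888824a8a8a8, 0xaa888888cea8a8a8, 0xaaa88866c488a888,
  0xb379797937999999, 0xb7577799b7977797, 0xb777777717777777, 0xb7779797b7779957,
  0xb7779957b7779797, 0xb7977797b7577799, 0xb7979777b7995777, 0xb7995777b7979777,
  0xb97b999757797779, 0xb9977b9957797977, 0xb997979957799577, 0xb997999757957779,
  0xb999977b57777979, 0xb999979757777995, 0xb9999999f7777777, 0xbd797979d7999999,
  0xc28686866a888888, 0xc48888a8aa66a888, 0xc488a888aaa88866, 0xc4a88888aa8866a8,
  0xcc8688886a88866a, 0xcc8886886a6a8886, 0xcc8888866a866a88, 0xcea8a8a8aa888888,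
  0xd577777773797979, 0xd7999999bd797979, 0xd97777775d979797, 0xdb99999993979797,
  0xe48a8a8aa6888888, 0xec68686866888888, 0xf7777777b9999999, 0xf999999959999999]

/-- Search for the entries in the first block, from the last orbit to the first. The first list holds the
values of `C` on the second block, to which twice the new entries must be congruent modulo 5; the last
argument is the remaining norm. Vectors that also pass the condition modulo 4 must be in the list. -/
def dfs2 : List ℤ → List (ℤ × List ℤ) → List ℤ → ℤ → Bool
  | a :: as, (w, vs) :: r, pre, B => vs.all fun z =>
      decide (B < w * (z * z)) || (decide ((a - 2 * z) % 5 ≠ 0) || dfs2 as r (z :: pre) (B - w * (z * z)))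
  | [], [], pre, B => decide (B ≠ 0) || (decide ((pre.sum - 2 * pre.headD 0) % 4 ≠ 0) ||
      M3codes.any fun c => decV c == pre)
  | _, _, _, _ => false

/-- Search for the entries in the second block, at total cost at most 60, accumulating the products with `C`;
then `dfs2` runs with the remaining norm plus 60. -/
def dfs1 (wv : List (ℤ × List ℤ)) : List (ℤ × List ℤ × List ℤ) → List ℤ → List ℤ → ℤ → Bool
  | (w, vs, c) :: r, acc, pre, B => vs.all fun z =>
      decide (B < w * (z * z)) ||
        dfs1 wv r (List.zipWith (fun a c => a + z * c) acc c) (z :: pre) (B - w * (z * z))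
  | [], acc, pre, B => dfs2 acc wv pre (B + 60)

/-- For each orbit, the last one first: its size, the admissible values and the column of `C8`. -/
def cols (vs1 vs5 : List ℤ) : List (ℤ × List ℤ × List ℤ) :=
  [(5, vs5, [0, -1, 3, 1, -3, -1, 5, -5]),
   (5, vs5, [1, 0, 1, -3, -1, 3, -5, -5]),
   (5, vs5, [-3, -1, 0, -1, 3, 1, 5, -5]),
   (5, vs5, [-1, 3, 1, 0, 1, -3, -5, -5]),
   (5, vs5, [3, 1, -3, -1, 0, -1, 5, -5]),
   (5, vs5, [1, -3, -1, 3, 1, 0, -5, -5]),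
   (1, vs1, [-1, 1, -1, 1, -1, 1, 0, -1]),
   (1, vs1, [1, 1, 1, 1, 1, 1, 1, 0])]

/-- For each orbit, the last one first: its size and the admissible values. -/
def wvs (vs1 vs5 : List ℤ) : List (ℤ × List ℤ) :=
  [(5, vs5), (5, vs5), (5, vs5), (5, vs5), (5, vs5), (5, vs5), (1, vs1), (1, vs1)]

/-- Even entries of norm at most 120 on an orbit with one element. -/
def ev1 : List ℤ := [0, 2, -2, 4, -4, 6, -6, 8, -8, 10, -10]
/-- Even entries of norm at most 120 on an orbit with five elements. -/
def ev5 : List ℤ := [0, 2, -2, 4, -4]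
/-- Odd entries of norm at most 120 on an orbit with one element. -/
def od1 : List ℤ := [1, -1, 3, -3, 5, -5, 7, -7, 9, -9]
/-- Odd entries of norm at most 120 on an orbit with five elements. -/
def od5 : List ℤ := [1, -1, 3, -3]

set_option maxRecDepth 100000 in
theorem dfs_even : dfs1 (wvs ev1 ev5) (cols ev1 ev5) [0, 0, 0, 0, 0, 0, 0, 0] [] 60 = true := by
  decide +kernel

set_option maxRecDepth 100000 in
theorem dfs_odd : dfs1 (wvs od1 od5) (cols od1 od5) [0, 0, 0, 0, 0, 0, 0, 0] [] 60 = true := by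
  decide +kernel

/-- The entries `zs` are admissible choices for `dfs2`. -/
def Ok2 : List ℤ → List (ℤ × List ℤ) → List ℤ → Prop
  | a :: as, (w, vs) :: r, z :: zs => 0 ≤ w ∧ z ∈ vs ∧ (a - 2 * z) % 5 = 0 ∧ Ok2 as r zs
  | [], [], [] => True
  | _, _, _ => False

/-- The norm of the entries chosen by `dfs2`. -/
def cost2 : List (ℤ × List ℤ) → List ℤ → ℤ
  | (w, _) :: r, z :: zs => w * (z * z) + cost2 r zs
  | _, _ => 0

theorem cost2_nonneg (as r zs) (h : Ok2 as r zs) : 0 ≤ cost2 r zs := by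
  induction zs generalizing as r with
  | nil => unfold cost2; split <;> simp_all
  | cons z zs ih =>
    obtain _ | ⟨a, as⟩ := as
    · simp [Ok2] at h
    obtain _ | ⟨⟨w, vs⟩, r⟩ := r
    · simp [Ok2] at h
    · have h : 0 ≤ w ∧ z ∈ vs ∧ (a - 2 * z) % 5 = 0 ∧ Ok2 as r zs := h
      obtain ⟨h1, h2, h3, h4⟩ := h
      have := ih as r h4
      have := mul_nonneg h1 (mul_self_nonneg z)
      simp only [cost2]; omega

/-- A successful search lists every admissible completion. -/
theorem dfs2_sound (as r zs pre B) (h : Ok2 as r zs) (hd : dfs2 as r pre B = true)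
    (hB : cost2 r zs = B) (hs : (4:ℤ) ∣ (zs.reverse ++ pre).sum - 2 * (zs.reverse ++ pre).headD 0) :
    ∃ c ∈ M3codes, decV c = zs.reverse ++ pre := by
  induction zs generalizing as r pre B with
  | nil =>
    obtain _ | ⟨a, as⟩ := as
    swap
    · simp [Ok2] at h
    obtain _ | ⟨⟨w, vs⟩, r⟩ := r
    swap
    · simp [Ok2] at h
    · simp only [cost2] at hB
      simp only [dfs2, ← hB, List.reverse_nil, List.nil_append] at hd hs ⊢
      have e : (pre.sum - 2 * pre.headD 0) % 4 = 0 := Int.emod_eq_zero_of_dvd hs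
      simp only [e] at hd
      simpa using hd
  | cons z zs ih =>
    obtain _ | ⟨a, as⟩ := as
    · simp [Ok2] at h
    obtain _ | ⟨⟨w, vs⟩, r⟩ := r
    · simp [Ok2] at h
    · have h : 0 ≤ w ∧ z ∈ vs ∧ (a - 2 * z) % 5 = 0 ∧ Ok2 as r zs := h
      obtain ⟨h1, h2, h3, h4⟩ := h
      have h5 := cost2_nonneg _ _ _ h4
      simp only [cost2] at hB
      simp only [dfs2, List.all_eq_true] at hd
      have h6 := hd z h2
      have h7 : ¬ (B < w * (z * z)) := by omega
      simp only [h7, h3, decide_false, Bool.false_or, ne_eq, not_true] at h6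
      have := ih as r (z :: pre) _ h4 h6 (by omega) (by simpa using hs)
      simpa using this

/-- The entries `zs` are admissible choices for `dfs1`. -/
def Ok1 : List (ℤ × List ℤ × List ℤ) → List ℤ → Prop
  | (w, vs, _) :: r, z :: zs => 0 ≤ w ∧ z ∈ vs ∧ Ok1 r zs
  | [], [] => True
  | _, _ => False

/-- The norm of the entries chosen by `dfs1`. -/
def cost1 : List (ℤ × List ℤ × List ℤ) → List ℤ → ℤ
  | (w, _, _) :: r, z :: zs => w * (z * z) + cost1 r zs
  | _, _ => 0

/-- The product with `C` accumulated by `dfs1`. -/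
def acc1 : List (ℤ × List ℤ × List ℤ) → List ℤ → List ℤ → List ℤ
  | (_, _, c) :: r, z :: zs, acc => acc1 r zs (List.zipWith (fun a c => a + z * c) acc c)
  | _, _, acc => acc

theorem cost1_nonneg (r zs) (h : Ok1 r zs) : 0 ≤ cost1 r zs := by
  induction zs generalizing r with
  | nil => unfold cost1; split <;> simp_all
  | cons z zs ih =>
    obtain _ | ⟨⟨w, vs, c⟩, r⟩ := r
    · simp [Ok1] at h
    · have h : 0 ≤ w ∧ z ∈ vs ∧ Ok1 r zs := h
      obtain ⟨h1, h2, h4⟩ := h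
      have := ih r h4
      have := mul_nonneg h1 (mul_self_nonneg z)
      simp only [cost1]; omega

/-- A successful search covers every admissible choice of the entries in the second block. -/
theorem dfs1_sound (wv r zs acc pre B) (h : Ok1 r zs) (hd : dfs1 wv r acc pre B = true)
    (hB : cost1 r zs ≤ B) :
    dfs2 (acc1 r zs acc) wv (zs.reverse ++ pre) (B - cost1 r zs + 60) = true := by
  induction zs generalizing r acc pre B with
  | nil =>
    obtain _ | ⟨⟨w, vs, c⟩, r⟩ := r
    swap
    · simp [Ok1] at h
    · simpa [cost1, acc1, dfs1] using hd
  | cons z zs ih =>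
    obtain _ | ⟨⟨w, vs, c⟩, r⟩ := r
    · simp [Ok1] at h
    · have h : 0 ≤ w ∧ z ∈ vs ∧ Ok1 r zs := h
      obtain ⟨h1, h2, h4⟩ := h
      have h5 := cost1_nonneg _ _ h4
      simp only [cost1] at hB
      simp only [dfs1, List.all_eq_true] at hd
      have h6 := hd z h2
      have h7 : ¬ (B < w * (z * z)) := by omega
      simp only [h7, decide_false, Bool.false_or] at h6
      have := ih r _ (z :: pre) _ h4 h6 (by omega)
      simp only [cost1, acc1, List.reverse_cons, List.append_assoc, List.singleton_append]
      rwa [sub_add_eq_sub_sub]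

theorem clsN_lt : ∀ i, clsN i < 16 := by decide +kernel

theorem sum_cls (c : Ix → ℤ) (F : ℕ → ℤ) :
    ∑ i, c i * F (clsN i) = ∑ k ∈ Finset.range 16, (∑ i with clsN i = k, c i) * F k := by
  rw [← Finset.sum_fiberwise_of_maps_to (g := clsN) (t := Finset.range 16)
    (fun i _ => Finset.mem_range.mpr (clsN_lt i))]
  refine Finset.sum_congr rfl fun k _ => ?_
  rw [Finset.sum_mul]
  refine Finset.sum_congr rfl fun i hi => ?_
  rw [(Finset.mem_filter.mp hi).2]

/-- The dot product of two lists. -/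
def dot2 : List ℤ → List ℤ → ℤ
  | a :: as, b :: bs => a * b + dot2 as bs
  | _, _ => 0

/-- The dot product of two lists with weights. -/
def dot3 : List ℤ → List ℤ → List ℤ → ℤ
  | s :: ss, a :: as, b :: bs => s * (a * b) + dot3 ss as bs
  | _, _, _ => 0

theorem dot2_eq (u v : List ℤ) (n : ℕ) (hn : u.length ≤ n) :
    ∑ k ∈ Finset.range n, u.getD k 0 * v.getD k 0 = dot2 u v := by
  induction u generalizing v n with
  | nil => simp [dot2]
  | cons a u ih =>
    match n, v with
    | n + 1, b :: v =>
      rw [Finset.sum_range_succ']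
      simp only [List.getD_cons_succ, List.getD_cons_zero, dot2]
      rw [ih v n (by simpa using hn), add_comm]
    | n + 1, [] => simp [dot2]

theorem dot3_eq (s u v : List ℤ) (n : ℕ) (hn : s.length ≤ n) :
    ∑ k ∈ Finset.range n, s.getD k 0 * (u.getD k 0 * v.getD k 0) = dot3 s u v := by
  induction s generalizing u v n with
  | nil => simp [dot3]
  | cons a s ih =>
    match n, u, v with
    | n + 1, b :: u, c :: v =>
      rw [Finset.sum_range_succ']
      simp only [List.getD_cons_succ, List.getD_cons_zero, dot3]
      rw [ih u v n (by simpa using hn), add_comm]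
    | n + 1, [], _ => simp [dot3]
    | n + 1, _ :: _, [] => simp [dot3]

theorem szs_eq : ∀ k ∈ Finset.range 16, (∑ i with clsN i = k, (1:ℤ)) = szs.getD k 0 := by
  decide +kernel

theorem Ev_dot (v w : List ℤ) : Ev v ⬝ᵥ Ev w = dot3 szs v w := by
  rw [← dot3_eq szs v w 16 (by decide)]
  have := sum_cls (fun _ => 1) (fun k => v.getD k 0 * w.getD k 0)
  simp only [one_mul] at this
  simp only [dotProduct, Ev]
  rw [this]
  exact Finset.sum_congr rfl fun k hk => by rw [szs_eq k hk]

theorem Ev_sum (v : List ℤ) : ∑ i, Ev v i = dot2 szs v := by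
  rw [← dot2_eq szs v 16 (by decide)]
  have := sum_cls (fun _ => 1) (fun k => v.getD k 0)
  simp only [one_mul] at this
  simp only [Ev]
  rw [this]
  exact Finset.sum_congr rfl fun k hk => by rw [szs_eq k hk]

/-- The row `k` of `J` on functions constant on the orbits of `gu`. -/
def J16row (k : ℕ) : List ℤ :=
  if k < 8 then [0, 0, 0, 0, 0, 0, 0, 0] ++ C8.getD k [] else C8.getD (k - 8) []

set_option maxRecDepth 100000 in
theorem J16_eq : ∀ i : Ix, ∀ k ∈ Finset.range 16,
    (∑ j with clsN j = k, Jm i j) = (J16row (clsN i)).getD k 0 := by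
  decide +kernel

theorem Ev_J (v : List ℤ) (i : Ix) : (Jm *ᵥ Ev v) i = dot2 (J16row (clsN i)) v := by
  have h : ∀ k < 16, (J16row k).length ≤ 16 := by decide
  rw [← dot2_eq _ v 16 (h _ (clsN_lt i))]
  simp only [Matrix.mulVec, dotProduct, Ev]
  rw [sum_cls (fun j => Jm i j) (fun k => v.getD k 0)]
  exact Finset.sum_congr rfl fun k hk => by rw [J16_eq i k hk]

theorem mem_ev1 {z : ℤ} (h : z * z ≤ 120) (h2 : z % 2 = 0) : z ∈ ev1 := by
  have h3 : z ≤ 10 := by nlinarith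
  have h4 : -10 ≤ z := by nlinarith
  interval_cases z <;> first | decide | omega

theorem mem_ev5 {z : ℤ} (h : 5 * (z * z) ≤ 120) (h2 : z % 2 = 0) : z ∈ ev5 := by
  have h3 : z ≤ 4 := by nlinarith
  have h4 : -4 ≤ z := by nlinarith
  interval_cases z <;> first | decide | omega

theorem mem_od1 {z : ℤ} (h : z * z ≤ 120) (h2 : z % 2 = 1) : z ∈ od1 := by
  have h3 : z ≤ 10 := by nlinarith
  have h4 : -10 ≤ z := by nlinarith
  interval_cases z <;> first | decide | omega

theorem mem_od5 {z : ℤ} (h : 5 * (z * z) ≤ 120) (h2 : z % 2 = 1) : z ∈ od5 := by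
  have h3 : z ≤ 4 := by nlinarith
  have h4 : -4 ≤ z := by nlinarith
  interval_cases z <;> first | decide | omega

/-- A successful search with the admissible values `vs1`, `vs5` finds every vector of norm 120 with such
entries whose second block has norm at most 60. -/
theorem M3_core (vs1 vs5 : List ℤ)
    (hd : dfs1 (wvs vs1 vs5) (cols vs1 vs5) [0, 0, 0, 0, 0, 0, 0, 0] [] 60 = true)
    (a b c d e f g h i j k l m n o p : ℤ)
    (ma : a ∈ vs1) (mb : b ∈ vs1) (mc : c ∈ vs5) (md : d ∈ vs5) (me : e ∈ vs5) (mf : f ∈ vs5) (mg : g ∈ vs5) (mh : h ∈ vs5)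
    (mi : i ∈ vs1) (mj : j ∈ vs1) (mk : k ∈ vs5) (ml : l ∈ vs5) (mm : m ∈ vs5) (mn : n ∈ vs5) (mo : o ∈ vs5) (mp : p ∈ vs5)
    (hq : ∀ t < 8, 5 ∣ dot2 (J16row t) [a, b, c, d, e, f, g, h, i, j, k, l, m, n, o, p] - 2 * ([a, b, c, d, e, f, g, h, i, j, k, l, m, n, o, p].getD t 0))
    (h4 : 4 ∣ dot2 szs [a, b, c, d, e, f, g, h, i, j, k, l, m, n, o, p] - 2 * a)
    (hn : a * a + b * b + 5 * (c * c) + 5 * (d * d) + 5 * (e * e) + 5 * (f * f) + 5 * (g * g) +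
      5 * (h * h) + i * i + j * j + 5 * (k * k) + 5 * (l * l) + 5 * (m * m) + 5 * (n * n) +
      5 * (o * o) + 5 * (p * p) = 120)
    (hb : i * i + j * j + 5 * (k * k) + 5 * (l * l) + 5 * (m * m) + 5 * (n * n) +
      5 * (o * o) + 5 * (p * p) ≤ 60) :
    ∃ t ∈ M3codes, decV t = [a, b, c, d, e, f, g, h, i, j, k, l, m, n, o, p] := by
  have q0 := hq 0 (by norm_num)
  have q1 := hq 1 (by norm_num)
  have q2 := hq 2 (by norm_num)
  have q3 := hq 3 (by norm_num)
  have q4 := hq 4 (by norm_num)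
  have q5 := hq 5 (by norm_num)
  have q6 := hq 6 (by norm_num)
  have q7 := hq 7 (by norm_num)
  simp only [List.getD_cons_succ, List.getD_cons_zero, J16row, C8, szs, dot2, if_true,
    Nat.reduceLT, List.cons_append, List.nil_append] at h4 q0 q1 q2 q3 q4 q5 q6 q7
  have hc : cost1 (cols vs1 vs5) [p, o, n, m, l, k, j, i] ≤ 60 := by
    simp only [cols, cost1]; linarith only [hb]
  have w1 : (0:ℤ) ≤ 1 := by norm_num
  have w5 : (0:ℤ) ≤ 5 := by norm_num
  have hd := dfs1_sound (wvs vs1 vs5) (cols vs1 vs5) [p, o, n, m, l, k, j, i] _ [] 60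
    ⟨w5, mp, w5, mo, w5, mn, w5, mm, w5, ml, w5, mk, w1, mj, w1, mi, trivial⟩ hd hc
  have := dfs2_sound _ (wvs vs1 vs5) [h, g, f, e, d, c, b, a] _ _ ?_ hd ?_ ?_
  · simpa using this
  · simp only [cols, acc1, List.zipWith_cons_cons, List.zipWith_nil_left, wvs, Ok2]
    refine ⟨w5, mh, ?_, w5, mg, ?_, w5, mf, ?_, w5, me, ?_, w5, md, ?_, w5, mc, ?_, w1, mb, ?_, w1, ma, ?_, trivial⟩
    · clear q0 q1 q2 q3 q4 q5 q6 h4 hn hb hc hd hq; omega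
    · clear q0 q1 q2 q3 q4 q5 q7 h4 hn hb hc hd hq; omega
    · clear q0 q1 q2 q3 q4 q6 q7 h4 hn hb hc hd hq; omega
    · clear q0 q1 q2 q3 q5 q6 q7 h4 hn hb hc hd hq; omega
    · clear q0 q1 q2 q4 q5 q6 q7 h4 hn hb hc hd hq; omega
    · clear q0 q1 q3 q4 q5 q6 q7 h4 hn hb hc hd hq; omega
    · clear q0 q2 q3 q4 q5 q6 q7 h4 hn hb hc hd hq; omega
    · clear q1 q2 q3 q4 q5 q6 q7 h4 hn hb hc hd hq; omega
  · simp only [cols, wvs, cost1, cost2]; linarith only [hn]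
  · simp only [List.reverse_cons, List.reverse_nil, List.nil_append, List.cons_append,
      List.append_nil, List.headD_cons, List.sum_cons, List.sum_nil]
    clear q0 q1 q2 q3 q4 q5 q6 q7 hn hb hc hd hq
    omega

theorem par_of_dvd {x a : ℤ} (h : 2 ∣ x - a) : x % 2 = a % 2 := by omega

theorem bnds (A' B' C' D' E' F' G' H' I' J' K' L' M' N' O' P' : ℤ)
    (ha : 0 ≤ A') (hb : 0 ≤ B') (hc : 0 ≤ C') (hd : 0 ≤ D') (he : 0 ≤ E')
    (hf : 0 ≤ F') (hg : 0 ≤ G') (hh : 0 ≤ H') (hi : 0 ≤ I') (hj : 0 ≤ J')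
    (hk : 0 ≤ K') (hl : 0 ≤ L') (hm : 0 ≤ M') (hn : 0 ≤ N') (ho : 0 ≤ O') (hp : 0 ≤ P')
    (hn : A' + B' + 5 * C' + 5 * D' + 5 * E' + 5 * F' + 5 * G' +
      5 * H' + I' + J' + 5 * K' + 5 * L' + 5 * M' + 5 * N' +
      5 * O' + 5 * P' = 120) :
    A' ≤ 120 ∧ B' ≤ 120 ∧ 5 * C' ≤ 120 ∧ 5 * D' ≤ 120 ∧ 5 * E' ≤ 120 ∧ 5 * F' ≤ 120 ∧ 5 * G' ≤ 120 ∧ 5 * H' ≤ 120 ∧ I' ≤ 120 ∧ J' ≤ 120 ∧ 5 * K' ≤ 120 ∧ 5 * L' ≤ 120 ∧ 5 * M' ≤ 120 ∧ 5 * N' ≤ 120 ∧ 5 * O' ≤ 120 ∧ 5 * P' ≤ 120 := by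
  refine ⟨?_, ?_, ?_, ?_, ?_, ?_, ?_, ?_, ?_, ?_, ?_, ?_, ?_, ?_, ?_, ?_⟩ <;> omega

/-- Every vector of `LatZ` of norm 120 that is constant on the orbits of `gu`, with second block of norm at
most 60, occurs in the list; the two parities of the entries are treated by separate searches. -/
theorem M3_half (a b c d e f g h i j k l m n o p : ℤ)
    (hx : Ev [a, b, c, d, e, f, g, h, i, j, k, l, m, n, o, p] ∈ LatZ)
    (hn : a * a + b * b + 5 * (c * c) + 5 * (d * d) + 5 * (e * e) + 5 * (f * f) + 5 * (g * g) +
      5 * (h * h) + i * i + j * j + 5 * (k * k) + 5 * (l * l) + 5 * (m * m) + 5 * (n * n) +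
      5 * (o * o) + 5 * (p * p) = 120)
    (hb : i * i + j * j + 5 * (k * k) + 5 * (l * l) + 5 * (m * m) + 5 * (n * n) +
      5 * (o * o) + 5 * (p * p) ≤ 60) :
    ∃ t ∈ M3codes, decV t = [a, b, c, d, e, f, g, h, i, j, k, l, m, n, o, p] := by
  obtain ⟨h1, h2, h3⟩ := mem_LatZ.mp hx
  have h2' := h2 (repN 0)
  rw [Ev_sum] at h2'
  have cr : ∀ k < 16, clsN (repN k) = k := by decide +kernel
  have hq : ∀ t < 8, 5 ∣ dot2 (J16row t) [a, b, c, d, e, f, g, h, i, j, k, l, m, n, o, p] - 2 * ([a, b, c, d, e, f, g, h, i, j, k, l, m, n, o, p].getD t 0) := by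
    intro t hk
    have := h3 (repN t)
    rwa [Ev_J, Ev, cr t (by omega)] at this
  have hp : ∀ t < 16, 2 ∣ [a, b, c, d, e, f, g, h, i, j, k, l, m, n, o, p].getD t 0 - a := by
    intro t hk
    have := h1 (repN t) (repN 0)
    rwa [Ev, Ev, cr t hk, cr 0 (by norm_num)] at this
  have r1 : b % 2 = a % 2 := par_of_dvd (hp 1 (by norm_num))
  have r2 : c % 2 = a % 2 := par_of_dvd (hp 2 (by norm_num))
  have r3 : d % 2 = a % 2 := par_of_dvd (hp 3 (by norm_num))
  have r4 : e % 2 = a % 2 := par_of_dvd (hp 4 (by norm_num))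
  have r5 : f % 2 = a % 2 := par_of_dvd (hp 5 (by norm_num))
  have r6 : g % 2 = a % 2 := par_of_dvd (hp 6 (by norm_num))
  have r7 : h % 2 = a % 2 := par_of_dvd (hp 7 (by norm_num))
  have r8 : i % 2 = a % 2 := par_of_dvd (hp 8 (by norm_num))
  have r9 : j % 2 = a % 2 := par_of_dvd (hp 9 (by norm_num))
  have r10 : k % 2 = a % 2 := par_of_dvd (hp 10 (by norm_num))
  have r11 : l % 2 = a % 2 := par_of_dvd (hp 11 (by norm_num))
  have r12 : m % 2 = a % 2 := par_of_dvd (hp 12 (by norm_num))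
  have r13 : n % 2 = a % 2 := par_of_dvd (hp 13 (by norm_num))
  have r14 : o % 2 = a % 2 := par_of_dvd (hp 14 (by norm_num))
  have r15 : p % 2 = a % 2 := par_of_dvd (hp 15 (by norm_num))
  obtain ⟨b0, b1, b2, b3, b4, b5, b6, b7, b8, b9, b10, b11, b12, b13, b14, b15⟩ := bnds _ _ _ _ _ _ _ _ _ _ _ _ _ _ _ _
    (mul_self_nonneg a) (mul_self_nonneg b) (mul_self_nonneg c) (mul_self_nonneg d) (mul_self_nonneg e) (mul_self_nonneg f) (mul_self_nonneg g) (mul_self_nonneg h) (mul_self_nonneg i) (mul_self_nonneg j) (mul_self_nonneg k) (mul_self_nonneg l) (mul_self_nonneg m) (mul_self_nonneg n) (mul_self_nonneg o) (mul_self_nonneg p) hn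
  have h4 : 4 ∣ dot2 szs [a, b, c, d, e, f, g, h, i, j, k, l, m, n, o, p] - 2 * a := by
    rwa [Ev, cr 0 (by norm_num)] at h2'
  rcases Int.emod_two_eq_zero_or_one a with ha | ha
  · exact M3_core ev1 ev5 dfs_even a b c d e f g h i j k l m n o p
      (mem_ev1 b0 ha)
      (mem_ev1 b1 (r1.trans ha))
      (mem_ev5 b2 (r2.trans ha))
      (mem_ev5 b3 (r3.trans ha))
      (mem_ev5 b4 (r4.trans ha))
      (mem_ev5 b5 (r5.trans ha))
      (mem_ev5 b6 (r6.trans ha))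
      (mem_ev5 b7 (r7.trans ha))
      (mem_ev1 b8 (r8.trans ha))
      (mem_ev1 b9 (r9.trans ha))
      (mem_ev5 b10 (r10.trans ha))
      (mem_ev5 b11 (r11.trans ha))
      (mem_ev5 b12 (r12.trans ha))
      (mem_ev5 b13 (r13.trans ha))
      (mem_ev5 b14 (r14.trans ha))
      (mem_ev5 b15 (r15.trans ha))
      hq h4 hn hb
  · exact M3_core od1 od5 dfs_odd a b c d e f g h i j k l m n o p
      (mem_od1 b0 ha)
      (mem_od1 b1 (r1.trans ha))
      (mem_od5 b2 (r2.trans ha))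
      (mem_od5 b3 (r3.trans ha))
      (mem_od5 b4 (r4.trans ha))
      (mem_od5 b5 (r5.trans ha))
      (mem_od5 b6 (r6.trans ha))
      (mem_od5 b7 (r7.trans ha))
      (mem_od1 b8 (r8.trans ha))
      (mem_od1 b9 (r9.trans ha))
      (mem_od5 b10 (r10.trans ha))
      (mem_od5 b11 (r11.trans ha))
      (mem_od5 b12 (r12.trans ha))
      (mem_od5 b13 (r13.trans ha))
      (mem_od5 b14 (r14.trans ha))
      (mem_od5 b15 (r15.trans ha))
      hq h4 hn hb

/-- The values of a vector at the representatives of the orbits of `gu`. -/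
def lst16 (x : Ix → ℤ) : List ℤ := [x (repN 0), x (repN 1), x (repN 2), x (repN 3), x (repN 4),
  x (repN 5), x (repN 6), x (repN 7), x (repN 8), x (repN 9), x (repN 10), x (repN 11),
  x (repN 12), x (repN 13), x (repN 14), x (repN 15)]

/-- A vector fixed by `gu` is determined by its values at the representatives. -/
theorem eq_Ev {x : LatZ} (hu : gu.toGam • x = x) : x.1 = Ev (lst16 x.1) := by
  have h1 : ∀ n i, x.1 (gu.p^[n] i) = x.1 i := by
    intro n
    induction n with
    | zero => intro i; rfl
    | succ n ih =>
      intro i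
      rw [Function.iterate_succ_apply, ih]
      have := SP.toGam_smul gu x i
      rw [hu] at this
      rw [this]; simp [gu]
  have h2 : ∀ i, ∃ n < 5, gu.p^[n] i = repN (clsN i) := by decide +kernel
  have h3 : ∀ k < 16, (lst16 x.1).getD k 0 = x.1 (repN k) := by
    intro k hk
    interval_cases k <;> rfl
  ext i
  obtain ⟨n, -, hn⟩ := h2 i
  rw [Ev, h3 _ (clsN_lt i), ← hn, h1]

/-- The `gu`-fixed vectors of norm `120` are the `120` listed ones. -/
theorem M3_complete {x : LatZ} (hx : x ∈ M6) (hu : gu.toGam • x = x) :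
    ∃ t ∈ M3codes, x.1 = Ev (decV t) := by
  have hn := mem_M6.mp hx
  have hE := eq_Ev hu
  have hm := x.2
  rw [hE, Ev_dot] at hn
  rw [hE] at hm
  rw [hE]
  unfold lst16 at *
  generalize x.1 (repN 0) = a at *
  generalize x.1 (repN 1) = b at *
  generalize x.1 (repN 2) = c at *
  generalize x.1 (repN 3) = d at *
  generalize x.1 (repN 4) = e at *
  generalize x.1 (repN 5) = f at *
  generalize x.1 (repN 6) = g at *
  generalize x.1 (repN 7) = h at *
  generalize x.1 (repN 8) = i at *
  generalize x.1 (repN 9) = j at *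
  generalize x.1 (repN 10) = k at *
  generalize x.1 (repN 11) = l at *
  generalize x.1 (repN 12) = m at *
  generalize x.1 (repN 13) = n at *
  generalize x.1 (repN 14) = o at *
  generalize x.1 (repN 15) = p at *
  simp only [szs, dot3] at hn
  by_cases hb : i * i + j * j + 5 * (k * k) + 5 * (l * l) + 5 * (m * m) + 5 * (n * n) +
      5 * (o * o) + 5 * (p * p) ≤ 60
  · obtain ⟨t, h1, h2⟩ := M3_half _ _ _ _ _ _ _ _ _ _ _ _ _ _ _ _ hm (by linarith) hb
    exact ⟨t, h1, by rw [h2]⟩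
  -- exchange the two blocks by `gSig`
  · have hs : Ev [-i, -j, -k, -l, -m, -n, -o, -p, -a, -b, -c, -d, -e, -f, -g, -h] ∈ LatZ := by
      have h := (gSig.toGam • (⟨_, hm⟩ : LatZ)).2
      convert h using 1
      funext q
      rw [SP.toGam_smul]
      have : ∀ q : Ix, ∃ r < 8, (clsN q = r ∧ clsN (gSig.p q) = r + 8) ∨
        (clsN q = r + 8 ∧ clsN (gSig.p q) = r) := by decide +kernel
      obtain ⟨r, hr, ⟨h1, h2⟩ | ⟨h1, h2⟩⟩ := this q <;>
      · simp only [Ev, h1, h2]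
        interval_cases r <;> simp [gSig]
    obtain ⟨t, h1, h2⟩ := M3_half _ _ _ _ _ _ _ _ _ _ _ _ _ _ _ _ hs (by linarith) (by linarith)
    have cl : ∀ t ∈ M3codes, ∃ t' ∈ M3codes,
      decV t' = ((decV t).drop 8 ++ (decV t).take 8).map (fun z => -z) := by decide +kernel
    obtain ⟨t', h3, h4⟩ := cl t h1
    refine ⟨t', h3, ?_⟩
    rw [h4, h2]
    simp

/-! ### Invariant moments -/

/-- The vectors of norm 120 fixed by `gu`, as lists of sixteen values. -/
def M3l : List (List ℤ) := M3codes.map decV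

/-- Coordinatewise form of membership of `Ev v` in `LatZ`. -/
def latChk (v : List ℤ) : Bool :=
  (List.range 16).all fun k => decide (2 ∣ v.getD k 0 - v.getD 0 0) &&
    (decide (4 ∣ dot2 szs v - 2 * v.getD k 0) && decide (5 ∣ dot2 (J16row k) v - 2 * v.getD k 0))

theorem Ev_mem {v : List ℤ} (h : latChk v = true) : Ev v ∈ LatZ := by
  simp only [latChk, List.all_eq_true, List.mem_range, Bool.and_eq_true, decide_eq_true_eq] at h
  refine mem_LatZ.mpr ⟨fun i j => ?_, fun i => ?_, fun i => ?_⟩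
  · have h1 := (h _ (clsN_lt i)).1
    have h2 := (h _ (clsN_lt j)).1
    simp only [Ev]
    omega
  · rw [Ev_sum]; exact (h _ (clsN_lt i)).2.1
  · rw [Ev_J]; exact (h _ (clsN_lt i)).2.2

set_option maxRecDepth 100000 in
theorem M3_chk : ∀ v ∈ M3l, latChk v = true ∧ dot3 szs v v = 120 ∧ v.length = 16 := by
  decide +kernel

set_option maxRecDepth 100000 in
theorem M3l_nodup : M3l.Nodup := by decide +kernel

open Classical in
/-- The vector `Ev v` as an element of `LatZ`, with the value `0` if it does not belong to `LatZ`. -/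
noncomputable def lat (v : List ℤ) : LatZ := if h : Ev v ∈ LatZ then ⟨Ev v, h⟩ else 0

theorem lat_val {v : List ℤ} (h : latChk v = true) : (lat v).1 = Ev v := by
  rw [lat, dif_pos (Ev_mem h)]

theorem cls_u : ∀ i, clsN (gu.p i) = clsN i := by decide +kernel

theorem cls_rep : ∀ k < 16, clsN (repN k) = k := by decide +kernel

theorem u_fix {v : List ℤ} {x : LatZ} (h : x.1 = Ev v) : gu.toGam • x = x := by
  apply Subtype.ext; ext i
  rw [SP.toGam_smul, h]
  have h1 := cls_u i
  simp only [Ev, h1]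
  exact one_mul _

theorem lst16_Ev {v : List ℤ} (h : v.length = 16) : lst16 (Ev v) = v := by
  simp only [lst16, Ev, cls_rep 0 (by norm_num), cls_rep 1 (by norm_num), cls_rep 2 (by norm_num),
    cls_rep 3 (by norm_num), cls_rep 4 (by norm_num), cls_rep 5 (by norm_num),
    cls_rep 6 (by norm_num), cls_rep 7 (by norm_num), cls_rep 8 (by norm_num),
    cls_rep 9 (by norm_num), cls_rep 10 (by norm_num), cls_rep 11 (by norm_num),
    cls_rep 12 (by norm_num), cls_rep 13 (by norm_num), cls_rep 14 (by norm_num),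
    cls_rep 15 (by norm_num)]
  match v, h with
  | [a, b, c, d, e, f, g, h, i, j, k, l, m, n, o, p], _ => rfl

theorem M3_complete' {x : LatZ} (hx : x ∈ M6) (hu : gu.toGam • x = x) :
    ∃ v ∈ M3l, x.1 = Ev v := by
  obtain ⟨t, h1, h2⟩ := M3_complete hx hu
  exact ⟨_, List.mem_map_of_mem h1, h2⟩

/-- A sum over the vectors of norm 120 fixed by `gu` is a sum over the list `M3l`. -/
theorem sum_fixed {M : Type*} [AddCommMonoid M] (F : (Ix → ℤ) → M) :
    ∑ x ∈ M6 with gu.toGam • x = x, F x.1 = (M3l.map fun v => F (Ev v)).sum := by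
  classical
  rw [← List.sum_toFinset _ M3l_nodup]
  refine Finset.sum_bij' (fun x _ => lst16 x.1) (fun v _ => lat v) ?_ ?_ ?_ ?_ ?_
  · intro x hx
    obtain ⟨h1, h2⟩ := Finset.mem_filter.mp hx
    obtain ⟨v, h3, h4⟩ := M3_complete' h1 h2
    rw [h4, lst16_Ev (M3_chk v h3).2.2]
    exact List.mem_toFinset.mpr h3
  · intro v hv
    obtain ⟨h1, h2, h3⟩ := M3_chk v (List.mem_toFinset.mp hv)
    refine Finset.mem_filter.mpr ⟨?_, u_fix (lat_val h1)⟩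
    rw [mem_M6, lat_val h1, Ev_dot, h2]
  · intro x hx
    obtain ⟨h1, h2⟩ := Finset.mem_filter.mp hx
    apply Subtype.ext
    obtain ⟨v, h3, h4⟩ := M3_complete' h1 h2
    rw [h4, lst16_Ev (M3_chk v h3).2.2, lat_val (M3_chk v h3).1]
  · intro v hv
    obtain ⟨h1, h2, h3⟩ := M3_chk v (List.mem_toFinset.mp hv)
    rw [lat_val h1, lst16_Ev h3]
  · intro x hx
    obtain ⟨h1, h2⟩ := Finset.mem_filter.mp hx
    rw [← eq_Ev h2]

/-- Invariant moments of the set of norm `120` vectors. -/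
noncomputable def Phi (k : ℕ) (x y : LatZ) : ℤ := ∑ c ∈ M6, ip c x ^ k * ip c y

theorem Phi_smul (k : ℕ) (g : Gam) (x y : LatZ) : Phi k (g • x) (g • y) = Phi k x y := by
  rw [Phi, ← sum_M6_smul g, Phi]
  simp only [ip_smul]

/-- The form of `LatZ` on lists of sixteen values. -/
def ip16 (v w : List ℤ) : ℤ := dot3 szs v w / 20

theorem ip_Ev {x y : LatZ} {v w : List ℤ} (hx : x.1 = Ev v) (hy : y.1 = Ev w) :
    ip x y = ip16 v w := by
  rw [ip, hx, hy, Ev_dot]; rfl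

/-- The part of the moment `Phi` that comes from the vectors fixed by `gu`. -/
def phi (k : ℕ) (v w : List ℤ) : ℤ := (M3l.map fun c => ip16 c v ^ k * ip16 c w).sum

instance : Fact (Nat.Prime 5) := ⟨by norm_num⟩

/-- Modulo 5 only the vectors fixed by `gu` contribute to a moment of vectors fixed by `gu`. -/
theorem Phi_mod (k : ℕ) {x y : LatZ} {v w : List ℤ} (hx : x.1 = Ev v) (hy : y.1 = Ev w) :
    Phi k x y % 5 = phi k v w % 5 := by
  classical
  rw [← Int.ModEq]
  have h5 : ((5:ℕ):ℤ) = 5 := rfl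
  rw [← h5, ← ZMod.intCast_eq_intCast_iff, Phi]
  push_cast
  rw [sum_modp 5 M6 (gu.toGam • ·) (fun x hx => smul_M6 _ hx) (fun x _ => gu_iter x)]
  · have := sum_fixed (fun z => (((z ⬝ᵥ x.1) / 20 : ℤ) : ZMod 5) ^ k * (((z ⬝ᵥ y.1) / 20 : ℤ) : ZMod 5))
    simp only [ip]
    rw [this, phi, hx, hy]
    simp only [Ev_dot, ip16]
    generalize M3l = l
    induction l with
    | nil => simp
    | cons a l ih => simp only [List.map_cons, List.sum_cons, Int.cast_add, ih]; push_cast; rfl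
  · intro c _
    have hux := u_fix hx
    have huy := u_fix hy
    have e1 := ip_smul gu.toGam c x
    have e2 := ip_smul gu.toGam c y
    rw [hux] at e1
    rw [huy] at e2
    rw [e1, e2]

/-- The list `M3l`, weighted by class sizes and reduced mod `1000`. -/
def M3w : List (List ℕ) := [
  [993,999,995,995,995,995,995,995,3,999,995,995,995,995,995,995],
  [993,1,5,5,5,5,5,5,997,999,995,995,995,995,995,995],
  [994,996,10,0,10,0,10,0,2,2,0,0,0,0,0,0],
  [994,4,0,990,0,990,0,990,998,2,0,0,0,0,0,0],
  [995,997,995,995,995,995,995,995,999,5,995,5,995,5,995,5],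
  [995,999,5,5,5,5,5,5,3,995,995,5,995,5,995,5],
  [995,1,995,995,995,995,995,995,997,995,5,995,5,995,5,995],
  [995,3,5,5,5,5,5,5,1,5,5,995,5,995,5,995],
  [996,994,990,0,990,0,990,0,998,998,0,0,0,0,0,0],
  [996,996,0,0,0,0,0,10,2,998,0,10,10,990,0,0],
  [996,996,0,0,0,10,0,0,2,998,10,990,0,0,0,10],
  [996,996,0,10,0,0,0,0,2,998,0,0,0,10,10,990],
  [996,4,990,0,0,0,0,0,998,998,0,0,10,10,990,0],
  [996,4,0,0,990,0,0,0,998,998,990,0,0,0,10,10],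
  [996,4,0,0,0,0,990,0,998,998,10,10,990,0,0,0],
  [996,6,0,10,0,10,0,10,2,998,0,0,0,0,0,0],
  [997,995,5,995,5,995,5,995,995,1,995,995,995,995,995,995],
  [997,999,995,995,995,995,995,995,993,1,5,5,5,5,5,5],
  [997,999,995,995,995,5,995,5,3,1,5,5,5,995,995,15],
  [997,999,995,995,995,5,5,985,3,1,5,5,5,995,5,995],
  [997,999,995,5,995,995,995,5,3,1,995,15,5,5,5,995],
  [997,999,995,5,995,5,995,995,3,1,5,995,995,15,5,5],
  [997,999,995,5,5,985,995,995,3,1,5,995,5,995,5,5],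
  [997,999,5,985,995,995,995,5,3,1,5,995,5,5,5,995],
  [997,1,995,995,15,5,5,5,997,1,995,5,995,5,5,5],
  [997,1,995,5,995,5,5,5,997,1,995,995,15,5,5,5],
  [997,1,995,5,5,5,995,5,997,1,15,5,5,5,995,995],
  [997,1,5,5,995,995,15,5,997,1,5,5,995,5,995,5],
  [997,1,5,5,995,5,995,5,997,1,5,5,995,995,15,5],
  [997,1,5,5,5,5,5,5,7,1,5,5,5,5,5,5],
  [997,1,15,5,5,5,995,995,997,1,995,5,5,5,995,5],
  [997,5,5,995,5,995,5,995,5,1,995,995,995,995,995,995],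
  [998,998,990,0,0,0,10,10,996,4,0,0,990,0,0,0],
  [998,998,0,0,0,0,0,0,996,994,990,0,990,0,990,0],
  [998,998,0,0,0,0,0,0,6,4,990,0,990,0,990,0],
  [998,998,0,0,10,10,990,0,996,4,990,0,0,0,0,0],
  [998,998,10,10,990,0,0,0,996,4,0,0,0,0,990,0],
  [998,2,990,10,0,0,0,990,4,4,0,0,0,990,0,0],
  [998,2,0,990,990,10,0,0,4,4,0,0,0,0,0,990],
  [998,2,0,0,0,990,990,10,4,4,0,990,0,0,0,0],
  [998,2,0,0,0,0,0,0,994,4,0,990,0,990,0,990],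
  [998,2,0,0,0,0,0,0,4,994,0,990,0,990,0,990],
  [999,993,5,995,5,995,5,995,1,997,995,5,995,5,995,5],
  [999,995,995,5,995,5,995,5,5,997,995,995,995,995,995,995],
  [999,997,995,5,5,995,5,985,999,997,5,5,5,995,5,5],
  [999,997,5,985,995,5,5,995,999,997,5,5,5,5,5,995],
  [999,997,5,995,5,985,995,5,999,997,5,995,5,5,5,5],
  [999,997,5,995,5,995,5,995,999,7,5,995,5,995,5,995],
  [999,997,5,995,5,5,5,5,999,997,5,995,5,985,995,5],
  [999,997,5,5,5,995,5,5,999,997,995,5,5,995,5,985],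
  [999,997,5,5,5,5,5,995,999,997,5,985,995,5,5,995],
  [999,3,995,995,995,995,5,995,1,997,985,995,5,5,995,5],
  [999,3,995,995,5,995,995,995,1,997,5,5,995,5,985,995],
  [999,3,995,995,5,995,15,5,1,997,5,5,995,5,5,5],
  [999,3,5,995,995,995,995,995,1,997,995,5,985,995,5,5],
  [999,3,5,995,5,995,5,995,1,7,995,5,995,5,995,5],
  [999,3,5,995,15,5,995,995,1,997,995,5,5,5,5,5],
  [999,3,15,5,995,995,5,995,1,997,5,5,5,5,995,5],
  [999,5,995,5,995,5,995,5,995,997,995,995,995,995,995,995],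
  [999,7,5,995,5,995,5,995,999,997,5,995,5,995,5,995],
  [1,993,995,5,995,5,995,5,1,3,995,5,995,5,995,5],
  [1,995,5,995,5,995,5,995,5,3,5,5,5,5,5,5],
  [1,997,985,995,5,5,995,5,999,3,995,995,995,995,5,995],
  [1,997,995,5,985,995,5,5,999,3,5,995,995,995,995,995],
  [1,997,995,5,995,5,995,5,999,993,5,995,5,995,5,995],
  [1,997,995,5,5,5,5,5,999,3,5,995,15,5,995,995],
  [1,997,5,5,995,5,985,995,999,3,995,995,5,995,995,995],
  [1,997,5,5,995,5,5,5,999,3,995,995,5,995,15,5],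
  [1,997,5,5,5,5,995,5,999,3,15,5,995,995,5,995],
  [1,3,995,995,995,995,995,5,1,3,995,15,5,995,995,5],
  [1,3,995,995,995,5,995,995,1,3,5,995,995,5,995,15],
  [1,3,995,5,995,995,995,995,1,3,995,5,995,15,5,995],
  [1,3,995,5,995,5,995,5,1,993,995,5,995,5,995,5],
  [1,3,995,5,995,15,5,995,1,3,995,5,995,995,995,995],
  [1,3,995,15,5,995,995,5,1,3,995,995,995,995,995,5],
  [1,3,5,995,995,5,995,15,1,3,995,995,995,5,995,995],
  [1,5,5,995,5,995,5,995,995,3,5,5,5,5,5,5],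
  [1,7,995,5,995,5,995,5,999,3,5,995,5,995,5,995],
  [2,998,0,0,0,0,0,0,996,6,0,10,0,10,0,10],
  [2,998,0,0,0,0,0,0,6,996,0,10,0,10,0,10],
  [2,998,0,0,0,10,10,990,996,996,0,10,0,0,0,0],
  [2,998,0,10,10,990,0,0,996,996,0,0,0,0,0,10],
  [2,998,10,990,0,0,0,10,996,996,0,0,0,10,0,0],
  [2,2,990,990,10,0,0,0,4,996,0,0,0,0,10,0],
  [2,2,0,0,990,990,10,0,4,996,10,0,0,0,0,0],
  [2,2,0,0,0,0,0,0,994,996,10,0,10,0,10,0],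
  [2,2,0,0,0,0,0,0,4,6,10,0,10,0,10,0],
  [2,2,10,0,0,0,990,990,4,996,0,0,10,0,0,0],
  [3,995,995,5,995,5,995,5,995,999,5,5,5,5,5,5],
  [3,999,985,995,995,995,5,5,3,999,5,995,995,995,5,995],
  [3,999,995,995,995,995,995,995,993,999,995,995,995,995,995,995],
  [3,999,995,995,5,995,5,995,3,999,995,995,5,5,985,995],
  [3,999,995,995,5,5,985,995,3,999,995,995,5,995,5,995],
  [3,999,5,995,995,995,5,995,3,999,985,995,995,995,5,5],
  [3,999,5,995,5,995,995,995,3,999,5,5,985,995,995,995],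
  [3,999,5,5,985,995,995,995,3,999,5,995,5,995,995,995],
  [3,1,995,15,5,5,5,995,997,999,995,5,995,995,995,5],
  [3,1,5,995,995,15,5,5,997,999,995,5,995,5,995,995],
  [3,1,5,995,5,995,5,5,997,999,995,5,5,985,995,995],
  [3,1,5,995,5,5,5,995,997,999,5,985,995,995,995,5],
  [3,1,5,5,5,995,995,15,997,999,995,995,995,5,995,5],
  [3,1,5,5,5,995,5,995,997,999,995,995,995,5,5,985],
  [3,1,5,5,5,5,5,5,7,999,995,995,995,995,995,995],
  [3,5,995,5,995,5,995,5,5,999,5,5,5,5,5,5],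
  [4,994,0,990,0,990,0,990,998,2,0,0,0,0,0,0],
  [4,996,0,0,0,0,10,0,2,2,990,990,10,0,0,0],
  [4,996,0,0,10,0,0,0,2,2,10,0,0,0,990,990],
  [4,996,10,0,0,0,0,0,2,2,0,0,990,990,10,0],
  [4,4,0,990,0,0,0,0,998,2,0,0,0,990,990,10],
  [4,4,0,0,0,990,0,0,998,2,990,10,0,0,0,990],
  [4,4,0,0,0,0,0,990,998,2,0,990,990,10,0,0],
  [4,6,10,0,10,0,10,0,2,2,0,0,0,0,0,0],
  [5,997,995,995,995,995,995,995,999,995,995,5,995,5,995,5],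
  [5,999,5,5,5,5,5,5,3,5,995,5,995,5,995,5],
  [5,1,995,995,995,995,995,995,997,5,5,995,5,995,5,995],
  [5,3,5,5,5,5,5,5,1,995,5,995,5,995,5,995],
  [6,996,0,10,0,10,0,10,2,998,0,0,0,0,0,0],
  [6,4,990,0,990,0,990,0,998,998,0,0,0,0,0,0],
  [7,999,995,995,995,995,995,995,3,1,5,5,5,5,5,5],
  [7,1,5,5,5,5,5,5,997,1,5,5,5,5,5,5]]

/-- The residues modulo `1000`, so that kernel arithmetic can stay in natural numbers. -/
def nn (v : List ℤ) : List ℕ := v.map fun z => (z % 1000).toNat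

/-- The entries times the orbit sizes, modulo `1000`. -/
def wt : List ℤ → List ℤ → List ℕ
  | s :: ss, z :: zs => ((s * z) % 1000).toNat :: wt ss zs
  | _, _ => []

/-- The dot product of lists of natural numbers. -/
def dotN : List ℕ → List ℕ → ℕ
  | a :: as, b :: bs => a * b + dotN as bs
  | _, _ => 0

set_option maxRecDepth 100000 in
theorem M3w_eq : M3l.map (wt szs) = M3w := by decide +kernel

/-- The scaled inner product modulo `50`. -/
def gN (c v : List ℕ) : ℕ := dotN c v % 1000 / 20

theorem dotN_mod (s c v : List ℤ) : ((dotN (wt s c) (nn v) : ℕ) : ℤ) ≡ dot3 s c v [ZMOD 1000] := by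
  induction s generalizing c v with
  | nil => simp [wt, dotN, dot3]
  | cons a s ih =>
    obtain _ | ⟨b, c⟩ := c
    · simp [wt, dotN, dot3]
    obtain _ | ⟨d, v⟩ := v
    · simp [wt, nn, dotN, dot3]
    have h := ih c v
    simp only [wt, nn, List.map_cons, dotN, dot3] at h ⊢
    rw [Nat.cast_add, Nat.cast_mul, Int.toNat_of_nonneg (Int.emod_nonneg _ (by norm_num)),
      Int.toNat_of_nonneg (Int.emod_nonneg _ (by norm_num))]
    exact (((Int.mod_modEq _ _).mul (Int.mod_modEq _ _)).add h).trans (by ring_nf; rfl)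

theorem gN_eq (c v : List ℤ) : ((gN (wt szs c) (nn v) : ℕ) : ℤ) = ip16 c v % 50 := by
  have h := dotN_mod szs c v
  rw [Int.ModEq] at h
  simp only [gN, ip16]
  push_cast
  omega

/-- The sum defining `phi`, in natural numbers. -/
def phiL : List (List ℕ) → ℕ → List ℕ → List ℕ → ℕ
  | [], _, _, _ => 0
  | c :: l, k, v, w => gN c v ^ k * gN c w + phiL l k v w

/-- `phi` modulo `5`, computed with natural numbers. -/
def phiN (k : ℕ) (v w : List ℤ) : ℕ := phiL M3w k (nn v) (nn w) % 5

theorem phiN_eq (k : ℕ) (v w : List ℤ) : phi k v w % 5 = phiN k v w := by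
  rw [phiN, ← M3w_eq, phi]
  push_cast
  rw [← Int.ModEq]
  generalize M3l = l
  induction l with
  | nil => simp [phiL]
  | cons c l ih =>
    simp only [List.map_cons, List.sum_cons, phiL]
    push_cast
    refine Int.ModEq.add (Int.ModEq.mul (Int.ModEq.pow _ ?_) ?_) ih <;>
    · rw [gN_eq, Int.ModEq]; omega

/-! ### Candidate tuples -/

/-- The vectors of norm `120` constant on the eight orbits of `ν ↦ 9ν` (in both blocks). -/
def MF8 : List (List ℤ) := [
  [6,-4,0,2,2,-2,0,0],
  [-6,4,0,-2,-2,2,0,0],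
  [3,5,-1,1,5,-1,1,1],
  [-3,-5,1,-1,-5,1,-1,-1],
  [-1,7,1,-1,-1,-3,1,-1],
  [1,-7,-1,1,1,3,-1,1],
  [5,3,1,1,1,-5,1,-1],
  [-5,-3,-1,-1,-1,5,-1,1],
  [-4,-6,-2,0,-2,-2,0,0],
  [4,6,2,0,2,2,0,0],
  [3,-1,-1,-1,-7,-1,-1,-1],
  [-3,1,1,1,7,1,1,1],
  [-5,1,-1,-1,-3,-5,1,-1],
  [5,-1,1,1,3,5,-1,1],
  [1,-3,-1,1,-1,-7,1,-1],
  [-1,3,1,-1,1,7,-1,1],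
  [6,4,-2,0,-2,-2,0,0],
  [-6,-4,2,0,2,2,0,0],
  [-2,-2,0,0,6,4,-2,0],
  [2,2,0,0,-6,-4,2,0],
  [-3,5,1,-1,5,1,-1,-1],
  [3,-5,-1,1,-5,-1,1,1],
  [3,1,1,1,7,-1,-1,-1],
  [-3,-1,-1,-1,-7,1,1,1],
  [-7,-1,-1,-1,3,-1,-1,-1],
  [7,1,1,1,-3,1,1,1],
  [-1,-5,-1,1,5,-3,-1,-1],
  [1,5,1,-1,-5,3,1,1],
  [-2,2,0,0,4,-6,0,-2],
  [2,-2,0,0,-4,6,0,2],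
  [1,-5,1,-1,5,3,1,1],
  [-1,5,-1,1,-5,-3,-1,-1],
  [4,-6,0,-2,-2,2,0,0],
  [-4,6,0,2,2,-2,0,0],
  [7,-1,-1,-1,3,1,1,1],
  [-7,1,1,1,-3,-1,-1,-1],
  [-5,3,1,1,1,5,1,-1],
  [5,-3,-1,-1,-1,-5,-1,1],
  [-2,2,0,0,-6,4,0,-2],
  [2,-2,0,0,6,-4,0,2],
  [1,7,-1,1,-1,3,1,-1],
  [-1,-7,1,-1,1,-3,-1,1],
  [-1,-3,1,-1,-1,7,1,-1],
  [1,3,-1,1,1,-7,-1,1],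
  [2,2,0,0,4,6,2,0],
  [-2,-2,0,0,-4,-6,-2,0],
  [5,1,-1,-1,-3,5,1,-1],
  [-5,-1,1,1,3,-5,-1,1]]

/-- From values on the eight classes `∞`, `0`, squares, nonsquares in each of the two blocks to values on the
sixteen orbits of `gu`. -/
def lift8 (v : List ℤ) : List ℤ :=
  let w := fun k => v.getD k 0
  [w 0, w 1, w 2, w 3, w 2, w 3, w 2, w 3, w 4, w 5, w 6, w 7, w 6, w 7, w 6, w 7]

/-- Representatives of `MF8` under the sixteen words. -/
def reps8 : List (List ℤ) := [
  [-6,-4,2,0,2,2,0,0],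
  [-5,-3,-1,-1,-1,5,-1,1],
  [-7,-1,-1,-1,3,-1,-1,-1]]

/-- The chosen basis of the eight-dimensional fixed space, as a tuple. -/
def tupA : List (List ℤ) := [
  [-5,-3,-1,-1,-1,5,-1,1],
  [3,5,-1,1,5,-1,1,1],
  [5,-1,1,1,3,5,-1,1],
  [-7,1,1,1,-3,-1,-1,-1],
  [6,4,-2,0,-2,-2,0,0],
  [2,2,0,0,-6,-4,2,0],
  [1,-3,-1,1,-1,-7,1,-1],
  [-1,-3,1,-1,-1,7,1,-1]]

/-- The Gram matrix of `tupA`, modulo `50`. -/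
def gramA : List (List ℕ) := [
  [6,48,0,0,49,47,47,1],
  [48,6,1,47,3,1,1,47],
  [0,1,6,49,49,47,47,0],
  [0,47,49,6,47,49,0,0],
  [49,3,49,47,6,2,2,47],
  [47,1,47,49,2,6,3,0],
  [47,1,47,0,2,3,6,48],
  [1,47,0,0,47,0,48,6]]

/-- The third moments of pairs of vectors of `tupA`, modulo 5. -/
def phiA : List (List ℕ) := [
  [0,4,2,4,2,0,0,3],
  [4,0,4,3,0,3,3,0],
  [3,4,0,2,2,0,2,4],
  [1,3,2,0,3,1,4,2],
  [2,0,2,3,0,2,1,2],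
  [2,3,0,1,2,0,0,0],
  [0,3,0,1,1,3,0,3],
  [3,2,1,3,0,0,3,0]]

/-- The six candidate tuples. -/
def tups : List (List (List ℤ)) := [
  [[-6,-4,2,0,2,2,0,0],
   [1,-3,-1,1,-1,-7,1,-1],
   [-4,6,0,2,2,-2,0,0],
   [1,5,1,-1,-5,3,1,1],
   [-4,-6,-2,0,-2,-2,0,0],
   [5,-3,-1,-1,-1,-5,-1,1],
   [3,-1,-1,-1,-7,-1,-1,-1],
   [5,-1,1,1,3,5,-1,1]],
  [[-6,-4,2,0,2,2,0,0],
   [1,-3,-1,1,-1,-7,1,-1],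
   [-2,-2,0,0,-4,-6,-2,0],
   [2,-2,0,0,-4,6,0,2],
   [5,3,1,1,1,-5,1,-1],
   [1,7,-1,1,-1,3,1,-1],
   [3,5,-1,1,5,-1,1,1],
   [-6,4,0,-2,-2,2,0,0]],
  [[-5,-3,-1,-1,-1,5,-1,1],
   [3,5,-1,1,5,-1,1,1],
   [5,-1,1,1,3,5,-1,1],
   [-7,1,1,1,-3,-1,-1,-1],
   [6,4,-2,0,-2,-2,0,0],
   [2,2,0,0,-6,-4,2,0],
   [1,-3,-1,1,-1,-7,1,-1],
   [-1,-3,1,-1,-1,7,1,-1]],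
  [[-5,-3,-1,-1,-1,5,-1,1],
   [3,5,-1,1,5,-1,1,1],
   [3,-5,-1,1,-5,-1,1,1],
   [-2,2,0,0,-6,4,0,-2],
   [-3,1,1,1,7,1,1,1],
   [3,1,1,1,7,-1,-1,-1],
   [4,6,2,0,2,2,0,0],
   [-2,-2,0,0,-4,-6,-2,0]],
  [[-7,-1,-1,-1,3,-1,-1,-1],
   [2,2,0,0,4,6,2,0],
   [-1,7,1,-1,-1,-3,1,-1],
   [1,3,-1,1,1,-7,-1,1],
   [1,-5,1,-1,5,3,1,1],
   [2,-2,0,0,-4,6,0,2],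
   [5,-1,1,1,3,5,-1,1],
   [3,-1,-1,-1,-7,-1,-1,-1]],
  [[-7,-1,-1,-1,3,-1,-1,-1],
   [2,2,0,0,4,6,2,0],
   [-1,3,1,-1,1,7,-1,1],
   [5,-3,-1,-1,-1,-5,-1,1],
   [1,7,-1,1,-1,3,1,-1],
   [5,3,1,1,1,-5,1,-1],
   [2,2,0,0,-6,-4,2,0],
   [-5,-1,1,1,3,-5,-1,1]]]

/-- Sixteen words in the generators `gm`. -/
def words : List (List ℕ) := [[], [0], [1], [2], [3], [1,0], [2,0], [3,0], [2,1], [3,1], [1,2], [3,2], [2,3], [3,1,0], [3,2,1], [2,3,1]]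

/-- Four known automorphisms that permute the orbits of `gu` up to sign. -/
def gm : ℕ → SP
  | 0 => gNeg
  | 1 => gSig
  | 2 => gr
  | _ => gS

/-- The action of the generators `gm` on class functions. -/
def act8 (k : ℕ) (v : List ℤ) : List ℤ :=
  let w := fun k => v.getD k 0
  match k with
  | 0 => [-w 0, -w 1, -w 2, -w 3, -w 4, -w 5, -w 6, -w 7]
  | 1 => [-w 4, -w 5, -w 6, -w 7, -w 0, -w 1, -w 2, -w 3]
  | 2 => [w 0, -w 1, -w 3, -w 2, -w 4, w 5, w 7, w 6]
  | _ => [-w 1, w 0, w 3, -w 2, -w 5, w 4, w 7, -w 6]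

/-- The action of a word on lists of eight values. -/
def actW (l : List ℕ) (v : List ℤ) : List ℤ := l.foldr act8 v

/-- The automorphism given by a word. -/
def gW (l : List ℕ) : Gam := (l.map fun k => (gm k).toGam).prod

/-- For each of the sixteen classes: its image under `gm k`, and the sign there. -/
def clsP (k c : ℕ) : ℕ := clsN ((gm k).p (repN c))
def clsS (k c : ℕ) : ℤ := (gm k).s (repN c)

theorem cls_gm : ∀ k < 4, ∀ i, clsN ((gm k).p i) = clsP k (clsN i) ∧ (gm k).s i = clsS k (clsN i) := by
  decide +kernel

/-- The table of `clsP`. -/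
def clsPt : List (List ℕ) := [
  [0, 1, 2, 3, 4, 5, 6, 7, 8, 9, 10, 11, 12, 13, 14, 15],
  [8, 9, 10, 11, 12, 13, 14, 15, 0, 1, 2, 3, 4, 5, 6, 7],
  [0, 1, 5, 6, 7, 2, 3, 4, 8, 9, 13, 14, 15, 10, 11, 12],
  [1, 0, 5, 4, 3, 2, 7, 6, 9, 8, 13, 12, 11, 10, 15, 14]]

/-- The table of `clsS`. -/
def clsSt : List (List ℤ) := [
  [-1, -1, -1, -1, -1, -1, -1, -1, -1, -1, -1, -1, -1, -1, -1, -1],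
  [-1, -1, -1, -1, -1, -1, -1, -1, -1, -1, -1, -1, -1, -1, -1, -1],
  [1, -1, -1, -1, -1, -1, -1, -1, -1, 1, 1, 1, 1, 1, 1, 1],
  [-1, 1, 1, -1, 1, -1, 1, -1, -1, 1, 1, -1, 1, -1, 1, -1]]

theorem cls_tab : ∀ k < 4, ∀ c < 16,
    clsP k c = (clsPt.getD k []).getD c 0 ∧ clsS k c = (clsSt.getD k []).getD c 0 := by
  decide +kernel

theorem act_row (v : List ℤ) (k : ℕ) (hk : k < 4) (c : ℕ) (hc : c < 16) :
    clsS k c * (lift8 v).getD (clsP k c) 0 = (lift8 (act8 k v)).getD c 0 := by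
  rw [(cls_tab k hk c hc).1, (cls_tab k hk c hc).2]
  interval_cases k <;> interval_cases c <;> simp [clsPt, clsSt, lift8, act8]

theorem gm_smul {k : ℕ} (hk : k < 4) {x : LatZ} {v : List ℤ} (h : x.1 = Ev (lift8 v)) :
    ((gm k).toGam • x).1 = Ev (lift8 (act8 k v)) := by
  ext i
  rw [SP.toGam_smul, h]
  simp only [Ev]
  rw [(cls_gm k hk i).1, (cls_gm k hk i).2, act_row v k hk _ (clsN_lt i)]

theorem gW_smul {l : List ℕ} (hl : ∀ k ∈ l, k < 4) {x : LatZ} {v : List ℤ}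
    (h : x.1 = Ev (lift8 v)) : (gW l • x).1 = Ev (lift8 (actW l v)) := by
  induction l with
  | nil => simpa [gW, actW] using h
  | cons k l ih =>
    have h1 := ih fun k hk => hl k (List.mem_cons_of_mem _ hk)
    have : gW (k :: l) • x = (gm k).toGam • (gW l • x) := by
      rw [← mul_smul]; simp [gW]
    rw [this]
    exact gm_smul (hl k List.mem_cons_self) h1

theorem words_lt : ∀ l ∈ words, ∀ k ∈ l, k < 4 := by decide +kernel

theorem reps_chk : ∀ v ∈ MF8, ∃ l ∈ words, actW l v ∈ reps8 := by decide +kernel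

/-- A vector fixed by `gu` whose third moment vanishes modulo 5 is constant on the eight classes. -/
theorem MF8_complete : ∀ v ∈ M3l, phiN 3 v v = 0 → ∃ m ∈ MF8, v = lift8 m := by
  decide +kernel

/-- The Gram matrix entry of two class functions modulo `50`. -/
def gr8 (v w : List ℤ) : ℕ := gN (wt szs (lift8 v)) (nn (lift8 w))

/-- The compatibility of a new vector with the Gram matrix and the third moments of `tupA`. -/
def test8 (b : List (List ℤ)) (k : ℕ) (x : List ℤ) : Bool :=
  ((List.range k).all fun i => gr8 (b.getD i []) x == (gramA.getD i []).getD k 0) &&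
  ((List.range k).all fun i =>
    phiN 3 (lift8 (b.getD i [])) (lift8 x) == (phiA.getD i []).getD k 0)

/-- The partial tuples in `MF8` with the invariants of the first `k + 1` entries of `tupA`. -/
def level : ℕ → List (List (List ℤ))
  | 0 => reps8.map fun v => [v]
  | k + 1 => (level k).flatMap fun b => (MF8.filter (test8 b (k + 1))).map fun x => b ++ [x]

set_option maxRecDepth 100000 in
theorem level_seven : ∀ t ∈ level 7, t ∈ tups := by decide +kernel

/-- A tuple that satisfies all tests is found by the level-by-level search. -/
theorem level_sound (m : ℕ → List ℤ) (h0 : m 0 ∈ reps8) (hm : ∀ i < 8, m i ∈ MF8)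
    (ht : ∀ k < 8, ∀ i < k, gr8 (m i) (m k) = (gramA.getD i []).getD k 0 ∧
      phiN 3 (lift8 (m i)) (lift8 (m k)) = (phiA.getD i []).getD k 0) (k : ℕ) (hk : k < 8) :
    (List.range (k + 1)).map m ∈ level k := by
  induction k with
  | zero => exact List.mem_map.mpr ⟨_, h0, rfl⟩
  | succ k ih =>
    refine List.mem_flatMap.mpr ⟨_, ih (by omega), List.mem_map.mpr ⟨m (k + 1), ?_, ?_⟩⟩
    · refine List.mem_filter.mpr ⟨hm _ hk, ?_⟩
      have e : ∀ i < k + 1, ((List.range (k + 1)).map m).getD i [] = m i := by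
        intro i hi
        simp [hi]
      simp only [test8, Bool.and_eq_true, List.all_eq_true, List.mem_range, beq_iff_eq]
      refine ⟨fun i hi => ?_, fun i hi => ?_⟩ <;> rw [e i hi]
      · exact (ht _ hk i hi).1
      · exact (ht _ hk i hi).2
    · rw [List.range_succ (n := k + 1), List.map_append]; rfl

theorem tupA_chk : ∀ i < 8, lift8 (tupA.getD i []) ∈ M3l ∧
    phiN 3 (lift8 (tupA.getD i [])) (lift8 (tupA.getD i [])) = 0 := by decide +kernel

theorem gramA_chk : ∀ k < 8, ∀ i < k,
    gr8 (tupA.getD i []) (tupA.getD k []) = (gramA.getD i []).getD k 0 ∧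
    phiN 3 (lift8 (tupA.getD i [])) (lift8 (tupA.getD k [])) = (phiA.getD i []).getD k 0 := by
  decide +kernel

/-- The vectors of `tupA` as elements of `LatZ`. -/
noncomputable def aL (i : ℕ) : LatZ := lat (lift8 (tupA.getD i []))

theorem aL_val {i : ℕ} (hi : i < 8) : (aL i).1 = Ev (lift8 (tupA.getD i [])) :=
  lat_val (M3_chk _ (tupA_chk i hi).1).1

theorem aL_M6 {i : ℕ} (hi : i < 8) : aL i ∈ M6 := by
  rw [mem_M6, aL_val hi, Ev_dot, (M3_chk _ (tupA_chk i hi).1).2.1]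

theorem gr8_ip {x y : LatZ} {v w : List ℤ} (hx : x.1 = Ev (lift8 v)) (hy : y.1 = Ev (lift8 w)) :
    ((gr8 v w : ℕ) : ℤ) = ip x y % 50 := by
  rw [ip_Ev hx hy, gr8, gN_eq]

theorem phiN_Phi {x y : LatZ} {v w : List ℤ} (hx : x.1 = Ev v) (hy : y.1 = Ev w) :
    ((phiN 3 v w : ℕ) : ℤ) = Phi 3 x y % 5 := by
  rw [Phi_mod 3 hx hy, phiN_eq]

theorem lift8_inj : ∀ m ∈ MF8, ∀ r ∈ reps8, lift8 m = lift8 r → m = r := by decide +kernel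

/-- An image of `tupA` fixed by `gu` is one of the six candidates, up to one of the sixteen words. -/
theorem tuples (f : Gam) (hf : ∀ i < 8, gu.toGam • f • aL i = f • aL i) :
    ∃ l ∈ words, ∃ t ∈ tups, ∀ i < 8, ((gW l * f) • aL i).1 = Ev (lift8 (t.getD i [])) := by
  -- an `f • aL i` is constant on the eight classes
  have key : ∀ f : Gam, ∀ i < 8, gu.toGam • f • aL i = f • aL i →
      ∃ m ∈ MF8, (f • aL i).1 = Ev (lift8 m) := by
    intro f i hi h
    obtain ⟨v, h1, h2⟩ := M3_complete' (smul_M6 f (aL_M6 hi)) h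
    have h3 := phiN_Phi h2 h2
    rw [Phi_smul, ← phiN_Phi (aL_val hi) (aL_val hi), (tupA_chk i hi).2] at h3
    obtain ⟨m, h4, h5⟩ := MF8_complete v h1 (by exact_mod_cast h3)
    exact ⟨m, h4, h5 ▸ h2⟩
  obtain ⟨m0, h1, h2⟩ := key f 0 (by norm_num) (hf 0 (by norm_num))
  obtain ⟨l, hl, hr⟩ := reps_chk m0 h1
  have hg : ∀ i < 8, ∃ m ∈ MF8, ((gW l * f) • aL i).1 = Ev (lift8 m) := by
    intro i hi
    refine key _ i hi ?_
    obtain ⟨m, -, h⟩ := key f i hi (hf i hi)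
    rw [mul_smul]
    exact u_fix (gW_smul (words_lt l hl) h)
  choose! m hm1 hm2 using hg
  have hm0 : m 0 ∈ reps8 := by
    have e : lift8 (m 0) = lift8 (actW l m0) := by
      rw [← lst16_Ev (v := lift8 (m 0)) rfl, ← hm2 0 (by norm_num), mul_smul,
        gW_smul (words_lt l hl) h2, lst16_Ev rfl]
    rw [lift8_inj _ (hm1 0 (by norm_num)) _ hr e]
    exact hr
  refine ⟨l, hl, (List.range 8).map m, ?_, fun i hi => ?_⟩
  · refine level_seven _ (level_sound m hm0 hm1 ?_ 7 (by norm_num))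
    intro k hk i hi
    have hi8 := hi.trans hk
    rw [← (gramA_chk k hk i hi).1, ← (gramA_chk k hk i hi).2]
    constructor
    · have e1 := gr8_ip (hm2 i hi8) (hm2 k hk)
      rw [ip_smul, ← gr8_ip (aL_val hi8) (aL_val hk)] at e1
      exact_mod_cast e1
    · have e1 := phiN_Phi (hm2 i hi8) (hm2 k hk)
      rw [Phi_smul, ← phiN_Phi (aL_val hi8) (aL_val hk)] at e1
      exact_mod_cast e1
  · rw [hm2 i hi]
    congr 2
    simp [hi]

/-! ### Polynomials over F₃₁ -/

/-- Sparse Horner form of polynomials over `ZMod 31` in variables `x₀, x₁, …`: `z` is zero, `c k`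
a constant, and `n P Q` is `x₀ * P + Q`, where in `Q` the variables are shifted by one. -/
inductive Pol
  | z : Pol
  | c : ℕ → Pol
  | n : Pol → Pol → Pol

namespace Pol

/-- The polynomial function on `F₃₁`-valued sequences. -/
def eval : Pol → (ℕ → ZMod 31) → ZMod 31
  | z, _ => 0
  | c k, _ => k
  | n P Q, x => x 0 * eval P x + eval Q (fun k => x (k + 1))

/-- All coefficients vanish modulo 31. -/
def isZ : Pol → Bool
  | z => true
  | c k => k % 31 == 0
  | n P Q => isZ P && isZ Q

/-- Addition of a constant. -/
def addC (a : ℕ) : Pol → Pol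
  | z => c a
  | c b => c ((a + b) % 31)
  | n P Q => n P (addC a Q)

/-- Addition of polynomials. -/
def add : Pol → Pol → Pol
  | z, R => R
  | c a, R => addC a R
  | n P Q, R => match R with
    | z => n P Q
    | c b => addC b (n P Q)
    | n P' Q' => n (add P P') (add Q Q')

/-- Multiplication by a constant. -/
def smul (a : ℕ) : Pol → Pol
  | z => z
  | c b => match a with
    | 0 => z
    | a + 1 => c ((a + 1) * b % 31)
  | n P Q => match a with
    | 0 => z
    | a + 1 => n (smul (a + 1) P) (smul (a + 1) Q)

/-- Product with the linear form whose coefficient list is the second argument. -/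
def mulL : Pol → List ℕ → Pol
  | z, _ => z
  | c k, L => L.foldr (fun a R => n (smul a (c k)) R) z
  | n P Q, L => match L with
    | [] => z
    | a :: L => n (add (mulL P (a :: L)) (smul a (n z Q))) (mulL Q L)

/-- Substitution of linear forms for the variables. -/
def comp : Pol → List (List ℕ) → Pol
  | z, _ => z
  | c k, _ => c k
  | n P Q, Ls => add (mulL (comp P Ls) (Ls.headD [])) (comp Q Ls.tail)

end Pol

/-- The linear form with the given coefficients. -/
def lin : List ℕ → (ℕ → ZMod 31) → ZMod 31
  | [], _ => 0
  | a :: L, x => a * x 0 + lin L fun k => x (k + 1)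

/-- The linear map with the rows of the list `M`. -/
def app (M : List (List ℕ)) (x : ℕ → ZMod 31) : ℕ → ZMod 31 := fun k => lin (M.getD k []) x

theorem natCast_mod31 (a : ℕ) : ((a % 31 : ℕ) : ZMod 31) = a := ZMod.natCast_mod a 31

namespace Pol

theorem isZ_eval (P : Pol) (h : P.isZ = true) (x) : P.eval x = 0 := by
  induction P generalizing x with
  | z => rfl
  | c k =>
    simp only [isZ, beq_iff_eq] at h
    rw [eval, ← natCast_mod31, h, Nat.cast_zero]
  | n P Q hP hQ =>
    simp only [isZ, Bool.and_eq_true] at h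
    rw [eval, hP h.1, hQ h.2]; simp

theorem addC_eval (a : ℕ) (P : Pol) (x) : (addC a P).eval x = a + P.eval x := by
  induction P generalizing x with
  | z => simp [addC, eval]
  | c k => simp only [addC, eval, natCast_mod31]; push_cast; rfl
  | n P Q _ hQ => simp only [addC, eval, hQ]; ring

theorem add_eval (P R : Pol) (x) : (add P R).eval x = P.eval x + R.eval x := by
  induction P generalizing R x with
  | z => simp [add, eval]
  | c k => simp only [add, addC_eval, eval]
  | n P Q hP hQ =>
    cases R with
    | z => simp [add, eval]
    | c b => simp only [add, addC_eval, eval]; ring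
    | n P' Q' => simp only [add, eval, hP, hQ]; ring

theorem smul_eval (a : ℕ) (P : Pol) (x) : (smul a P).eval x = a * P.eval x := by
  induction P generalizing x with
  | z => simp [smul, eval]
  | c k =>
    cases a with
    | zero => simp [smul, eval]
    | succ a => simp only [smul, eval, natCast_mod31]; push_cast; rfl
  | n P Q hP hQ =>
    cases a with
    | zero => simp [smul, eval]
    | succ a => simp only [smul, eval, hP, hQ]; ring

theorem mulL_eval (P : Pol) (L : List ℕ) (x) : (mulL P L).eval x = P.eval x * lin L x := by
  induction P generalizing L x with
  | z => simp [mulL, eval]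
  | c k =>
    simp only [mulL, eval]
    induction L generalizing x with
    | nil => simp [eval, lin]
    | cons a L ih => simp only [List.foldr_cons, eval, ih, lin, smul_eval]; ring
  | n P Q hP hQ =>
    cases L with
    | nil => simp [mulL, eval, lin]
    | cons a L => simp only [mulL, eval, add_eval, smul_eval, hP, hQ, lin]; ring

theorem comp_eval (P : Pol) (Ls : List (List ℕ)) (x) :
    (comp P Ls).eval x = P.eval (app Ls x) := by
  induction P generalizing Ls with
  | z => rfl
  | c k => rfl
  | n P Q hP hQ =>
    simp only [comp, eval, add_eval, mulL_eval, hP, hQ]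
    have e1 : Ls.headD [] = Ls.getD 0 [] := by cases Ls <;> rfl
    have e2 : app Ls.tail x = fun k => app Ls x (k + 1) := by
      funext k; cases Ls <;> simp [app]
    rw [e1, e2, mul_comm]; rfl

end Pol

/-- Addition of coefficient lists. -/
def addV : List ℕ → List ℕ → List ℕ
  | a :: as, b :: bs => ((a + b) % 31) :: addV as bs
  | as, [] => as
  | [], bs => bs

/-- Row vector times matrix. -/
def rowM : List ℕ → List (List ℕ) → List ℕ
  | a :: as, b :: bs => addV (b.map fun y => a * y % 31) (rowM as bs)
  | _, _ => []

/-- The product of matrices, given by the lists of their rows. -/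
def mulM (A B : List (List ℕ)) : List (List ℕ) := A.map fun r => rowM r B

theorem addV_lin (a b : List ℕ) (x) : lin (addV a b) x = lin a x + lin b x := by
  induction a generalizing b x with
  | nil => cases b <;> simp [addV, lin]
  | cons a as ih =>
    cases b with
    | nil => simp [addV, lin]
    | cons b bs => simp only [addV, lin, natCast_mod31, ih]; push_cast; ring

theorem smulV_lin (a : ℕ) (b : List ℕ) (x) : lin (b.map fun y => a * y % 31) x = a * lin b x := by
  induction b generalizing x with
  | nil => simp [lin]
  | cons b bs ih => simp only [List.map_cons, lin, natCast_mod31, ih]; push_cast; ring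

theorem rowM_lin (r : List ℕ) (M : List (List ℕ)) (x) : lin (rowM r M) x = lin r (app M x) := by
  induction r generalizing M with
  | nil => simp [rowM, lin]
  | cons a as ih =>
    cases M with
    | nil =>
      have : ∀ L : List ℕ, ∀ y, (∀ k, y k = 0) → lin L y = 0 := by
        intro L
        induction L with
        | nil => simp [lin]
        | cons a L ih => intro y hy; simp [lin, hy, ih]
      rw [this (a :: as) (app [] x) (fun k => by simp [app, lin])]
      rfl
    | cons b bs =>
      simp only [rowM, addV_lin, smulV_lin, ih, lin]
      have e2 : app bs x = fun k => app (b :: bs) x (k + 1) := by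
        funext k; simp [app]
      rw [e2]; rfl

theorem app_mulM (A B : List (List ℕ)) (x) : app (mulM A B) x = app A (app B x) := by
  funext k
  simp only [app, mulM]
  rw [← show lin (rowM (A.getD k []) B) x = lin (A.getD k []) (app B x) from rowM_lin _ _ _]
  congr 1
  by_cases h : k < A.length
  · simp [h]
  · simp [h, rowM]

/-- Sums of multiples of products of linear forms. -/
def evT : List (ℕ × List (List ℕ)) → (ℕ → ZMod 31) → ZMod 31
  | [], _ => 0
  | (k, Ls) :: T, x => k * (Ls.map fun L => lin L x).prod + evT T x

/-- The polynomial of `evT` precomposed with a matrix. -/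
def polT : List (ℕ × List (List ℕ)) → List (List ℕ) → Pol
  | [], _ => Pol.z
  | (k, Ls) :: T, M => (Ls.foldr (fun L (P : Pol) => P.mulL (rowM L M)) (Pol.c k)).add (polT T M)

theorem polT_eval (T) (M : List (List ℕ)) (x) : (polT T M).eval x = evT T (app M x) := by
  induction T with
  | nil => rfl
  | cons t T ih =>
    obtain ⟨k, Ls⟩ := t
    simp only [polT, evT, Pol.add_eval, ih]
    congr 1
    induction Ls with
    | nil => simp [Pol.eval]
    | cons L Ls ih => simp only [List.foldr_cons, Pol.mulL_eval, ih, rowM_lin, List.map_cons,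
        List.prod_cons]; ring

/-- The sum, over a list of matrices, of the polynomial of `evT` precomposed with the matrix. -/
def sumW (T : List (ℕ × List (List ℕ))) : List (List (List ℕ)) → Pol
  | [] => Pol.z
  | M :: W => (polT T M).add (sumW T W)

/-- Averaging over a matrix of order two. -/
def dbl (M : List (List ℕ)) (P : Pol) : Pol := P.add (P.comp M)

/-! ### Certificates modulo 31 -/

/-- The residues modulo 31. -/
def md31 (v : List ℤ) : List ℕ := v.map fun z => (z % 31).toNat

/-- The identity matrix. -/
def mI : List (List ℕ) := [[1], [0, 1], [0, 0, 1], [0, 0, 0, 1], [0, 0, 0, 0, 1],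
  [0, 0, 0, 0, 0, 1], [0, 0, 0, 0, 0, 0, 1], [0, 0, 0, 0, 0, 0, 0, 1]]

/-- The inverse modulo 31 of the matrix `tupA`, with respect to class sums: it recovers the class sums of a
vector from its dot products with the vectors of `tupA`. -/
def alpha : List (List ℕ) := [
  [17, 17, 14, 17, 14, 0, 0, 0],
  [17, 14, 17, 14, 14, 0, 3, 0],
  [23, 20, 14, 17, 23, 28, 6, 3],
  [11, 8, 5, 5, 14, 28, 22, 28],
  [17, 14, 17, 17, 17, 3, 0, 0],
  [14, 14, 14, 14, 14, 0, 0, 28],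
  [14, 8, 17, 17, 20, 25, 28, 25],
  [8, 14, 11, 20, 23, 22, 3, 9]]

/-- The matrix of `gSig` on class sums. -/
def mSig : List (List ℕ) := [
  [0, 0, 0, 0, 30, 0, 0, 0],
  [0, 0, 0, 0, 0, 30, 0, 0],
  [0, 0, 0, 0, 0, 0, 30, 0],
  [0, 0, 0, 0, 0, 0, 0, 30],
  [30, 0, 0, 0, 0, 0, 0, 0],
  [0, 30, 0, 0, 0, 0, 0, 0],
  [0, 0, 30, 0, 0, 0, 0, 0],
  [0, 0, 0, 30, 0, 0, 0, 0]]

/-- The matrix of `gr` on class sums. -/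
def mR : List (List ℕ) := [
  [1, 0, 0, 0, 0, 0, 0, 0],
  [0, 30, 0, 0, 0, 0, 0, 0],
  [0, 0, 0, 30, 0, 0, 0, 0],
  [0, 0, 30, 0, 0, 0, 0, 0],
  [0, 0, 0, 0, 30, 0, 0, 0],
  [0, 0, 0, 0, 0, 1, 0, 0],
  [0, 0, 0, 0, 0, 0, 0, 1],
  [0, 0, 0, 0, 0, 0, 1, 0]]

/-- The matrix of `gS` on class sums. -/
def mS : List (List ℕ) := [
  [0, 1, 0, 0, 0, 0, 0, 0],
  [30, 0, 0, 0, 0, 0, 0, 0],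
  [0, 0, 0, 30, 0, 0, 0, 0],
  [0, 0, 1, 0, 0, 0, 0, 0],
  [0, 0, 0, 0, 0, 1, 0, 0],
  [0, 0, 0, 0, 30, 0, 0, 0],
  [0, 0, 0, 0, 0, 0, 0, 30],
  [0, 0, 0, 0, 0, 0, 1, 0]]

/-- The matrix on class sums of an excluded candidate. -/
def mN0 : List (List ℕ) := [
  [6, 28, 6, 28, 25, 3, 3, 0],
  [28, 6, 3, 0, 28, 6, 25, 28],
  [17, 3, 28, 0, 17, 0, 0, 22],
  [0, 17, 0, 22, 28, 14, 28, 0],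
  [25, 28, 0, 28, 25, 28, 28, 6],
  [3, 6, 28, 25, 28, 25, 0, 28],
  [3, 14, 0, 28, 0, 14, 9, 0],
  [14, 0, 22, 0, 17, 28, 0, 3]]

/-- The matrix on class sums of an excluded candidate. -/
def mN1 : List (List ℕ) := [
  [22, 16, 0, 0, 0, 18, 3, 3],
  [16, 9, 0, 0, 18, 0, 28, 3],
  [0, 0, 15, 9, 14, 17, 18, 0],
  [0, 0, 9, 16, 14, 14, 0, 13],
  [0, 18, 3, 3, 22, 15, 0, 0],
  [18, 0, 28, 3, 15, 9, 0, 0],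
  [14, 17, 18, 0, 0, 0, 16, 9],
  [14, 14, 0, 13, 0, 0, 9, 15]]

/-- The matrix on class sums of an excluded candidate. -/
def mN3 : List (List ℕ) := [
  [25, 12, 28, 28, 25, 12, 28, 28],
  [12, 25, 3, 28, 19, 6, 28, 3],
  [17, 14, 6, 0, 14, 14, 0, 18],
  [17, 17, 0, 13, 14, 17, 25, 0],
  [25, 19, 3, 3, 6, 12, 28, 28],
  [12, 6, 3, 28, 12, 6, 3, 28],
  [17, 17, 0, 25, 17, 14, 18, 0],
  [17, 14, 18, 0, 17, 17, 0, 25]]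

/-- Linear forms in the eight class sums: the value at `∞` and the sum over `F₃₁`, in the first
and in the second block. -/
def fE : List ℕ := [1, 0, 0, 0, 0, 0, 0, 0]
def fF : List ℕ := [0, 1, 1, 1, 0, 0, 0, 0]
def fE' : List ℕ := [0, 0, 0, 0, 1, 0, 0, 0]
def fF' : List ℕ := [0, 0, 0, 0, 0, 1, 1, 1]

/-- The sum over the nonzero squares minus `15` times the value at `0`. -/
def fZ : List ℕ := [0, 16, 1, 0, 0, 0, 0, 0]

/-- The target quartic `21 E⁴ + 30 E² E'²`. -/
def tgt : List (ℕ × List (List ℕ)) := [(21, [fE, fE, fE, fE]), (30, [fE, fE, fE', fE'])]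

/-- A quartic whose moment vanishes, used against `mN0`. -/
def rel0 : List (ℕ × List (List ℕ)) := [
  (4, [fF, fF, fF, fF]),
  (19, [fF, fF, fF', fF']),
  (22, [fF, fE, fE, fE']),
  (3, [fF, fE', fE', fE'])]

/-- A quartic whose moment vanishes, used against `mN1`. -/
def rel1 : List (ℕ × List (List ℕ)) := [
  (9, [fF, fF, fF', fF']),
  (25, [fF, fE', fE', fE']),
  (8, [fF, fE, fF, fF']),
  (18, [fF, fF, fF, fE']),
  (28, [fF, fF, fF, fF]),
  (18, [fF, fE, fE, fE'])]

/-- A quartic whose moment vanishes, used against `mN3`. -/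
def rel3 : List (ℕ × List (List ℕ)) := [
  (14, [fF, fE, fE, fF]),
  (22, [fZ, fE, fE', fE']),
  (14, [fF, fE', fE', fE']),
  (28, [fF, fE, fE', fF']),
  (17, [fF, fF, fE', fE']),
  (3, [fZ, fF, fE', fF']),
  (14, [fZ, fE, fF', fF']),
  (17, [fZ, fE, fF, fF]),
  (3, [fZ, fE, fE, fE]),
  (11, [fF, fF, fF, fE']),
  (23, [fZ, fE', fE', fF']),
  (13, [fF, fF, fF', fF']),
  (15, [fZ, fE, fF, fE']),
  (6, [fF, fF, fF, fF]),
  (20, [fF, fE, fE, fE']),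
  (29, [fF, fE, fF, fF']),
  (8, [fZ, fE, fE, fF']),
  (22, [fZ, fF, fF, fF']),
  (3, [fZ, fF', fF', fF'])]

/-- Products of maps which would preserve moments if `mN0` did. -/
def wds0 : List (List (List ℕ)) := [mI, mN0, mulM mSig mN0, mulM mN0 mN0, mulM mSig (mulM mN0 mN0), mulM mN0 (mulM mN0 mN0)]

/-- Products of maps which would preserve moments if `mN1` did. -/
def wds1 : List (List (List ℕ)) := [mI, mN1, mulM mSig mN1]

/-- Products of maps which would preserve moments if `mN3` did. -/
def wds3 : List (List (List ℕ)) := [mI, mN3]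

/-- The sum of the target plus `R`, over the matrices of `W` and averaged over the group generated by `mS`, `mR`,
`mSig`, vanishes identically. -/
def certP (R : List (ℕ × List (List ℕ))) (W : List (List (List ℕ))) : Bool :=
  (dbl mS (dbl mR (dbl mSig (sumW (tgt ++ R) W)))).isZ

theorem cert1 : certP rel1 wds1 = true := by decide +kernel

theorem cert0 : certP rel0 wds0 = true := by decide +kernel

theorem cert3 : certP rel3 wds3 = true := by decide +kernel

/-! ### Moments of class sums modulo 31 -/

/-- The index among eight classes of one of the sixteen classes. -/
def c8 (c : ℕ) : ℕ := if c % 8 < 2 then c % 8 + 4 * (c / 8) else 2 + c % 2 + 4 * (c / 8)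

/-- The eight class sums of a vector, modulo `31`. -/
def hv (y : LatZ) (k : ℕ) : ZMod 31 := ∑ i : Ix, if c8 (clsN i) = k then (y.1 i : ZMod 31) else 0

/-- Sums over the vectors of norm `120` of functions of the class sums. -/
noncomputable def mom (F : (ℕ → ZMod 31) → ZMod 31) : ZMod 31 := ∑ y ∈ M6, F (hv y)

/-- The matrix preserves the moments of all functions of the class sums. -/
def Inv (M : List (List ℕ)) : Prop := ∀ F, mom (fun x => F (app M x)) = mom F

theorem Inv_mul {A B : List (List ℕ)} (hA : Inv A) (hB : Inv B) : Inv (mulM A B) := by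
  intro F
  simp only [app_mulM]
  rw [hB (fun x => F (app A x)), hA]

theorem c8_lt : ∀ i, c8 (clsN i) < 8 := by decide +kernel

theorem lift8_c8 (v : List ℤ) (c : ℕ) (hc : c < 16) : (lift8 v).getD c 0 = v.getD (c8 c) 0 := by
  interval_cases c <;> rfl

theorem lin_eq (L : List ℕ) (x : ℕ → ZMod 31) (n : ℕ) (h : L.length ≤ n) :
    lin L x = ∑ k ∈ Finset.range n, ((L.getD k 0 : ℕ) : ZMod 31) * x k := by
  induction L generalizing x n with
  | nil => simp [lin]
  | cons a L ih =>
    obtain _ | n := n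
    · simp at h
    rw [Finset.sum_range_succ', lin, ih _ n (by simpa using h)]
    simp [add_comm]

theorem md31_getD (v : List ℤ) (k : ℕ) : (((md31 v).getD k 0 : ℕ) : ZMod 31) = (v.getD k 0 : ℤ) := by
  have h1 : (md31 v).getD k 0 = (v.getD k 0 % 31).toNat := by
    rw [md31, List.getD_eq_getElem?_getD, List.getElem?_map, List.getD_eq_getElem?_getD]
    cases v[k]? <;> rfl
  rw [h1]
  have h2 : (((v.getD k 0 % 31).toNat : ℤ) : ZMod 31) = ((v.getD k 0 : ℤ) : ZMod 31) := by
    rw [Int.toNat_of_nonneg (Int.emod_nonneg _ (by norm_num))]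
    exact (ZMod.intCast_eq_intCast_iff _ _ 31).mpr (Int.mod_modEq _ _)
  exact_mod_cast h2

theorem dot_hv (v : List ℤ) (hv8 : v.length ≤ 8) (y : LatZ) :
    ((Ev (lift8 v) ⬝ᵥ y.1 : ℤ) : ZMod 31) = lin (md31 v) (hv y) := by
  rw [lin_eq _ _ 8 (by simpa [md31] using hv8)]
  simp only [hv, Finset.mul_sum, md31_getD]
  rw [Finset.sum_comm, dotProduct]
  push_cast
  refine Finset.sum_congr rfl fun i _ => ?_
  simp only [mul_ite, mul_zero]
  rw [Finset.sum_ite_eq, if_pos (Finset.mem_range.mpr (c8_lt i)), Ev, lift8_c8 _ _ (clsN_lt i)]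

theorem hv_ge (y : LatZ) (k : ℕ) (hk : 8 ≤ k) : hv y k = 0 := by
  refine Finset.sum_eq_zero fun i _ => if_neg ?_
  have := c8_lt i
  omega

theorem tupA_len : ∀ i < 8, (tupA.getD i []).length = 8 := by decide +kernel

theorem alpha_app (y : LatZ) : app (mulM alpha (tupA.map md31)) (hv y) = hv y := by
  funext k
  by_cases hk : k < 8
  · rw [app, lin_eq _ _ 8]
    · have h : ∀ k < 8, ∀ j < 8, ((mulM alpha (tupA.map md31)).getD k []).getD j 0 =
          if j = k then 1 else 0 := by decide +kernel
      rw [Finset.sum_eq_single k]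
      · rw [h k hk k hk]; simp
      · intro j hj hjk
        rw [h k hk j (Finset.mem_range.mp hj), if_neg hjk]; simp
      · intro h; exact absurd (Finset.mem_range.mpr hk) h
    · have h : ∀ k < 8, ((mulM alpha (tupA.map md31)).getD k []).length ≤ 8 := by decide +kernel
      exact h k hk
  · have h : (mulM alpha (tupA.map md31)).length = 8 := by decide +kernel
    rw [hv_ge y k (by omega), app, List.getD_eq_default _ _ (by omega)]
    rfl

/-- An isometry moving the basis `aL` to a tuple of class functions acts linearly on the class
sums, hence preserves their moments. -/
theorem Inv_of (f : Gam) (t : List (List ℤ)) (ht : t.length = 8) (htl : ∀ i < 8, (t.getD i []).length ≤ 8)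
    (h : ∀ i < 8, (f • aL i).1 = Ev (lift8 (t.getD i []))) : Inv (mulM alpha (t.map md31)) := by
  have key : ∀ y : LatZ, hv (f⁻¹ • y) = app (mulM alpha (t.map md31)) (hv y) := by
    intro y
    rw [← alpha_app (f⁻¹ • y), app_mulM, app_mulM]
    congr 1
    funext i
    by_cases hi : i < 8
    · have e : ∀ s : List (List ℤ), s.length = 8 →
          (s.map md31).getD i [] = md31 (s.getD i []) := by
        intro s hs
        rw [List.getD_eq_getElem _ _ (by simp; omega), List.getElem_map,
          List.getD_eq_getElem _ _ (by omega)]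
      have e2 := e t ht
      have e1 := e tupA rfl
      simp only [app]
      rw [e1, e2, ← dot_hv _ (tupA_len i hi).le, ← dot_hv _ (htl i hi), ← h i hi, ← aL_val hi]
      congr 1
      have := smul_dot f (aL i) (f⁻¹ • y)
      rw [smul_inv_smul] at this
      exact this.symm
    · simp only [app]
      have e0 : ∀ s : List (List ℤ), s.length = 8 → (s.map md31).getD i [] = [] := by
        intro s hs
        exact List.getD_eq_default _ _ (by rw [List.length_map]; omega)
      rw [e0 t ht, e0 tupA rfl, lin, lin]
  intro F
  rw [mom, mom, ← sum_M6_smul f⁻¹ (fun y => F (hv y))]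
  simp only [key]

theorem act_len : ∀ l ∈ words, ∀ i < 8, (actW l (tupA.getD i [])).length ≤ 8 := by decide +kernel

theorem Inv_word {l : List ℕ} (hl : l ∈ words) :
    Inv (mulM alpha ((tupA.map (actW l)).map md31)) := by
  have e : ∀ i < 8, (tupA.map (actW l)).getD i [] = actW l (tupA.getD i []) := by
    intro i hi
    have : tupA.length = 8 := rfl
    rw [List.getD_eq_getElem _ _ (by simp; omega), List.getElem_map,
          List.getD_eq_getElem _ _ (by omega)]
  refine Inv_of (gW l) _ rfl (fun i hi => ?_) fun i hi => ?_
  · rw [e i hi]; exact act_len l hl i hi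
  · rw [e i hi]; exact gW_smul (words_lt l hl) (aL_val hi)

theorem Inv_mSig : Inv mSig := by
  have e : mulM alpha ((tupA.map (actW [1])).map md31) = mSig := by decide +kernel
  exact e ▸ Inv_word (by decide)

theorem Inv_mR : Inv mR := by
  have e : mulM alpha ((tupA.map (actW [2])).map md31) = mR := by decide +kernel
  exact e ▸ Inv_word (by decide)

theorem Inv_mS : Inv mS := by
  have e : mulM alpha ((tupA.map (actW [3])).map md31) = mS := by decide +kernel
  exact e ▸ Inv_word (by decide)

theorem Inv_mI : Inv mI := by
  have e : ∀ y, app mI (hv y) = hv y := by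
    intro y
    funext k
    by_cases hk : k < 8
    · interval_cases k <;> simp [app, mI, lin]
    · rw [app, List.getD_eq_default _ _ (by simp [mI]; omega), hv_ge y k (by omega)]; rfl
  intro F
  simp only [mom, e]

theorem mom_add (F G : (ℕ → ZMod 31) → ZMod 31) : mom (fun x => F x + G x) = mom F + mom G :=
  Finset.sum_add_distrib

theorem mom_dbl {M : List (List ℕ)} (hM : Inv M) (P : Pol) :
    mom (dbl M P).eval = 2 * mom P.eval := by
  have : (dbl M P).eval = fun x => P.eval x + P.eval (app M x) := by
    funext x; rw [dbl, Pol.add_eval, Pol.comp_eval]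
  rw [this, mom_add, hM P.eval]; ring

theorem mom_sumW (T) (W : List (List (List ℕ))) (hW : ∀ M ∈ W, Inv M) :
    mom (sumW T W).eval = W.length * mom (evT T) := by
  induction W with
  | nil => simp [sumW, mom, Pol.eval]
  | cons M W ih =>
    have : (sumW T (M :: W)).eval = fun x => evT T (app M x) + (sumW T W).eval x := by
      funext x; rw [sumW, Pol.add_eval, polT_eval]
    rw [this, mom_add, hW M List.mem_cons_self, ih fun M hM => hW M (List.mem_cons_of_mem _ hM)]
    push_cast [List.length_cons]; ring

/-- If all matrices in a certificate preserve moments, then the target plus `R` has moment zero. -/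
theorem cert_sound {R W} (h : certP R W = true) (hW : ∀ M ∈ W, Inv M) :
    8 * (W.length * mom (evT (tgt ++ R))) = (0 : ZMod 31) := by
  have h1 : mom (dbl mS (dbl mR (dbl mSig (sumW (tgt ++ R) W)))).eval = 0 :=
    Finset.sum_eq_zero fun y _ => Pol.isZ_eval _ h _
  rw [mom_dbl Inv_mS, mom_dbl Inv_mR, mom_dbl Inv_mSig, mom_sumW _ _ hW] at h1
  rw [← h1]; ring

theorem lin_hv (L : List ℕ) (hL : L.length ≤ 8) (y : LatZ) :
    lin L (hv y) = ∑ i : Ix, ((L.getD (c8 (clsN i)) 0 : ℕ) : ZMod 31) * (y.1 i : ZMod 31) := by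
  rw [lin_eq _ _ 8 hL]
  simp only [hv, Finset.mul_sum]
  rw [Finset.sum_comm]
  refine Finset.sum_congr rfl fun i _ => ?_
  simp only [mul_ite, mul_zero]
  rw [Finset.sum_ite_eq, if_pos (Finset.mem_range.mpr (c8_lt i))]

/-- Linear forms whose weights are invariant under translation. -/
def TInv (L : List ℕ) : Prop :=
  L.length ≤ 8 ∧ ∀ i, L.getD (c8 (clsN (gT.p i))) 0 = L.getD (c8 (clsN i)) 0

theorem TInv_fE : TInv fE := by unfold TInv; decide +kernel
theorem TInv_fF : TInv fF := by unfold TInv; decide +kernel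
theorem TInv_fE' : TInv fE' := by unfold TInv; decide +kernel
theorem TInv_fF' : TInv fF' := by unfold TInv; decide +kernel

theorem gT_apply (y : LatZ) (i : Ix) : (gT.toGam • y).1 i = y.1 (gT.p i) :=
  (SP.toGam_smul gT y i).trans (one_mul _)

theorem TInv.smul {L : List ℕ} (h : TInv L) (y : LatZ) :
    lin L (hv (gT.toGam • y)) = lin L (hv y) := by
  rw [lin_hv L h.1, lin_hv L h.1]
  rw [← Equiv.sum_comp gT.p fun i =>
    ((L.getD (c8 (clsN i)) 0 : ℕ) : ZMod 31) * (y.1 i : ZMod 31)]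
  refine Finset.sum_congr rfl fun i _ => ?_
  rw [h.2, gT_apply]

theorem gT_trans : ∀ b : Bool, ∀ x : ZMod 31, gT.p^[x.val] (b, some 0) = (b, some x) := by
  decide +kernel

/-- A linear form supported on the affine line of the first block, whose weights add up to zero
modulo `31`, is orthogonal to all translation invariant functions. -/
theorem mom_zero (L : List ℕ) (hL : L.length ≤ 8)
    (h1 : ∑ i : Ix, (L.getD (c8 (clsN i)) 0 : ZMod 31) = 0)
    (h2 : ∀ i : Ix, i.1 = true ∨ i.2 = none → L.getD (c8 (clsN i)) 0 = 0)
    (G : (ℕ → ZMod 31) → ZMod 31) (hG : ∀ y : LatZ, G (hv (gT.toGam • y)) = G (hv y)) :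
    mom (fun x => lin L x * G x) = 0 := by
  let m : Ix → ZMod 31 := fun i => ∑ y ∈ M6, (y.1 i : ZMod 31) * G (hv y)
  have hm : ∀ i, m (gT.p i) = m i := by
    intro i
    simp only [m]
    rw [← sum_M6_smul gT.toGam fun y => (y.1 i : ZMod 31) * G (hv y)]
    refine Finset.sum_congr rfl fun y _ => ?_
    rw [hG, gT_apply]
  have hmn : ∀ n i, m (gT.p^[n] i) = m i := by
    intro n
    induction n with
    | zero => intro i; rfl
    | succ n ih => intro i; rw [Function.iterate_succ_apply, ih, hm]
  have e : mom (fun x => lin L x * G x) =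
      ∑ i, ((L.getD (c8 (clsN i)) 0 : ℕ) : ZMod 31) * m i := by
    simp only [mom, lin_hv L hL, m, Finset.mul_sum, Finset.sum_mul]
    rw [Finset.sum_comm]
    simp only [mul_assoc]
  rw [e]
  have e2 : ∀ i, ((L.getD (c8 (clsN i)) 0 : ℕ) : ZMod 31) * m i =
      ((L.getD (c8 (clsN i)) 0 : ℕ) : ZMod 31) * m (false, some 0) := by
    rintro ⟨b, x⟩
    by_cases h : b = true ∨ x = none
    · rw [h2 _ h]; simp
    · push Not at h
      obtain ⟨x, rfl⟩ := Option.ne_none_iff_exists'.mp h.2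
      have hb : b = false := by simpa using h.1
      rw [hb, ← gT_trans false x, hmn]
  rw [Finset.sum_congr rfl fun i _ => e2 i, ← Finset.sum_mul, h1, zero_mul]

/-- The product of `fF` or `fZ`, whose weights on the affine line add up to zero modulo 31, with three translation
invariant forms has moment zero. The quartics `rel0`, `rel1` and `rel3` are combinations of such products. -/
theorem mom_rel {A u v w : List ℕ} (k : ℕ) (hA : A = fF ∨ A = fZ) (hu : TInv u) (hv' : TInv v)
    (hw : TInv w) : mom (fun x => k * ([A, u, v, w].map fun L => lin L x).prod) = 0 := by
  have h : mom (fun x => lin A x * (k * lin u x * lin v x * lin w x)) = 0 := by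
    refine mom_zero A ?_ ?_ ?_ _ fun y => by rw [hu.smul, hv'.smul, hw.smul]
    · rcases hA with rfl | rfl <;> decide
    · rcases hA with rfl | rfl <;> decide +kernel
    · rcases hA with rfl | rfl <;> decide +kernel
  rw [← h]
  congr 1
  funext x
  simp only [List.map_cons, List.map_nil, List.prod_cons, List.prod_nil]
  ring

theorem mom_cons (t) (T : List (ℕ × List (List ℕ))) : mom (evT (t :: T)) =
    mom (fun x => t.1 * (t.2.map fun L => lin L x).prod) + mom (evT T) := by
  rw [← mom_add]; rfl

theorem mom_append (T R : List (ℕ × List (List ℕ))) :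
    mom (evT (T ++ R)) = mom (evT T) + mom (evT R) := by
  induction T with
  | nil => simp [mom, evT]
  | cons t T ih => rw [List.cons_append, mom_cons, mom_cons, ih, add_assoc]

theorem mom_nil : mom (evT []) = 0 := Finset.sum_eq_zero fun _ _ => rfl

theorem mom_rel0 : mom (evT rel0) = 0 := by
  simp only [rel0, mom_cons, mom_nil]
  repeat rw [mom_rel _ (by simp) (by simp [TInv_fE, TInv_fF, TInv_fE', TInv_fF'])
    (by simp [TInv_fE, TInv_fF, TInv_fE', TInv_fF'])
    (by simp [TInv_fE, TInv_fF, TInv_fE', TInv_fF'])]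
  simp

theorem mom_rel1 : mom (evT rel1) = 0 := by
  simp only [rel1, mom_cons, mom_nil]
  repeat rw [mom_rel _ (by simp) (by simp [TInv_fE, TInv_fF, TInv_fE', TInv_fF'])
    (by simp [TInv_fE, TInv_fF, TInv_fE', TInv_fF'])
    (by simp [TInv_fE, TInv_fF, TInv_fE', TInv_fF'])]
  simp

theorem mom_rel3 : mom (evT rel3) = 0 := by
  simp only [rel3, mom_cons, mom_nil]
  repeat rw [mom_rel _ (by simp) (by simp [TInv_fE, TInv_fF, TInv_fE', TInv_fF'])
    (by simp [TInv_fE, TInv_fF, TInv_fE', TInv_fF'])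
    (by simp [TInv_fE, TInv_fF, TInv_fE', TInv_fF'])]
  simp

/-- Constancy on the two affine lines. -/
abbrev TFix (z : Ix → ℤ) : Prop := ∀ x : ZMod 31, ∀ b : Bool, z (b, some x) = z (b, some 0)

theorem TFix_iff (y : LatZ) : TFix y.1 ↔ gT.toGam • y = y := by
  constructor
  · intro h
    apply Subtype.ext; ext i
    rw [gT_apply]
    obtain ⟨b, _ | x⟩ := i
    · rfl
    · exact (h _ _).trans (h _ _).symm
  · intro h x b
    have h1 : ∀ n i, y.1 (gT.p^[n] i) = y.1 i := by
      intro n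
      induction n with
      | zero => intro i; rfl
      | succ n ih => intro i; rw [Function.iterate_succ_apply, ih, ← gT_apply, h]
    rw [← gT_trans b x, h1]

theorem TFix_u {y : LatZ} (h : TFix y.1) : gu.toGam • y = y := by
  apply Subtype.ext; ext i
  rw [SP.toGam_smul]
  obtain ⟨b, _ | x⟩ := i
  · exact one_mul _
  · exact (one_mul _).trans ((h _ _).trans (h _ _).symm)

theorem lin_fE (y : LatZ) : lin fE (hv y) = y.1 (false, none) ∧ lin fE' (hv y) = y.1 (true, none) := by
  constructor
  · rw [lin_hv _ (by decide), Finset.sum_eq_single (false, none)]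
    · have : fE.getD (c8 (clsN (false, none))) 0 = 1 := by decide +kernel
      rw [this]; simp
    · intro i _ hi
      have : ∀ i, i ≠ (false, none) → fE.getD (c8 (clsN i)) 0 = 0 := by decide +kernel
      rw [this i hi]; simp
    · simp
  · rw [lin_hv _ (by decide), Finset.sum_eq_single (true, none)]
    · have : fE'.getD (c8 (clsN (true, none))) 0 = 1 := by decide +kernel
      rw [this]; simp
    · intro i _ hi
      have : ∀ i, i ≠ (true, none) → fE'.getD (c8 (clsN i)) 0 = 0 := by decide +kernel
      rw [this i hi]; simp
    · simp

instance : Fact (Nat.Prime 31) := ⟨by norm_num⟩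

/-- The target quartic on the vectors fixed by the translation. -/
def tgtF (z : Ix → ℤ) : ℤ := 21 * z (false, none) ^ 4 + 30 * (z (false, none) * z (true, none)) ^ 2

theorem tgt_eq (y : LatZ) : evT tgt (hv y) = (tgtF y.1 : ZMod 31) := by
  simp only [tgt, evT, List.map_cons, List.map_nil, List.prod_cons, List.prod_nil, (lin_fE y).1,
    (lin_fE y).2, tgtF]
  push_cast; ring

set_option maxRecDepth 100000 in
theorem tgt_sum : (M3l.map fun v => if TFix (Ev v) then tgtF (Ev v) else 0).sum % 31 = 19 := by
  decide +kernel

/-- Modulo `31`, only the vectors constant on the affine lines contribute to this moment. -/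
theorem mom_tgt : mom (evT tgt) = 19 := by
  classical
  simp only [mom, tgt_eq]
  rw [sum_modp 31 M6 (gT.toGam • ·) (fun x hx => smul_M6 _ hx) (fun x _ => gT_iter x)]
  · have h1 : ∑ x ∈ M6 with gT.toGam • x = x, (tgtF x.1 : ZMod 31) =
        ∑ x ∈ M6 with gu.toGam • x = x, ((if TFix x.1 then tgtF x.1 else 0 : ℤ) : ZMod 31) := by
      rw [Finset.sum_filter, Finset.sum_filter]
      refine Finset.sum_congr rfl fun x _ => ?_
      by_cases h : TFix x.1
      · rw [if_pos ((TFix_iff x).mp h), if_pos (TFix_u h), if_pos h]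
      · rw [if_neg fun h' => h ((TFix_iff x).mpr h'), if_neg h]; simp
    rw [h1, ← Int.cast_sum, sum_fixed fun z => if TFix z then tgtF z else 0]
    have h2 := tgt_sum
    have := (ZMod.intCast_eq_intCast_iff _ 19 31).mpr (Int.ModEq.symm (by
      rw [Int.ModEq, Nat.cast_ofNat, h2]; rfl : (19:ℤ) ≡ _ [ZMOD ((31:ℕ):ℤ)]))
    rw [this]; rfl
  · intro x _
    have h1 : ∀ b, (gT.toGam • x).1 (b, none) = x.1 (b, none) := fun b => gT_apply x _
    simp only [tgtF, h1]

theorem tups_len : ∀ t ∈ tups, t.length = 8 ∧ ∀ i < 8, (t.getD i []).length ≤ 8 := by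
  decide +kernel

/-- A certificate contradicts the value `19` of the moment of the target. -/
theorem not_cert {R W} (h : certP R W = true) (hR : mom (evT R) = 0) (hW : ∀ M ∈ W, Inv M)
    (hl : ((8 * (W.length * 19) : ℕ) : ZMod 31) ≠ 0) : False := by
  have h1 := cert_sound h hW
  rw [mom_append, mom_tgt, hR, add_zero] at h1
  exact hl (by push_cast; exact h1)

theorem not_mN0 (h : Inv mN0) : False := by
  refine not_cert cert0 mom_rel0 (fun M hM => ?_) (by decide)
  simp only [wds0, List.mem_cons, List.not_mem_nil, or_false] at hM
  have h2 := Inv_mul h h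
  rcases hM with rfl | rfl | rfl | rfl | rfl | rfl
  exacts [Inv_mI, h, Inv_mul Inv_mSig h, h2, Inv_mul Inv_mSig h2, Inv_mul h h2]

theorem not_mN1 (h : Inv mN1) : False := by
  refine not_cert cert1 mom_rel1 (fun M hM => ?_) (by decide)
  simp only [wds1, List.mem_cons, List.not_mem_nil, or_false] at hM
  rcases hM with rfl | rfl | rfl
  exacts [Inv_mI, h, Inv_mul Inv_mSig h]

theorem not_mN3 (h : Inv mN3) : False := by
  refine not_cert cert3 mom_rel3 (fun M hM => ?_) (by decide)
  simp only [wds3, List.mem_cons, List.not_mem_nil, or_false] at hM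
  rcases hM with rfl | rfl
  exacts [Inv_mI, h]

/-- The matrix, on the eight class sums, of an isometry moving `aL` to the tuple `t`. -/
def mT (t : List (List ℤ)) : List (List ℕ) := mulM alpha (t.map md31)

/-- Five of the six candidate tuples are excluded: up to the known symmetries, their matrices
are `mN0`, `mN1` and `mN3`. -/
theorem tups_cases : ∀ t ∈ tups, t = tupA ∨ mT t = mN0 ∨ mT t = mN1 ∨ mT t = mN3 ∨
    mulM mSig (mulM (mT t) (mulM mR mSig)) = mN0 ∨ mulM mSig (mT t) = mN1 := by
  decide +kernel

/-- Among the six candidates only `tupA` itself lies in the orbit. -/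
theorem tup_unique (f : Gam) {t : List (List ℤ)} (ht : t ∈ tups)
    (h : ∀ i < 8, (f • aL i).1 = Ev (lift8 (t.getD i []))) : t = tupA := by
  have hI : Inv (mT t) := Inv_of f t (tups_len t ht).1 (tups_len t ht).2 h
  rcases tups_cases t ht with h | h | h | h | h | h
  · exact h
  · exact (not_mN0 (h ▸ hI)).elim
  · exact (not_mN1 (h ▸ hI)).elim
  · exact (not_mN3 (h ▸ hI)).elim
  · exact (not_mN0 (h ▸ Inv_mul Inv_mSig (Inv_mul hI (Inv_mul Inv_mR Inv_mSig)))).elim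
  · exact (not_mN1 (h ▸ Inv_mul Inv_mSig hI)).elim

/-- The images of the basis `aL` under isometries that are fixed by `gu` come from the sixteen
known isometries. -/
theorem fixed_tuple (f : Gam) (hf : ∀ i < 8, gu.toGam • f • aL i = f • aL i) :
    ∃ l ∈ words, ∀ i < 8, gW l • f • aL i = aL i := by
  obtain ⟨l, hl, t, ht, h⟩ := tuples f hf
  obtain rfl := tup_unique _ ht h
  refine ⟨l, hl, fun i hi => Subtype.ext ?_⟩
  rw [← mul_smul, h i hi, aL_val hi]

/-! ### Automorphisms commute with J -/

/-- The basis tuple `aL`. -/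
noncomputable def aT : Fin 8 → LatZ := fun i => aL i

/-- The orbit of the tuple `aT` under the automorphism group. -/
noncomputable def orb : Finset (Fin 8 → LatZ) :=
  @Finset.filter (Fin 8 → LatZ) (fun b => ∃ f : Gam, b = f • aT) (Classical.decPred _)
    (Fintype.piFinset fun _ => M6)

theorem mem_orb {b : Fin 8 → LatZ} : b ∈ orb ↔ ∃ f : Gam, b = f • aT := by
  classical
  rw [orb, Finset.mem_filter, and_iff_right_iff_imp]
  rintro ⟨f, rfl⟩
  exact Fintype.mem_piFinset.mpr fun i => smul_M6 f (aL_M6 i.2)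

theorem smul_orb (g : Gam) {b} (hb : b ∈ orb) : g • b ∈ orb := by
  obtain ⟨f, rfl⟩ := mem_orb.mp hb
  exact mem_orb.mpr ⟨g * f, (mul_smul _ _ _).symm⟩

theorem sum_orb_smul {M : Type*} [AddCommMonoid M] (g : Gam) (F : (Fin 8 → LatZ) → M) :
    ∑ b ∈ orb, F (g • b) = ∑ b ∈ orb, F b :=
  Finset.sum_bij' (fun x _ => g • x) (fun x _ => g⁻¹ • x) (fun _ hx => smul_orb g hx)
    (fun _ hx => smul_orb g⁻¹ hx) (fun x _ => inv_smul_smul g x) (fun x _ => smul_inv_smul g x)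
    (fun _ _ => rfl)

/-- The alternating bilinear form attached to the orbit of `aT`. -/
noncomputable def AF : LatZ →+ LatZ →+ ℤ := ∑ b ∈ orb,
  (AddMonoidHom.mk' (fun x => AddMonoidHom.mk' (fun y => ip (b 0) x * ip (b 2) y - ip (b 0) y * ip (b 2) x)
    (fun y z => by rw [ip_add_right, ip_add_right]; ring)) (fun x y => by
      ext z
      change ip (b 0) (x + y) * ip (b 2) z - ip (b 0) z * ip (b 2) (x + y) =
        (ip (b 0) x * ip (b 2) z - ip (b 0) z * ip (b 2) x) +
        (ip (b 0) y * ip (b 2) z - ip (b 0) z * ip (b 2) y)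
      rw [ip_add_right, ip_add_right]; ring))

theorem AF_apply (x y : LatZ) :
    AF x y = ∑ b ∈ orb, (ip (b 0) x * ip (b 2) y - ip (b 0) y * ip (b 2) x) := by
  simp [AF, AddMonoidHom.finsetSum_apply]

theorem AF_skew (x y : LatZ) : AF x y = - AF y x := by
  rw [AF_apply, AF_apply, ← Finset.sum_neg_distrib]
  exact Finset.sum_congr rfl fun b _ => by ring

theorem AF_inv (g : Gam) (x y : LatZ) : AF (g • x) (g • y) = AF x y := by
  rw [AF_apply, ← sum_orb_smul g, AF_apply]
  simp only [Pi.smul_apply, ip_smul]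

theorem words_inv : ∀ l ∈ words, ∃ l' ∈ words, ∀ i < 8,
    actW l (actW l' (tupA.getD i [])) = tupA.getD i [] := by decide +kernel

theorem words_act_inj : ∀ l ∈ words, ∀ l' ∈ words,
    (∀ i < 8, lift8 (actW l (tupA.getD i [])) = lift8 (actW l' (tupA.getD i []))) → l = l' := by
  decide +kernel

theorem words_nodup : words.Nodup := by decide +kernel

theorem gW_aL {l : List ℕ} (hl : l ∈ words) {i : ℕ} (hi : i < 8) :
    (gW l • aL i).1 = Ev (lift8 (actW l (tupA.getD i []))) := gW_smul (words_lt l hl) (aL_val hi)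

theorem sum_orb_fixed {M : Type*} [AddCommMonoid M] (F : (Fin 8 → LatZ) → M) :
    ∑ b ∈ orb with gu.toGam • b = b, F b = (words.map fun l => F (gW l • aT)).sum := by
  classical
  rw [← List.sum_toFinset _ words_nodup]
  symm
  refine Finset.sum_bij (fun l _ => gW l • aT) ?_ ?_ ?_ (fun _ _ => rfl)
  · intro l hl
    refine Finset.mem_filter.mpr ⟨mem_orb.mpr ⟨_, rfl⟩, ?_⟩
    funext i
    exact u_fix (gW_aL (List.mem_toFinset.mp hl) i.2)
  · intro l hl l' hl' h
    rw [List.mem_toFinset] at hl hl'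
    refine words_act_inj l hl l' hl' fun i hi => ?_
    have h1 := congrArg Subtype.val (congrFun h ⟨i, hi⟩)
    change (gW l • aL i).1 = (gW l' • aL i).1 at h1
    rw [gW_aL hl hi, gW_aL hl' hi] at h1
    rw [← lst16_Ev (v := lift8 (actW l _)) rfl, h1, lst16_Ev rfl]
  · intro b hb
    obtain ⟨hb, hu⟩ := Finset.mem_filter.mp hb
    obtain ⟨f, rfl⟩ := mem_orb.mp hb
    obtain ⟨l, hl, h⟩ := fixed_tuple f fun i hi => congrFun hu ⟨i, hi⟩
    obtain ⟨l', hl', h'⟩ := words_inv l hl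
    refine ⟨l', List.mem_toFinset.mpr hl', funext fun i => ?_⟩
    refine smul_left_cancel (gW l) ((?_ : _ = aL i).trans (h i i.2).symm)
    apply Subtype.ext
    have := gW_smul (words_lt l hl) (gW_aL hl' i.2)
    rw [h' i i.2] at this
    exact this.trans (aL_val i.2).symm

theorem orb_iter (b : Fin 8 → LatZ) : (gu.toGam • ·)^[5] b = b := by
  funext i
  have : ∀ n : ℕ, ((gu.toGam • ·)^[n] b) i = (gu.toGam • ·)^[n] (b i) := by
    intro n
    induction n with
    | zero => rfl
    | succ n ih =>
      rw [Function.iterate_succ_apply', Function.iterate_succ_apply', ← ih]; rfl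
  rw [this, gu_iter]

/-- Modulo `5` the form `AF` is a sum over the sixteen known isometries. -/
theorem AF_ne : AF (aL 0) (aL 2) ≠ 0 := by
  classical
  intro h0
  have fx : ∀ i < 8, gu.toGam • aL i = aL i := fun i hi => u_fix (aL_val hi)
  have ips : ∀ b : LatZ, ∀ i < 8, ip (gu.toGam • b) (aL i) = ip b (aL i) := by
    intro b i hi
    rw [← ip_smul gu.toGam b, fx i hi]
  rw [AF_apply] at h0
  have h1 := congrArg (Int.cast : ℤ → ZMod 5) h0
  rw [Int.cast_sum, sum_modp 5 orb (gu.toGam • ·) (fun b hb => smul_orb _ hb) (fun b _ => orb_iter b)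
    _ (fun b _ => by simp only [Pi.smul_apply]; rw [ips _ 0 (by norm_num), ips _ 2 (by norm_num),
      ips _ 0 (by norm_num), ips _ 2 (by norm_num)]), sum_orb_fixed] at h1
  have h2 : (words.map fun l => (((ip ((gW l • aT) 0) (aL 0) * ip ((gW l • aT) 2) (aL 2) -
      ip ((gW l • aT) 0) (aL 2) * ip ((gW l • aT) 2) (aL 0) : ℤ)) : ZMod 5)) =
      words.map fun l => let w := fun i => lift8 (actW l (tupA.getD i []))
        let a := fun i => lift8 (tupA.getD i [])
        ((ip16 (w 0) (a 0) * ip16 (w 2) (a 2) - ip16 (w 0) (a 2) * ip16 (w 2) (a 0) : ℤ) : ZMod 5) := by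
    refine List.map_congr_left fun l hl => ?_
    have e0 := aL_val (i := 0) (by norm_num)
    have e2 := aL_val (i := 2) (by norm_num)
    have f0 := gW_aL hl (i := 0) (by norm_num)
    have f2 := gW_aL hl (i := 2) (by norm_num)
    simp only
    rw [← ip_Ev f0 e0, ← ip_Ev f2 e2, ← ip_Ev f0 e2, ← ip_Ev f2 e0]
    rfl
  rw [h2] at h1
  revert h1
  decide +kernel

/-- Every automorphism commutes with `Jm`. -/
theorem J_comm (g : Gam) (x : LatZ) : g • JL x = JL (g • x) :=
  J_comm_of_form AF AF_skew AF_inv AF_ne g x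

/-! ### Automorphisms are signed permutations -/

/-- A description of the vectors of `LatZ` with all coordinates divisible by `5` that is visibly
stable under automorphisms commuting with `JL`. -/
def InK (x : LatZ) : Prop := ∃ y : LatZ, JL x + (2:ℤ) • x = (5:ℤ) • y

theorem gsmul_zsmul (g : Gam) (n : ℤ) (x : LatZ) : g • (n • x) = n • (g • x) :=
  map_zsmul (DistribSMul.toAddMonoidHom LatZ g) n x

theorem InK_smul (g : Gam) {x : LatZ} (h : InK x) : InK (g • x) := by
  obtain ⟨y, hy⟩ := h
  exact ⟨g • y, by rw [← J_comm, ← gsmul_zsmul, ← smul_add, hy, gsmul_zsmul]⟩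

theorem InK_iff (x : LatZ) : InK x ↔ ∀ i, 5 ∣ x.1 i := by
  constructor
  · rintro ⟨y, hy⟩ i
    have h1 := congrFun (congrArg Subtype.val hy) i
    have h2 := (mem_LatZ.mp x.2).2.2 i
    change (Jm *ᵥ x.1) i + 2 * x.1 i = 5 * y.1 i at h1
    omega
  · intro h
    choose z hz using h
    have hx : x.1 = (5:ℤ) • z := funext hz
    have hJ : Jm *ᵥ x.1 = (5:ℤ) • (Jm *ᵥ z) := by rw [hx, Matrix.mulVec_smul]
    have hm := mem_LatZ.mp (JL x + (2:ℤ) • x).2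
    have e : (JL x + (2:ℤ) • x).1 = (5:ℤ) • (Jm *ᵥ z + (2:ℤ) • z) := by
      change Jm *ᵥ x.1 + (2:ℤ) • x.1 = _
      rw [hJ, hx]; module
    rw [e] at hm
    refine ⟨⟨Jm *ᵥ z + (2:ℤ) • z, mem_LatZ.mpr ⟨fun i j => ?_, fun i => ?_, fun i => ?_⟩⟩,
      Subtype.ext e⟩
    · have := hm.1 i j
      rw [Pi.smul_apply, Pi.smul_apply, smul_eq_mul, smul_eq_mul] at this; omega
    · have := hm.2.1 i
      simp only [Pi.smul_apply, smul_eq_mul, ← Finset.mul_sum] at this ⊢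
      omega
    · rw [Matrix.mulVec_add, Matrix.mulVec_smul, J_J]
      simp only [Pi.add_apply, Pi.smul_apply, smul_eq_mul]
      omega

theorem InK_even {x : LatZ} (h : InK x) (h2 : x.1 ⬝ᵥ x.1 = 200) (i : Ix) : 10 ∣ x.1 i := by
  have h5 := (InK_iff x).mp h
  by_contra hi
  -- if one entry is odd, all are, and being multiples of `5` their squares are at least `25`
  have hodd : ∀ j, 25 ≤ x.1 j * x.1 j := by
    intro j
    have := (mem_LatZ.mp x.2).1 i j
    have := h5 i
    have := h5 j
    have : x.1 j ≤ -5 ∨ 5 ≤ x.1 j := by omega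
    rcases this with h | h <;> nlinarith
  have : ∑ j : Ix, (25:ℤ) ≤ x.1 ⬝ᵥ x.1 := Finset.sum_le_sum fun j _ => hodd j
  rw [Finset.sum_const, Finset.card_univ, card_Ix, h2] at this
  norm_num at this

/-- The shortest vectors with all coordinates divisible by `5`. -/
def rt (a b : Ix) (c : ℤ) (hc : c = 1 ∨ c = -1) : LatZ :=
  ⟨(10:ℤ) • (Pi.single a 1 + c • Pi.single b 1), by
    refine mem_LatZ.mpr ⟨fun i j => ?_, fun i => ?_, fun i => ?_⟩
    · simp only [Pi.smul_apply, smul_eq_mul]; omega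
    · simp only [Pi.smul_apply, smul_eq_mul, ← Finset.mul_sum, Pi.add_apply, Finset.sum_add_distrib,
        Finset.sum_pi_single', Finset.mem_univ, if_true]
      omega
    · rw [Matrix.mulVec_smul]
      simp only [Pi.smul_apply, smul_eq_mul]; omega⟩

theorem rt_dot (a b c hc) (y : Ix → ℤ) : (rt a b c hc).1 ⬝ᵥ y = 10 * (y a + c * y b) := by
  change ((10:ℤ) • (Pi.single a 1 + c • Pi.single b 1 : Ix → ℤ)) ⬝ᵥ y = _
  rw [smul_dotProduct, add_dotProduct, smul_dotProduct, single_one_dotProduct, single_one_dotProduct]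
  rfl

theorem rt_InK (a b c hc) : InK (rt a b c hc) :=
  (InK_iff _).mpr fun i => ⟨2 * (Pi.single a 1 + c • Pi.single b 1 : Ix → ℤ) i, by
    simp only [rt, Pi.smul_apply, smul_eq_mul]; ring⟩

theorem rt_norm {a b c hc} (h : a ≠ b) : (rt a b c hc).1 ⬝ᵥ (rt a b c hc).1 = 200 := by
  rw [rt_dot]
  rcases hc with rfl | rfl <;> simp [rt, h, h.symm]

/-- Every automorphism permutes the vectors `± ee i`. -/
theorem mono (g : Gam) (i : Ix) : ∃ k, ∃ s : ℤ, s * s = 1 ∧ g • ee i = s • ee k := by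
  set y := g • ee i with hy
  have h200 : ∀ x : LatZ, InK x → x.1 ⬝ᵥ x.1 = 200 → 200 ∣ x.1 ⬝ᵥ y.1 := by
    intro x hx hn
    have e := smul_dot g (g⁻¹ • x) (ee i)
    rw [smul_inv_smul] at e
    rw [hy, e, dotProduct_comm, dot_ee]
    have : 10 ∣ (g⁻¹ • x).1 i := InK_even (InK_smul _ hx) (by rw [smul_dot, hn]) i
    omega
  have hab : ∀ a b : Ix, a ≠ b → 20 ∣ y.1 a + y.1 b ∧ 20 ∣ y.1 a - y.1 b := by
    intro a b h
    have h1 := h200 (rt a b 1 (Or.inl rfl)) (rt_InK _ _ _ _) (rt_norm h)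
    have h2 := h200 (rt a b (-1) (Or.inr rfl)) (rt_InK _ _ _ _) (rt_norm h)
    rw [rt_dot] at h1 h2
    omega
  have hn : y.1 ⬝ᵥ y.1 = 400 := by
    rw [hy, smul_dot, dot_ee, ee_apply, if_pos rfl]; rfl
  -- otherwise all coordinates are odd multiples of `10`, and the norm is at least `6400`
  have h20 : ∀ a, 20 ∣ y.1 a := by
    intro a
    by_contra ha
    have hodd : ∀ j, 100 ≤ y.1 j * y.1 j := by
      intro j
      have : 20 ∣ y.1 a - 10 := by
        obtain ⟨b, hb⟩ := exists_ne a
        have := hab a b hb.symm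
        omega
      have : y.1 j ≤ -10 ∨ 10 ≤ y.1 j := by
        by_cases hj : a = j
        · subst hj; omega
        · have := hab a j hj
          omega
      rcases this with h | h <;> nlinarith
    have : ∑ j : Ix, (100:ℤ) ≤ y.1 ⬝ᵥ y.1 := Finset.sum_le_sum fun j _ => hodd j
    rw [Finset.sum_const, Finset.card_univ, card_Ix, hn] at this
    norm_num at this
  choose z hz using h20
  have hzn : ∑ j, z j * z j = 1 := by
    have : y.1 ⬝ᵥ y.1 = 400 * ∑ j, z j * z j := by
      rw [dotProduct, Finset.mul_sum]
      exact Finset.sum_congr rfl fun j _ => by rw [hz]; ring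
    omega
  have hex : ∃ k, z k ≠ 0 := by
    by_contra! h
    simp [h] at hzn
  obtain ⟨k, hk⟩ := hex
  have hsplit := Finset.add_sum_erase Finset.univ (fun j => z j * z j) (Finset.mem_univ k)
  simp only [hzn] at hsplit
  have hnn : ∀ j ∈ Finset.univ.erase k, 0 ≤ z j * z j := fun j _ => mul_self_nonneg _
  have hk1 : 1 ≤ z k * z k := by
    rcases lt_or_gt_of_ne hk with h | h <;> nlinarith
  have h0 := Finset.sum_nonneg hnn
  refine ⟨k, z k, by omega, Subtype.ext (funext fun j => ?_)⟩
  change y.1 j = z k * (ee k).1 j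
  rw [ee_apply]
  by_cases hj : j = k
  · rw [if_pos hj, hj, hz]; ring
  · have := (Finset.sum_eq_zero_iff_of_nonneg hnn).mp (by omega) j
      (Finset.mem_erase.mpr ⟨hj, Finset.mem_univ _⟩)
    rw [if_neg hj, hz, mul_self_eq_zero.mp this]; ring

theorem ee_dot (i j : Ix) : (ee i).1 ⬝ᵥ (ee j).1 = if i = j then 400 else 0 := by
  rw [dot_ee, ee_apply]; split_ifs <;> norm_num

theorem ee_J (i j : Ix) : (ee i).1 ⬝ᵥ (JL (ee j)).1 = 400 * Jm i j := by
  rw [dot_ee]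
  change 20 * (Jm *ᵥ ((20:ℤ) • Pi.single j 1)) i = _
  rw [Matrix.mulVec_smul, Matrix.mulVec_single_one]
  simp [Matrix.col_apply]
  ring

/-- An automorphism is a signed permutation of the coordinates, compatible with `Jm`. -/
theorem signed_perm (g : Gam) : ∃ π : Equiv.Perm Ix, ∃ s : Ix → ℤ, (∀ i, s i * s i = 1) ∧
    (∀ i, g • ee i = s i • ee (π i)) ∧ ∀ i j, Jm (π i) (π j) = s i * s j * Jm i j := by
  choose π s hs h using mono g
  have hinj : Function.Injective π := by
    intro i j hij
    by_contra hne
    have h1 := smul_dot g (ee i) (ee j)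
    rw [h, h, ee_dot, if_neg hne, hij] at h1
    simp only [AddSubgroup.coe_zsmul, smul_dotProduct, dotProduct_smul, ee_dot, if_true, smul_eq_mul] at h1
    have : s j * (s i * 400) * (s i * s j) = 400 := by
      linear_combination 400 * (s j * s j) * hs i + 400 * hs j
    rw [h1] at this
    norm_num at this
  refine ⟨Equiv.ofBijective π (Finite.injective_iff_bijective.mp hinj), s, hs, h, fun i j => ?_⟩
  have h1 := smul_dot g (ee i) (JL (ee j))
  have hJ : (JL (s j • ee (π j))).1 = s j • (JL (ee (π j))).1 := by
    change Jm *ᵥ (s j • ee (π j) : LatZ).1 = _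
    rw [AddSubgroup.coe_zsmul, Matrix.mulVec_smul]; rfl
  rw [J_comm, h, h, ee_J, hJ] at h1
  simp only [AddSubgroup.coe_zsmul, smul_dotProduct, dotProduct_smul, ee_J, smul_eq_mul] at h1
  simp only [Equiv.ofBijective_apply]
  have := hs i; have := hs j
  have h2 : s i * (s j * Jm (π i) (π j)) = Jm i j := by linarith
  linear_combination (s i * s j) * h2 - (s j * s j * Jm (π i) (π j)) * hs i - Jm (π i) (π j) * hs j

/-! ### Rigidity -/

/-- The image under `J` of the coordinate vector at `0` in the second block. -/
def rB : List ℤ := [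
  -1, 0, 1, 1, -1, 1, 1, -1, 1, 1, 1, 1, -1, -1, -1, 1, -1, 1, -1, 1, 1, 1, -1, -1, -1, -1, 1,
  -1, -1, 1, -1, -1]

/-- The image under `J` of the coordinate vector at `1` in the second block. -/
def rD : List ℤ := [
  -1, -1, 0, 1, 1, -1, 1, 1, -1, 1, 1, 1, 1, -1, -1, -1, 1, -1, 1, -1, 1, 1, 1, -1, -1, -1, -1,
  1, -1, -1, 1, -1]

/-- A vector obtained by `J` and odd cubic products in the proof of `rigid`; likewise the following lists. -/
def rc0 : List ℤ := [
  -1, -1, 0, 1, 1, -1, 1, 1, -1, 1, 1, 1, 1, -1, -1, -1, 1, -1, 1, -1, 1, 1, 1, -1, -1, -1, -1,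
  1, -1, -1, 1, -1]

def rc1 : List ℤ := [
  1, 0, -1, -1, 1, -1, -1, 1, -1, -1, -1, -1, 1, 1, 1, -1, 1, -1, 1, -1, -1, -1, 1, 1, 1, 1, -1,
  1, 1, -1, 1, 1]

def rh : List ℤ := [
  -1, 1, -1, 0, 4, 8, 8, -4, -8, 8, -8, -8, 4, 0, 0, 0, 4, 0, -4, 0, 0, 0, -4, 8, 8, -8, 8, 4,
  -8, -8, -4, 0]

def rk : List ℤ := [
  0, -1, -1, 31, -69, -33, 15, 27, 31, 15, 15, 15, -5, -33, -33, -33, 27, 31, 27, -33, -33, -33,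
  -5, 15, 15, 15, 31, 27, 15, -33, -69, 31]

def rf1 : List ℤ := [
  -5248, 11649, -27806, 3329, 6937, 1841, 10257, -23, 12113, 9361, -6159, 1905, 1689, 7937,
  -3071, 257, -13159, 1921, 6761, -2815, -1151, -6271, 1257, -1967, 6609, -4943, -7759, 25,
  -6351, 2513, -3479, -1407]

def rf2 : List ℤ := [
  36962, -151070, -524160, 183358, -69670, -330094, 195310, 168090, -102894, -318994, 353646,
  138862, -211078, -251390, 160770, -100350, 83898, 39618, 14394, 222722, 317182, 71934,
  -132966, 176066, 140418, 288322, -30830, -122918, -122622, -102638, -40838, -104766]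

/-- The vector supported on one block with the given entries, in the order `∞, 0, 1, …, 30`. -/
def tb (b : Bool) (l : List ℤ) : Ix → ℤ := fun i =>
  if i.1 = b then l.getD (match i.2 with | none => 0 | some x => x.val + 1) 0 else 0

section rigid
variable (π : Equiv.Perm Ix) (s : Ix → ℤ)

/-- Vectors fixed by a signed permutation. -/
def SFix (x : Ix → ℤ) : Prop := ∀ i, x (π i) = s i * x i

variable {π s}

theorem SFix.sub {x y : Ix → ℤ} (hx : SFix π s x) (hy : SFix π s y) : SFix π s (x - y) := fun i => by
  simp only [Pi.sub_apply, hx i, hy i]; ring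

theorem SFix.mul3 (hs : ∀ i, s i * s i = 1) {x y z : Ix → ℤ} (hx : SFix π s x) (hy : SFix π s y)
    (hz : SFix π s z) : SFix π s (x * y * z) := fun i => by
  simp only [Pi.mul_apply, hx i, hy i, hz i]
  linear_combination (s i * x i * y i * z i) * hs i

theorem SFix.J (hs : ∀ i, s i * s i = 1) (hJ : ∀ i j, Jm (π i) (π j) = s i * s j * Jm i j)
    {x : Ix → ℤ} (hx : SFix π s x) : SFix π s (Jm *ᵥ x) := fun i => by
  simp only [Matrix.mulVec, dotProduct, Finset.mul_sum]
  rw [← Equiv.sum_comp π]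
  refine Finset.sum_congr rfl fun j _ => ?_
  rw [hJ, hx j]
  linear_combination (s i * Jm i j * x j) * hs j

theorem SFix.single {k : Ix} (h1 : π k = k) (h2 : s k = 1) : SFix π s (Pi.single k 1) := fun i => by
  by_cases h : i = k
  · subst h; rw [h1, h2]; simp
  · have : π i ≠ k := fun e => h (π.injective (e.trans h1.symm))
    simp [h, this]

theorem tab_A : Jm *ᵥ Pi.single (false, none) 1 = tb true (0 :: List.replicate 31 1) := by
  decide +kernel
theorem tab_B : Jm *ᵥ Pi.single (true, some 0) 1 = tb false rB := by decide +kernel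
theorem tab_D : Jm *ᵥ Pi.single (true, some 1) 1 = tb false rD := by decide +kernel
theorem tab_c0 : Jm *ᵥ (tb false rB - tb false rD * tb false rD * tb false rB) = tb true rc0 := by
  decide +kernel
theorem tab_c1 : Jm *ᵥ (tb false rD - tb false rB * tb false rB * tb false rD) = tb true rc1 := by
  decide +kernel
theorem tab_h : Jm *ᵥ (tb true (0 :: List.replicate 31 1) * tb true rc0 * tb true rc1) = tb false rh := by
  decide +kernel
theorem tab_k : Jm *ᵥ (tb false rh * tb false rB * tb false rD) = tb true rk := by decide +kernel
theorem tab_f1 : Jm *ᵥ (tb true rc0 * tb true rk * tb true rk) = tb false rf1 := by decide +kernel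
theorem tab_f2 : Jm *ᵥ (tb false rf1 * tb false rh * tb false rB) = tb true rf2 := by decide +kernel
theorem tab_inj : ∀ i j, (tb false rf1 - tb true rf2) i ^ 2 = (tb false rf1 - tb true rf2) j ^ 2 → i = j := by
  decide +kernel
theorem tab_ne : ∀ i, (tb false rf1 - tb true rf2) i ≠ 0 := by decide +kernel

/-- A signed permutation compatible with `Jm` and fixing three coordinate vectors is trivial: it
fixes a vector whose coordinates have nonzero and distinct absolute values. -/
theorem rigid (hs : ∀ i, s i * s i = 1) (hJ : ∀ i j, Jm (π i) (π j) = s i * s j * Jm i j)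
    (h1 : π (false, none) = (false, none) ∧ s (false, none) = 1)
    (h2 : π (true, some 0) = (true, some 0) ∧ s (true, some 0) = 1)
    (h3 : π (true, some 1) = (true, some 1) ∧ s (true, some 1) = 1) (i : Ix) :
    π i = i ∧ s i = 1 := by
  have A := tab_A ▸ (SFix.single h1.1 h1.2).J hs hJ
  have B := tab_B ▸ (SFix.single h2.1 h2.2).J hs hJ
  have D := tab_D ▸ (SFix.single h3.1 h3.2).J hs hJ
  have c0 := tab_c0 ▸ (B.sub (D.mul3 hs D B)).J hs hJ
  have c1 := tab_c1 ▸ (D.sub (B.mul3 hs B D)).J hs hJ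
  have h := tab_h ▸ (A.mul3 hs c0 c1).J hs hJ
  have k := tab_k ▸ (h.mul3 hs B D).J hs hJ
  have f1 := tab_f1 ▸ (c0.mul3 hs k k).J hs hJ
  have f2 := tab_f2 ▸ (f1.mul3 hs h B).J hs hJ
  have f := f1.sub f2 i
  have hp : π i = i := tab_inj _ _ (by rw [f, mul_pow, sq (s i), hs i, one_mul])
  rw [hp] at f
  exact ⟨hp, mul_right_cancel₀ (tab_ne i) (by rw [one_mul]; exact f.symm)⟩

end rigid

/-! ### Counting by orbits -/

theorem ee_inj {i j : Ix} (h : ee i = ee j) : i = j := by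
  by_contra hne
  have := ee_dot i j
  rw [if_neg hne, h, ee_dot, if_pos rfl] at this
  norm_num at this

theorem ee_ne_neg (i j : Ix) : ee i ≠ -ee j := by
  intro h
  have h1 := congrFun (congrArg Subtype.val h) i
  rw [AddSubgroup.coe_neg, Pi.neg_apply, ee_apply, ee_apply, if_pos rfl] at h1
  split_ifs at h1 <;> omega

theorem perm_ee (d : SP) (k : Ix) (h : d.s k = 1) : d.toGam • ee (d.p k) = ee k := by
  rw [d.smul_ee, h, one_zsmul]

/-- The vectors `± ee i`. -/
def pm (a : Ix × Bool) : LatZ := if a.2 then ee a.1 else -ee a.1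

theorem pm_inj : Function.Injective pm := by
  rintro ⟨i, _ | _⟩ ⟨j, _ | _⟩ h <;> simp only [pm, if_true, Bool.false_eq_true, if_false] at h
  · rw [ee_inj (neg_injective h)]
  · exact (ee_ne_neg _ _ h.symm).elim
  · exact (ee_ne_neg _ _ h).elim
  · rw [ee_inj h]

/-- All `± 20 eᵢ` form one orbit, with 128 elements. -/
theorem orbit_one : MulAction.orbit Gam (ee (false, none)) = Set.range pm := by
  apply Set.Subset.antisymm
  · rintro _ ⟨g, rfl⟩
    obtain ⟨k, s, hs, h⟩ := mono g (false, none)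
    rcases mul_self_eq_one_iff.mp hs with rfl | rfl
    · exact ⟨(k, true), by simp only [pm, if_true]; exact (h.trans (one_zsmul _)).symm⟩
    · exact ⟨(k, false), by
        simp only [pm, Bool.false_eq_true, if_false]
        exact (h.trans (by rw [neg_smul, one_zsmul])).symm⟩
  · have hneg : ∀ x : LatZ, gNeg.toGam • x = -x := fun x => Subtype.ext (funext fun i => by
      rw [SP.toGam_smul]; exact neg_one_mul _)
    have key : ∀ i, ee i ∈ MulAction.orbit Gam (ee (false, none)) := by
      refine orbit_ind _ (MulAction.mem_orbit_self _) fun d i hi => ?_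
      have h1 := d.smul_ee i
      rcases d.s_cases i with h | h
      · rw [h, one_zsmul] at h1
        obtain ⟨f, hf⟩ := hi
        refine ⟨(d.toGam)⁻¹ * f, ?_⟩
        change ((d.toGam)⁻¹ * f) • ee (false, none) = _
        change f • ee (false, none) = _ at hf
        rw [mul_smul, hf, ← h1, inv_smul_smul]
      · rw [h, neg_smul, one_zsmul, ← hneg, ← inv_smul_eq_iff, ← mul_smul] at h1
        obtain ⟨f, hf⟩ := hi
        refine ⟨((gNeg.toGam)⁻¹ * d.toGam)⁻¹ * f, ?_⟩
        change (((gNeg.toGam)⁻¹ * d.toGam)⁻¹ * f) • ee (false, none) = _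
        change f • ee (false, none) = _ at hf
        rw [mul_smul, hf, ← h1, inv_smul_smul]
    rintro _ ⟨⟨i, _ | _⟩, rfl⟩
    · obtain ⟨f, hf⟩ := key i
      refine ⟨gNeg.toGam * f, ?_⟩
      change (gNeg.toGam * f) • ee (false, none) = _
      change f • ee (false, none) = _ at hf
      rw [mul_smul, hf, hneg]; rfl
    · exact key i

/-- The stabilizer of the first coordinate vector. -/
noncomputable abbrev H1 : Subgroup Gam := MulAction.stabilizer Gam (ee (false, none))
/-- The stabilizer of two coordinate vectors. -/
noncomputable abbrev H2 : Subgroup H1 := MulAction.stabilizer H1 (ee (true, some 0))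

theorem fix_one {π : Equiv.Perm Ix} {s : Ix → ℤ} {g : Gam} (hs : ∀ i, s i * s i = 1)
    (h : ∀ i, g • ee i = s i • ee (π i)) {i k : Ix} (hg : g • ee i = ee k) : π i = k ∧ s i = 1 := by
  have h1 := (h i).symm.trans hg
  rcases mul_self_eq_one_iff.mp (hs i) with e | e
  · rw [e, one_zsmul] at h1; exact ⟨ee_inj h1, e⟩
  · rw [e, neg_smul, one_zsmul] at h1; exact (ee_ne_neg _ _ h1.symm).elim

theorem H1_smul (g : H1) (ν : ZMod 31) : ∃ ν' : ZMod 31, g • ee (true, some ν) = ee (true, some ν') := by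
  obtain ⟨π, s, hs, h, hJ⟩ := signed_perm g.1
  obtain ⟨h1, h2⟩ := fix_one hs h (i := (false, none)) g.2
  have h3 := hJ (false, none) (true, some ν)
  have h4 := h (true, some ν)
  rw [h1, h2] at h3
  have h6 := hs (true, some ν)
  rcases hk : π (true, some ν) with ⟨_ | _, _ | ν'⟩ <;> rw [hk] at h3 h4 <;> simp [Jm, Cm] at h3
  · rw [h3] at h6; norm_num at h6
  · rw [h3] at h6; norm_num at h6
  · rw [h3] at h6; norm_num at h6
  · rw [← h3, one_zsmul] at h4; exact ⟨ν', h4⟩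

/-- The orbit of the coordinate vector at `0` in the second block consists of the vectors, with sign `+`, at the
31 finite places of that block. -/
theorem orbit_two : MulAction.orbit H1 (ee (true, some 0)) =
    Set.range fun ν : ZMod 31 => ee (true, some ν) := by
  apply Set.Subset.antisymm
  · rintro _ ⟨g, rfl⟩
    obtain ⟨ν, h⟩ := H1_smul g 0
    exact ⟨ν, h.symm⟩
  · have hT : gT.toGam ∈ H1 := perm_ee gT (false, none) rfl
    have key : ∀ n : ℕ, ee (true, some (n : ZMod 31)) ∈ MulAction.orbit H1 (ee (true, some 0)) := by
      intro n
      induction n with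
      | zero => rw [Nat.cast_zero]; exact MulAction.mem_orbit_self _
      | succ n ih =>
        have e : gT.toGam • ee (true, some ((n + 1 : ℕ) : ZMod 31)) = ee (true, some (n : ZMod 31)) := by
          rw [← perm_ee gT (true, some (n : ZMod 31)) rfl]
          simp [gT, affPerm, aff]
        obtain ⟨f, hf⟩ := ih
        refine ⟨(⟨_, hT⟩ : H1)⁻¹ * f, ?_⟩
        change ((⟨_, hT⟩ : H1)⁻¹ * f) • ee (true, some 0) = _
        change f • ee (true, some 0) = _ at hf
        rw [mul_smul, hf, inv_smul_eq_iff]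
        exact e.symm
    rintro _ ⟨ν, rfl⟩
    have := key ν.val
    rwa [ZMod.natCast_zmod_val] at this

/-- The remaining 30 finite places of the second block form one orbit: `gt9` moves `1` to all
nonzero squares, and `gr` exchanges squares and nonsquares. -/
theorem orbit_three : MulAction.orbit H2 (ee (true, some 1)) =
    Set.range fun ν : {ν : ZMod 31 // ν ≠ 0} => ee (true, some ν.1) := by
  apply Set.Subset.antisymm
  · rintro _ ⟨g, rfl⟩
    obtain ⟨ν, h⟩ := H1_smul g.1 1
    refine ⟨⟨ν, ?_⟩, h.symm⟩
    rintro rfl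
    have h2 : g.1 • ee (true, some 0) = ee (true, some 0) := g.2
    have := ee_inj (smul_left_cancel _ (h.trans h2.symm))
    simp at this
  · have key : ∀ d : SP, d.p (false, none) = (false, none) → d.s (false, none) = 1 →
        d.p (true, some 0) = (true, some 0) → d.s (true, some 0) = 1 → ∀ ν ν' : ZMod 31,
        d.p (true, some ν) = (true, some ν') → d.s (true, some ν) = 1 →
        ee (true, some ν) ∈ MulAction.orbit H2 (ee (true, some 1)) →
        ee (true, some ν') ∈ MulAction.orbit H2 (ee (true, some 1)) := by
      intro d h1 h2 h3 h4 ν ν' h5 h6 ⟨f, hf⟩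
      have m1 : d.toGam ∈ H1 := by
        have := perm_ee d _ h2
        rwa [h1] at this
      have m2 : (⟨_, m1⟩ : H1) ∈ H2 := by
        have := perm_ee d _ h4
        rw [h3] at this
        exact this
      have e := perm_ee d _ h6
      rw [h5] at e
      refine ⟨(⟨_, m2⟩ : H2)⁻¹ * f, ?_⟩
      change ((⟨_, m2⟩ : H2)⁻¹ * f) • ee (true, some 1) = _
      change f • ee (true, some 1) = _ at hf
      rw [mul_smul, hf, inv_smul_eq_iff]
      exact e.symm
    have k9 : ∀ k : ℕ, ee (true, some (9 ^ k : ZMod 31)) ∈ MulAction.orbit H2 (ee (true, some 1)) := by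
      intro k
      induction k with
      | zero => rw [pow_zero]; exact MulAction.mem_orbit_self _
      | succ k ih =>
        refine key gt9 rfl rfl (by decide) rfl _ _ ?_ rfl ih
        simp [gt9, affPerm, aff, pow_succ']
    rintro _ ⟨⟨ν, hν⟩, rfl⟩
    have hp : ∀ ν : ZMod 31, ν ≠ 0 → ∃ k < 15, ν = 9 ^ k ∨ ν = -9 ^ k := by decide +kernel
    obtain ⟨k, -, rfl | rfl⟩ := hp ν hν
    · exact k9 k
    · refine key gr rfl (by decide) (by decide) (by decide) _ _ ?_ (by simp [gr]) (k9 k)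
      simp [gr, affPerm, aff]

/-- The triviality of the last stabilizer, by `rigid`. -/
theorem stab_three : Nat.card (MulAction.stabilizer H2 (ee (true, some 1))) = 1 := by
  rw [Nat.card_eq_one_iff_unique]
  refine ⟨⟨fun a b => ?_⟩, ⟨1⟩⟩
  have key : ∀ g : MulAction.stabilizer H2 (ee (true, some 1)), g = 1 := by
    intro g
    obtain ⟨π, s, hs, h, hJ⟩ := signed_perm g.1.1.1
    have hr := rigid hs hJ (fix_one hs h (i := (false, none)) g.1.1.2)
      (fix_one hs h (i := (true, some 0)) g.1.2) (fix_one hs h (i := (true, some 1)) g.2)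
    have h1 : ∀ i, g.1.1.1 • ee i = ee i := fun i => by rw [h, (hr i).1, (hr i).2, one_zsmul]
    apply Subtype.ext; apply Subtype.ext; apply Subtype.ext; apply Subtype.ext
    apply LinearEquiv.toLinearMap_injective
    refine LinearMap.pi_ext' fun i => LinearMap.ext_ring ?_
    have h2 := toQ_smul g.1.1.1 (ee i)
    rw [h1] at h2
    have e : toQ (ee i).1 = (20:ℚ) • Pi.single i 1 := by
      ext j
      rw [toQ, ee_apply]
      by_cases hj : j = i
      · subst hj; simp
      · simp [hj]
    rw [e, map_smul] at h2
    exact (smul_right_injective _ (by norm_num : (20:ℚ) ≠ 0) h2).symm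
  rw [key a, key b]

/-- The order is `128 · 31 · 30`. -/
theorem card_Gam : Nat.card Gam = 119040 := by
  have h1 := Nat.card_congr (MulAction.orbitProdStabilizerEquivGroup Gam (ee (false, none)))
  have h2 := Nat.card_congr (MulAction.orbitProdStabilizerEquivGroup H1 (ee (true, some 0)))
  have h3 := Nat.card_congr (MulAction.orbitProdStabilizerEquivGroup H2 (ee (true, some 1)))
  rw [Nat.card_prod] at h1 h2 h3
  rw [stab_three, orbit_three, Nat.card_range_of_injective fun a b h => Subtype.ext (by
    simpa using ee_inj h)] at h3
  rw [orbit_two, Nat.card_range_of_injective fun a b h => by simpa using ee_inj h, ← h3] at h2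
  rw [orbit_one, Nat.card_range_of_injective pm_inj, ← h2] at h1
  have c3 : Fintype.card {ν : ZMod 31 // ν ≠ 0} = 30 := by decide +kernel
  rw [← h1]
  have c1 : Fintype.card (Ix × Bool) = 128 := by
    rw [Fintype.card_prod, card_Ix, Fintype.card_bool]
  simp only [Nat.card_eq_fintype_card, c1, ZMod.card, c3]

/-! ### The code -/

/-- The sign `-1` at `∞` and `1` elsewhere. -/
def sg : P1 → ℤ
  | none => -1
  | some _ => 1

/-- The matrix `(2 - C) D` with `C = Cm` and `D` the diagonal matrix of `sg`. -/
def MB : Matrix P1 P1 ℤ := fun i j => ((if i = j then 2 else 0) - Cm i j) * sg j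

/-- The matrix `D (2 + C)`, transpose of `MB`. -/
def MA : Matrix P1 P1 ℤ := fun i j => sg i * ((if i = j then 2 else 0) + Cm i j)

/-- Integral representatives of the generators `vgen`. -/
def vz (μ : ZMod 31) : P1 → ℤ
  | none => 2
  | some ν => if ν = μ then 1 else if chi (μ - ν) = 1 then 7 else 3

theorem vz_cast (μ : ZMod 31) (ν : P1) : ((vz μ ν : ℤ) : ZMod 35) = vgen μ ν := by
  rcases ν with _ | ν
  · simp [vz, vgen]
  · by_cases h : ν = μ
    · simp [vz, vgen, h]
    · have h' := chi_sq (μ - ν) (sub_ne_zero.mpr fun e => h e.symm)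
      by_cases h2 : IsSquare (μ - ν)
      · simp [vz, vgen, h, h2, h'.mp h2]
      · have h3 : chi (μ - ν) ≠ 1 := fun e => h2 (h'.mpr e)
        simp [vz, vgen, h, h2, h3]

/-- The integral vectors whose reductions satisfy `C m = 2 m` modulo `5` and `(2 - C) D m = 0`
modulo `7`; this is the preimage of the code, see `mem_Qcode`. -/
def Ker : AddSubgroup (P1 → ℤ) where
  carrier := {m | (∀ i, 5 ∣ (Matrix.of Cm *ᵥ m) i - 2 * m i) ∧ ∀ i, 7 ∣ (MB *ᵥ m) i}
  zero_mem' := by simp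
  add_mem' := by
    rintro a b ⟨h1, h2⟩ ⟨k1, k2⟩
    refine ⟨fun i => ?_, fun i => ?_⟩
    · have := h1 i; have := k1 i; simp only [Pi.add_apply, Matrix.mulVec_add]; omega
    · have := h2 i; have := k2 i; simp only [Pi.add_apply, Matrix.mulVec_add]; omega
  neg_mem' := by
    rintro a ⟨h1, h2⟩
    refine ⟨fun i => ?_, fun i => ?_⟩
    · have := h1 i; simp only [Pi.neg_apply, Matrix.mulVec_neg]; omega
    · have := h2 i; simp only [Pi.neg_apply, Matrix.mulVec_neg]; omega

theorem mem_Ker {m : P1 → ℤ} : m ∈ Ker ↔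
    (∀ i, 5 ∣ (Matrix.of Cm *ᵥ m) i - 2 * m i) ∧ ∀ i, 7 ∣ (MB *ᵥ m) i := Iff.rfl

theorem smul35_mem (k : P1 → ℤ) : (35 : ℤ) • k ∈ Ker := by
  refine ⟨fun i => ?_, fun i => ?_⟩
  · simp only [Pi.smul_apply, smul_eq_mul, Matrix.mulVec_smul]; omega
  · simp only [Pi.smul_apply, smul_eq_mul, Matrix.mulVec_smul]; omega

set_option maxRecDepth 100000 in
theorem vz_mem : ∀ μ : ZMod 31, vz μ ∈ Ker := by
  have h : ∀ μ : ZMod 31, ∀ i : P1, 5 ∣ (∑ j, Cm i j * vz μ j) - 2 * vz μ i ∧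
      7 ∣ ∑ j, MB i j * vz μ j := by decide +kernel
  exact fun μ => ⟨fun i => (h μ i).1, fun i => (h μ i).2⟩

/-- Coefficients expressing the columns of the idempotent of `Ker` modulo `35` through the
generators. -/
def Kc : P1 → ZMod 31 → ℤ
  | none, _ => 24
  | some j, μ => if μ = j then 3 else if chi (μ - j) = 1 then 0 else 5

/-- Modulo `5` the code is the image of the idempotent `(2 + C) / 4`, and modulo `7` that of
`(2 + D C D) / 4`; by the Chinese remainder theorem the columns of the matrix on the left are the
corresponding elements modulo `35`. -/
theorem Kc_spec : ∀ ν j : P1,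
    35 ∣ (84 * ((if ν = j then 2 else 0) + Cm ν j) + 30 * ((if ν = j then 4 else 0) -
      sg ν * MB ν j)) - ∑ μ, Kc j μ * vz μ ν := by decide +kernel

/-- The vectors satisfying the congruences lie in the code: up to multiples of 35, they are combinations of the
generators with the coefficients `Kc`. -/
theorem of_mem_Ker {m : P1 → ℤ} (hm : m ∈ Ker) :
    (fun ν => ((m ν : ℤ) : ZMod 35)) ∈ Qcode := by
  have e : (fun ν => ((m ν : ℤ) : ZMod 35)) = ∑ μ, (∑ j, Kc j μ * m j) • vgen μ := by
    funext ν
    rw [Finset.sum_apply]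
    simp only [Pi.smul_apply, zsmul_eq_mul, ← vz_cast]
    rw [← sub_eq_zero]
    have : (35 : ℤ) ∣ m ν - ∑ μ, (∑ j, Kc j μ * m j) * vz μ ν := by
      have h1 : (35 : ℤ) ∣ ∑ j, m j * ((84 * ((if ν = j then 2 else 0) + Cm ν j) +
          30 * ((if ν = j then 4 else 0) - sg ν * MB ν j)) - ∑ μ, Kc j μ * vz μ ν) :=
        Finset.dvd_sum fun j _ => Dvd.dvd.mul_left (Kc_spec ν j) _
      have h2 : ∑ μ, (∑ j, Kc j μ * m j) * vz μ ν = ∑ j, m j * ∑ μ, Kc j μ * vz μ ν := by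
        simp only [Finset.sum_mul, Finset.mul_sum]
        rw [Finset.sum_comm]
        exact Finset.sum_congr rfl fun _ _ => Finset.sum_congr rfl fun _ _ => by ring
      have h3 : ∑ j, m j * (84 * ((if ν = j then 2 else 0) + Cm ν j) +
          30 * ((if ν = j then 4 else 0) - sg ν * MB ν j)) =
          84 * (2 * m ν + (Matrix.of Cm *ᵥ m) ν) + 30 * (4 * m ν - sg ν * (MB *ᵥ m) ν) := by
        simp only [mul_add, mul_sub, Finset.sum_add_distrib, Finset.sum_sub_distrib, Matrix.mulVec,
          dotProduct, Finset.mul_sum, Matrix.of_apply, mul_ite, mul_zero, Finset.sum_ite_eq,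
          Finset.mem_univ, if_true]
        congr 1
        · congr 1
          · ring
          · exact Finset.sum_congr rfl fun _ _ => by ring
        · congr 1
          · ring
          · exact Finset.sum_congr rfl fun _ _ => by ring
      simp only [mul_sub, Finset.sum_sub_distrib] at h1
      simp only [← mul_sub] at h1
      rw [h3, ← h2] at h1
      obtain ⟨k5, hk5⟩ := hm.1 ν
      obtain ⟨k7, hk7⟩ := hm.2 ν
      rw [hk7, show sg ν * (7 * k7) = 7 * (sg ν * k7) by ring] at h1
      omega
    have h := (ZMod.intCast_zmod_eq_zero_iff_dvd _ 35).mpr this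
    push_cast at h ⊢
    exact h
  rw [e]
  exact AddSubgroup.sum_mem _ fun μ _ => AddSubgroup.zsmul_mem _
    (AddSubgroup.subset_closure (Set.mem_range_self μ)) _

/-- An integral vector reduces into the code `Q` exactly when it lies in `Ker`. -/
theorem mem_Qcode {m : P1 → ℤ} : (fun ν => ((m ν : ℤ) : ZMod 35)) ∈ Qcode ↔ m ∈ Ker := by
  refine ⟨fun h => ?_, of_mem_Ker⟩
  have hle : ∀ w ∈ Qcode, ∃ m' ∈ Ker, ∀ ν, ((m' ν : ℤ) : ZMod 35) = w ν := by
    have hq : Qcode ≤ Ker.map ((Int.castAddHom (ZMod 35)).compLeft P1) :=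
      (AddSubgroup.closure_le _).mpr (by
        rintro _ ⟨μ, rfl⟩
        exact ⟨vz μ, vz_mem μ, funext fun ν => vz_cast μ ν⟩)
    intro w hw
    obtain ⟨m', h1, h2⟩ := hq hw
    exact ⟨m', h1, fun ν => congrFun h2 ν⟩
  obtain ⟨m', hm', e⟩ := hle _ h
  have hd : ∀ ν, (35 : ℤ) ∣ m ν - m' ν := fun ν => by
    have := e ν
    rw [← sub_eq_zero, ← neg_eq_zero, neg_sub] at this
    exact (ZMod.intCast_zmod_eq_zero_iff_dvd _ 35).mp (by push_cast; exact this)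
  choose k hk using hd
  have : m = m' + (35 : ℤ) • k := by
    funext ν
    have := hk ν
    simp only [Pi.add_apply, Pi.smul_apply, smul_eq_mul]
    omega
  rw [this]
  exact add_mem hm' (smul35_mem k)

theorem C_mul_C : Matrix.of Cm * Matrix.of Cm = (-31 : ℤ) • (1 : Matrix P1 P1 ℤ) := by
  ext i j
  rw [Matrix.mul_apply]
  simp only [Matrix.of_apply, Cm_sq]
  simp [Matrix.one_apply]

theorem sg_mul_sg (i : P1) : sg i * sg i = 1 := by
  cases i <;> rfl

theorem diag_sg : Matrix.diagonal sg * Matrix.diagonal sg = 1 := by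
  rw [Matrix.diagonal_mul_diagonal, ← Matrix.diagonal_one]
  congr 1
  funext i
  exact sg_mul_sg i

theorem MB_eq : MB = ((2 : ℤ) • 1 - Matrix.of Cm) * Matrix.diagonal sg := by
  ext i j
  simp only [MB, Matrix.mul_diagonal, Matrix.sub_apply, Matrix.smul_apply, Matrix.one_apply,
    Matrix.of_apply, smul_eq_mul, mul_ite, mul_one, mul_zero]

theorem MA_eq : MA = Matrix.diagonal sg * ((2 : ℤ) • 1 + Matrix.of Cm) := by
  ext i j
  simp only [MA, Matrix.diagonal_mul, Matrix.add_apply, Matrix.smul_apply, Matrix.one_apply,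
    Matrix.of_apply, smul_eq_mul, mul_ite, mul_one, mul_zero]

theorem MA_MB : MA * MB = (35 : ℤ) • (1 : Matrix P1 P1 ℤ) := by
  have h : ((2 : ℤ) • 1 + Matrix.of Cm) * ((2 : ℤ) • 1 - Matrix.of Cm) =
      (35 : ℤ) • (1 : Matrix P1 P1 ℤ) := by
    simp only [add_mul, mul_sub, C_mul_C, smul_mul_assoc, mul_smul_comm, one_mul, mul_one]
    module
  rw [MA_eq, MB_eq, mul_assoc, ← mul_assoc _ _ (Matrix.diagonal sg), h, smul_mul_assoc,
    mul_smul_comm, one_mul, diag_sg]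

theorem MB_MA : MB * MA = (35 : ℤ) • (1 : Matrix P1 P1 ℤ) := by
  rw [MA_eq, MB_eq, mul_assoc, ← mul_assoc (Matrix.diagonal sg), diag_sg, one_mul]
  simp only [sub_mul, mul_add, C_mul_C, smul_mul_assoc, mul_smul_comm, one_mul, mul_one]
  module

theorem MB_transpose : MBᵀ = MA := by
  ext i j
  rw [Matrix.transpose_apply, MB, MA, Cm_skew j i]
  by_cases h : i = j
  · simp [h, mul_comm]
  · simp [h, Ne.symm h, mul_comm]

/-! ### The isometry with L_Q -/

theorem J_false (w : Ix → ℤ) (ν : P1) :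
    (Jm *ᵥ w) (false, ν) = (Matrix.of Cm *ᵥ fun μ => w (true, μ)) ν := by
  simp [Jm, Matrix.mulVec, dotProduct, Fintype.sum_prod_type]

theorem J_true (w : Ix → ℤ) (ν : P1) :
    (Jm *ᵥ w) (true, ν) = (Matrix.of Cm *ᵥ fun μ => w (false, μ)) ν := by
  simp [Jm, Matrix.mulVec, dotProduct, Fintype.sum_prod_type]

theorem MA_apply (z : P1 → ℤ) (i : P1) :
    (MA *ᵥ z) i = sg i * (2 * z i + (Matrix.of Cm *ᵥ z) i) := by
  rw [MA_eq, ← Matrix.mulVec_mulVec, Matrix.mulVec_diagonal, Matrix.add_mulVec, Matrix.smul_mulVec,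
    Matrix.one_mulVec]
  simp

/-- All off-diagonal entries of `C` are odd. -/
theorem C_parity (z : P1 → ℤ) (i : P1) :
    2 ∣ (Matrix.of Cm *ᵥ z) i - (∑ j, z j + z i) := by
  have h : ∀ i j, (2 : ℤ) ∣ Cm i j + (if i = j then 1 else 0) - 1 := by decide +kernel
  have h1 : (2 : ℤ) ∣ ∑ j, (Cm i j + (if i = j then 1 else 0) - 1) * z j :=
    Finset.dvd_sum fun j _ => Dvd.dvd.mul_right (h i j) _
  have h2 : ∑ j, (Cm i j + (if i = j then 1 else 0) - 1) * z j =
      (Matrix.of Cm *ᵥ z) i + z i - ∑ j, z j := by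
    simp [sub_mul, add_mul, Finset.sum_sub_distrib, Finset.sum_add_distrib, Matrix.mulVec,
      dotProduct]
  rw [h2] at h1
  omega

theorem MA_parity (z : P1 → ℤ) (i : P1) : 2 ∣ (MA *ᵥ z) i - (∑ j, z j + z i) := by
  rw [MA_apply]
  have := C_parity z i
  rcases mul_self_eq_one_iff.mp (sg_mul_sg i) with h | h <;> rw [h] <;> omega

theorem two_dvd_sum {x : P1 → ℤ} (h : ∀ i, 2 ∣ x i - x none) : 2 ∣ ∑ i, x i := by
  have h1 : (2 : ℤ) ∣ ∑ i, (x i - x none) := Finset.dvd_sum fun i _ => h i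
  have h2 : Fintype.card P1 = 32 := by decide +kernel
  rw [Finset.sum_sub_distrib, Finset.sum_const, Finset.card_univ, h2] at h1
  simp only [nsmul_eq_mul, Nat.cast_ofNat] at h1
  omega

theorem sum_Ix (w : Ix → ℤ) : ∑ j, w j = ∑ ν, w (true, ν) + ∑ ν, w (false, ν) := by
  rw [Fintype.sum_prod_type, Fintype.sum_bool]

/-- In the orthogonal coordinates `a = 7 (x₀ + x₁)`, `b = 5 (x₀ - x₁)` on each copy of `R∨`, the
form is `a² / 14 + b² / 10` and the glue condition splits into one modulo `7` on `a` and one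
modulo `5` on `b`. -/
theorem mem_LQ {x : P1 → Fin 2 → ℚ} : x ∈ LQ ↔ ∃ a b : P1 → ℤ,
    (∀ ν, x ν 0 = (5 * a ν + 7 * b ν) / 70 ∧ x ν 1 = (5 * a ν - 7 * b ν) / 70) ∧
    (∀ ν, 2 ∣ a ν - b ν) ∧ (∀ i, 5 ∣ (Matrix.of Cm *ᵥ b) i - 2 * b i) ∧
    ∀ i, 7 ∣ (MB *ᵥ a) i := by
  constructor
  · rintro ⟨w, hw, h⟩
    choose m hm hx using h
    choose k hk using hx
    have hm' : (fun ν => ((m ν : ℤ) : ZMod 35)) = w := funext hm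
    rw [← hm', mem_Qcode] at hw
    have ea : (fun ν => 7 * (k ν 0 + k ν 1) + 8 * m ν) =
        (7 : ℤ) • (fun ν => k ν 0 + k ν 1) + (8 : ℤ) • m := by
      funext ν; simp
    have eb : (fun ν => 5 * (k ν 0 - k ν 1) + 4 * m ν) =
        (5 : ℤ) • (fun ν => k ν 0 - k ν 1) + (4 : ℤ) • m := by
      funext ν; simp
    refine ⟨fun ν => 7 * (k ν 0 + k ν 1) + 8 * m ν, fun ν => 5 * (k ν 0 - k ν 1) + 4 * m ν,
      fun ν => ?_, fun ν => ?_, fun i => ?_, fun i => ?_⟩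
    · have h0 := hk ν 0
      have h1 := hk ν 1
      simp only [Pi.sub_apply, Pi.smul_apply, uvec, smul_eq_mul, Matrix.cons_val_zero,
        Matrix.cons_val_one] at h0 h1
      push_cast
      constructor <;> linarith
    · simp only; omega
    · have := hw.1 i
      rw [eb]
      simp only [Matrix.mulVec_add, Matrix.mulVec_smul, Pi.add_apply, Pi.smul_apply, smul_eq_mul]
      omega
    · have := hw.2 i
      rw [ea]
      simp only [Matrix.mulVec_add, Matrix.mulVec_smul, Pi.add_apply, Pi.smul_apply, smul_eq_mul]
      omega
  · rintro ⟨a, b, hx, h2, h5, h7⟩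
    choose c hc using h2
    have em : (fun ν => 15 * a ν - 21 * b ν) = (15 : ℤ) • a - (21 : ℤ) • b := by
      funext ν; simp
    have hK : (fun ν => 15 * a ν - 21 * b ν) ∈ Ker := by
      rw [em]
      refine ⟨fun i => ?_, fun i => ?_⟩
      · have := h5 i
        simp only [Matrix.mulVec_sub, Matrix.mulVec_smul, Pi.sub_apply, Pi.smul_apply, smul_eq_mul]
        omega
      · have := h7 i
        simp only [Matrix.mulVec_sub, Matrix.mulVec_smul, Pi.sub_apply, Pi.smul_apply, smul_eq_mul]
        omega
    refine ⟨_, mem_Qcode.mpr hK, fun ν => ⟨_, rfl, fun i => ?_⟩⟩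
    have hcq : (a ν : ℚ) = b ν + 2 * c ν := by
      have := hc ν
      exact_mod_cast (by omega : a ν = b ν + 2 * c ν)
    obtain ⟨x0, x1⟩ := hx ν
    fin_cases i
    · refine ⟨6 * b ν - 29 * c ν, ?_⟩
      simp only [Pi.sub_apply, Pi.smul_apply, uvec, smul_eq_mul, Fin.zero_eta,
        Matrix.cons_val_zero, x0]
      push_cast
      rw [hcq]; ring
    · refine ⟨b ν - 5 * c ν, ?_⟩
      simp only [Pi.sub_apply, Pi.smul_apply, uvec, smul_eq_mul, Fin.mk_one,
        Matrix.cons_val_one, x1]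
      push_cast
      rw [hcq]; ring

/-- The matrix `MA` over the rationals. -/
def MAq : Matrix P1 P1 ℚ := MA.map Int.cast
/-- The matrix `MB` over the rationals. -/
def MBq : Matrix P1 P1 ℚ := MB.map Int.cast

theorem MAq_MBq : MAq * MBq = (35 : ℚ) • (1 : Matrix P1 P1 ℚ) := by
  have h := congrArg (fun M => M.map (Int.castRingHom ℚ)) MA_MB
  simp only [Matrix.map_mul] at h
  refine h.trans ?_
  ext i j
  rw [Matrix.map_apply, Matrix.smul_apply, Matrix.smul_apply]
  by_cases e : i = j <;> simp [e, Matrix.one_apply]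

theorem MBq_MAq : MBq * MAq = (35 : ℚ) • (1 : Matrix P1 P1 ℚ) := by
  have h := congrArg (fun M => M.map (Int.castRingHom ℚ)) MB_MA
  simp only [Matrix.map_mul] at h
  refine h.trans ?_
  ext i j
  rw [Matrix.map_apply, Matrix.smul_apply, Matrix.smul_apply]
  by_cases e : i = j <;> simp [e, Matrix.one_apply]

theorem MAq_MBq_apply (x : P1 → ℚ) (ν : P1) : (MAq *ᵥ (MBq *ᵥ x)) ν = 35 * x ν := by
  rw [Matrix.mulVec_mulVec, MAq_MBq, Matrix.smul_mulVec, Matrix.one_mulVec]; rfl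

theorem MBq_MAq_apply (x : P1 → ℚ) (ν : P1) : (MBq *ᵥ (MAq *ᵥ x)) ν = 35 * x ν := by
  rw [Matrix.mulVec_mulVec, MBq_MAq, Matrix.smul_mulVec, Matrix.one_mulVec]; rfl

theorem MAq_cast (z : P1 → ℤ) (ν : P1) :
    (MAq *ᵥ fun μ => (z μ : ℚ)) ν = (((MA *ᵥ z) ν : ℤ) : ℚ) := by
  simp [MAq, Matrix.mulVec, dotProduct]

theorem MAq_dot (x y : P1 → ℚ) : (MAq *ᵥ x) ⬝ᵥ (MAq *ᵥ y) = 35 * (x ⬝ᵥ y) := by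
  have h : MAqᵀ = MBq := by
    rw [MAq, MBq, ← MB_transpose, Matrix.transpose_map, Matrix.transpose_transpose]
  rw [Matrix.dotProduct_mulVec, ← Matrix.mulVec_transpose, h, Matrix.mulVec_mulVec, MBq_MAq,
    Matrix.smul_mulVec, Matrix.one_mulVec, smul_dotProduct, smul_eq_mul]

/-- Half the difference of the two blocks. -/
def zz : VQ →ₗ[ℚ] (P1 → ℚ) where
  toFun w := fun ν => (w (false, ν) - w (true, ν)) / 2
  map_add' x y := by ext ν; simp; ring
  map_smul' c x := by ext ν; simp; ring

/-- The isometry, up to the factor `20`, from the coordinates of `LatZ` to those of `LQ`: with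
`b` and `z` half the sum and half the difference of the two blocks of `w`, the image has
`7 (x₀ + x₁) = D (2 + C) z / 5` and `5 (x₀ - x₁) = b`. -/
def Psi : VQ ≃ₗ[ℚ] (P1 → Fin 2 → ℚ) where
  toFun w := fun ν => ![(MAq *ᵥ zz w) ν / 70 + (w (false, ν) + w (true, ν)) / 20,
    (MAq *ᵥ zz w) ν / 70 - (w (false, ν) + w (true, ν)) / 20]
  invFun x := fun i => 5 * (x i.2 0 - x i.2 1) +
    (if i.1 then -1 else 1) * (MBq *ᵥ fun ν => x ν 0 + x ν 1) i.2
  map_add' x y := by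
    ext ν i
    fin_cases i
    · simp [Matrix.mulVec_add]; ring
    · simp [Matrix.mulVec_add]; ring
  map_smul' c x := by
    ext ν i
    fin_cases i
    · simp [Matrix.mulVec_smul]; ring
    · simp [Matrix.mulVec_smul]; ring
  left_inv w := by
    have e : (fun ν => (MAq *ᵥ zz w) ν / 70 + (w (false, ν) + w (true, ν)) / 20 +
        ((MAq *ᵥ zz w) ν / 70 - (w (false, ν) + w (true, ν)) / 20)) =
        (1 / 35 : ℚ) • (MAq *ᵥ zz w) := by
      ext ν; simp; ring
    funext ⟨b, ν⟩
    simp only [Matrix.cons_val_zero, Matrix.cons_val_one, e, Matrix.mulVec_smul, Pi.smul_apply,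
      MBq_MAq_apply, smul_eq_mul]
    cases b <;> simp [zz] <;> ring
  right_inv x := by
    have e : zz (fun i => 5 * (x i.2 0 - x i.2 1) +
        (if i.1 then -1 else 1) * (MBq *ᵥ fun ν => x ν 0 + x ν 1) i.2) =
        MBq *ᵥ fun ν => x ν 0 + x ν 1 := by
      ext ν; simp [zz]
    ext ν i
    simp only [e, MAq_MBq_apply]
    fin_cases i
    · simp; ring
    · simp; ring

theorem Psi_zero (w : VQ) (ν : P1) :
    Psi w ν 0 = (MAq *ᵥ zz w) ν / 70 + (w (false, ν) + w (true, ν)) / 20 := rfl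

theorem Psi_one (w : VQ) (ν : P1) :
    Psi w ν 1 = (MAq *ᵥ zz w) ν / 70 - (w (false, ν) + w (true, ν)) / 20 := rfl

theorem Psi_form (v w : VQ) : Bf (Psi v) (Psi w) = (v ⬝ᵥ w) / 20 := by
  have h := MAq_dot (zz v) (zz w)
  simp only [dotProduct] at h
  have e : ∀ ν, B2 (Psi v ν) (Psi w ν) = (MAq *ᵥ zz v) ν * (MAq *ᵥ zz w) ν * (1 / 350) +
      (v (false, ν) + v (true, ν)) * (w (false, ν) + w (true, ν)) / 40 := fun ν => by
    simp only [B2, Psi_zero, Psi_one]; ring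
  simp only [Bf, e, Finset.sum_add_distrib, ← Finset.sum_mul, h]
  simp only [dotProduct, Fintype.sum_prod_type, Fintype.sum_bool, Finset.mul_sum, Finset.sum_mul,
    Finset.sum_div, ← Finset.sum_add_distrib]
  refine Finset.sum_congr rfl fun ν _ => ?_
  simp only [zz, LinearMap.coe_mk, AddHom.coe_mk]
  ring

theorem Psi_mem {w : Ix → ℤ} (hw : w ∈ LatZ) : Psi (toQ w) ∈ LQ := by
  obtain ⟨h2, h4, h5⟩ := hw
  have hz : ∀ ν, ∃ z, w (false, ν) = w (true, ν) + 2 * z := fun ν => by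
    obtain ⟨z, hz⟩ := h2 (false, ν) (true, ν)
    exact ⟨z, by omega⟩
  choose z hz using hz
  have ef : (fun ν => w (false, ν)) = (fun ν => w (true, ν)) + (2 : ℤ) • z := by
    funext ν; simp [hz]
  have hCt : ∀ ν, 5 ∣ (Matrix.of Cm *ᵥ fun μ => w (true, μ)) ν - 2 * w (false, ν) := fun ν => by
    have := h5 (false, ν); rwa [J_false] at this
  have hCf : ∀ ν, 5 ∣ (Matrix.of Cm *ᵥ fun μ => w (true, μ)) ν + 2 * (Matrix.of Cm *ᵥ z) ν -
      2 * w (true, ν) := fun ν => by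
    have := h5 (true, ν)
    rw [J_true, ef, Matrix.mulVec_add, Matrix.mulVec_smul] at this
    exact this
  have ha : ∀ ν, ∃ a, (MA *ᵥ z) ν = 5 * a := fun ν => by
    have h1 := hCt ν
    have h3 := hCf ν
    have h6 := hz ν
    rw [MA_apply]
    exact Dvd.dvd.mul_left (by omega) _
  choose a ha using ha
  have ea : MA *ᵥ z = (5 : ℤ) • a := by funext ν; simp [ha]
  have eb : (fun ν => w (true, ν) + z ν) = (fun ν => w (true, ν)) + z := rfl
  refine mem_LQ.mpr ⟨a, fun ν => w (true, ν) + z ν, fun ν => ?_, fun ν => ?_, fun ν => ?_,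
    fun ν => ?_⟩
  · have e1 : zz (toQ w) = fun μ => (z μ : ℚ) := by
      funext μ
      simp [zz, toQ, hz]
    rw [Psi_zero, Psi_one, e1, MAq_cast, ha]
    simp only [toQ, hz]
    push_cast
    constructor <;> ring
  · have p1 := MA_parity z ν
    have p2 := h4 (false, ν)
    have p3 : (2 : ℤ) ∣ ∑ μ, w (false, μ) := two_dvd_sum fun i => h2 _ _
    have p4 : ∑ μ, w (false, μ) = ∑ μ, w (true, μ) + 2 * ∑ μ, z μ := by
      simp only [hz, Finset.sum_add_distrib, Finset.mul_sum]
    rw [sum_Ix] at p2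
    rw [ha] at p1
    have := hz ν
    simp only
    omega
  · rw [eb, Matrix.mulVec_add]
    have h1 := hCt ν
    have h3 := hCf ν
    have h6 := hz ν
    simp only [Pi.add_apply]
    omega
  · have h : MB *ᵥ (MA *ᵥ z) = (35 : ℤ) • z := by
      rw [Matrix.mulVec_mulVec, MB_MA, Matrix.smul_mulVec, Matrix.one_mulVec]
    rw [ea, Matrix.mulVec_smul] at h
    have := congrFun h ν
    simp only [Pi.smul_apply, smul_eq_mul] at this
    omega

theorem exists_of_mem_LQ {x : P1 → Fin 2 → ℚ} (hx : x ∈ LQ) : ∃ w ∈ LatZ, Psi (toQ w) = x := by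
  obtain ⟨a, b, hab, h2, h5, h7⟩ := mem_LQ.mp hx
  -- the vector `z = (2 - C) D a / 7`
  choose z hz using h7
  have ez : MB *ᵥ a = (7 : ℤ) • z := by funext ν; simp [hz]
  have hA : ∀ ν, (MA *ᵥ z) ν = 5 * a ν := fun ν => by
    have h : MA *ᵥ (MB *ᵥ a) = (35 : ℤ) • a := by
      rw [Matrix.mulVec_mulVec, MA_MB, Matrix.smul_mulVec, Matrix.one_mulVec]
    rw [ez, Matrix.mulVec_smul] at h
    have := congrFun h ν
    simp only [Pi.smul_apply, smul_eq_mul] at this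
    omega
  have hC : ∀ ν, 5 ∣ (Matrix.of Cm *ᵥ z) ν + 2 * z ν := fun ν => by
    have h := hA ν
    rw [MA_apply] at h
    rcases mul_self_eq_one_iff.mp (sg_mul_sg ν) with e | e <;> rw [e] at h <;> omega
  have hp : ∀ ν, (2 : ℤ) ∣ b ν + z ν - ∑ μ, z μ := fun ν => by
    have h1 := MA_parity z ν
    rw [hA] at h1
    have := h2 ν
    omega
  have hs : (2 : ℤ) ∣ ∑ μ, (b μ + z μ) := two_dvd_sum fun i => by
    have := hp i; have := hp none; omega
  rw [Finset.sum_add_distrib] at hs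
  have et : (fun μ => b μ - z μ) = b - z := rfl
  have ef : (fun μ => b μ + z μ) = b + z := rfl
  refine ⟨fun i => if i.1 then b i.2 - z i.2 else b i.2 + z i.2, ⟨?_, ?_, ?_⟩, ?_⟩
  · rintro ⟨c, μ⟩ ⟨d, ν⟩
    have := hp μ
    have := hp ν
    cases c <;> cases d <;> simp only [if_true, Bool.false_eq_true, if_false] <;> omega
  · rintro ⟨c, μ⟩
    rw [sum_Ix]
    simp only [if_true, Bool.false_eq_true, if_false, Finset.sum_add_distrib,
      Finset.sum_sub_distrib]
    have := hp μ
    cases c <;> simp only [if_true, Bool.false_eq_true, if_false] <;> omega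
  · rintro ⟨c, μ⟩
    have h1 := h5 μ
    have h3 := hC μ
    cases c
    · rw [J_false]
      simp only [if_true, Bool.false_eq_true, if_false]
      rw [et, Matrix.mulVec_sub, Pi.sub_apply]
      omega
    · rw [J_true]
      simp only [if_true, Bool.false_eq_true, if_false]
      rw [ef, Matrix.mulVec_add, Pi.add_apply]
      omega
  · have e1 : zz (toQ fun i => if i.1 then b i.2 - z i.2 else b i.2 + z i.2) =
        fun μ => (z μ : ℚ) := by
      funext μ
      simp [zz, toQ]
    ext ν i
    obtain ⟨x0, x1⟩ := hab ν
    fin_cases i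
    · refine (Psi_zero _ ν).trans ?_
      rw [e1, MAq_cast, hA]
      refine Eq.trans ?_ x0.symm
      simp [toQ]; ring
    · refine (Psi_one _ ν).trans ?_
      rw [e1, MAq_cast, hA]
      refine Eq.trans ?_ x1.symm
      simp [toQ]; ring

/-- Some positive integral multiple of a rational vector lies in `LatZ`. -/
theorem exists_multiple (x : VQ) : ∃ N : ℚ, N ≠ 0 ∧ ∃ v ∈ LatZ, toQ v = N • x := by
  obtain ⟨N, hN⟩ := IsLocalization.exist_integer_multiples_of_finite (nonZeroDivisors ℤ) x
  choose v hv using hN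
  have h0 : ((N : ℤ) : ℚ) ≠ 0 := by exact_mod_cast nonZeroDivisors.coe_ne_zero N
  refine ⟨20 * (N : ℤ), mul_ne_zero (by norm_num) h0, (20 : ℤ) • v, smul20_mem v, ?_⟩
  funext i
  have h := hv i
  simp only [eq_intCast, zsmul_eq_mul] at h
  simp only [toQ, Pi.smul_apply, smul_eq_mul, Int.cast_mul, h]
  push_cast
  ring

/-- Conjugation by `Psi`. -/
def conjPsi : (VQ ≃ₗ[ℚ] VQ) ≃ ((P1 → Fin 2 → ℚ) ≃ₗ[ℚ] (P1 → Fin 2 → ℚ)) where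
  toFun g := Psi.symm.trans (g.trans Psi)
  invFun f := Psi.trans (f.trans Psi.symm)
  left_inv g := by ext1 x; simp
  right_inv f := by ext1 x; simp

theorem conjPsi_Psi (g : VQ ≃ₗ[ℚ] VQ) (w : VQ) : conjPsi g (Psi w) = Psi (g w) := by
  simp [conjPsi]

/-- Conjugation by `Psi` turns automorphisms of `LatZ` into automorphisms of `L_Q`. -/
theorem mem_Gam_iff (g : VQ ≃ₗ[ℚ] VQ) : g ∈ Gam ↔ (⇑(conjPsi g) '' LQ = LQ) ∧
    ∀ x ∈ LQ, ∀ y ∈ LQ, Bf (conjPsi g x) (conjPsi g y) = Bf x y := by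
  constructor
  · rintro ⟨h1, h2, h3⟩
    refine ⟨Set.Subset.antisymm ?_ ?_, ?_⟩
    · rintro _ ⟨x, hx, rfl⟩
      obtain ⟨w, hw, rfl⟩ := exists_of_mem_LQ hx
      obtain ⟨v, hv, e⟩ := h1 w hw
      rw [conjPsi_Psi, ← e]
      exact Psi_mem hv
    · intro x hx
      obtain ⟨w, hw, rfl⟩ := exists_of_mem_LQ hx
      obtain ⟨v, hv, e⟩ := h2 w hw
      exact ⟨_, Psi_mem hv, by rw [conjPsi_Psi, e, LinearEquiv.apply_symm_apply]⟩
    · intro x hx y hy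
      obtain ⟨v, hv, rfl⟩ := exists_of_mem_LQ hx
      obtain ⟨w, hw, rfl⟩ := exists_of_mem_LQ hy
      rw [conjPsi_Psi, conjPsi_Psi, Psi_form, Psi_form, h3]
  · rintro ⟨h1, h2⟩
    refine ⟨fun w hw => ?_, fun w hw => ?_, fun x y => ?_⟩
    · have hm : conjPsi g (Psi (toQ w)) ∈ LQ := h1 ▸ Set.mem_image_of_mem _ (Psi_mem hw)
      obtain ⟨v, hv, e⟩ := exists_of_mem_LQ hm
      rw [conjPsi_Psi] at e
      exact ⟨v, hv, Psi.injective e⟩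
    · have hm : Psi (toQ w) ∈ ⇑(conjPsi g) '' LQ := h1.symm ▸ Psi_mem hw
      obtain ⟨x, hx, e⟩ := hm
      obtain ⟨v, hv, rfl⟩ := exists_of_mem_LQ hx
      rw [conjPsi_Psi] at e
      exact ⟨v, hv, by rw [← Psi.injective e, LinearEquiv.symm_apply_apply]⟩
    · obtain ⟨M, hM, v, hv, ev⟩ := exists_multiple x
      obtain ⟨N, hN, w, hw, ew⟩ := exists_multiple y
      have h := h2 _ (Psi_mem hv) _ (Psi_mem hw)
      rw [conjPsi_Psi, conjPsi_Psi, Psi_form, Psi_form, ev, ew] at h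
      simp only [map_smul, smul_dotProduct, dotProduct_smul, smul_eq_mul] at h
      have h' : M * N * (g x ⬝ᵥ g y) = M * N * (x ⬝ᵥ y) := by linear_combination 20 * h
      exact mul_left_cancel₀ (mul_ne_zero hM hN) h'

end GQR

/-- The automorphism group `O(L_Q)` of the lattice `L_Q` has order 119040.  Since `L_Q`
spans `ℚ⁶⁴`, automorphisms of `L_Q` correspond exactly to ℚ-linear automorphisms of the
ambient space mapping `L_Q` onto itself and preserving the bilinear form on `L_Q`. -/
theorem stmt_12 :
    Nat.card {f : (P1 → Fin 2 → ℚ) ≃ₗ[ℚ] (P1 → Fin 2 → ℚ) //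
      (⇑f '' LQ = LQ) ∧ ∀ x ∈ LQ, ∀ y ∈ LQ, Bf (f x) (f y) = Bf x y} = 119040 := by
  exact (Nat.card_congr (GQR.conjPsi.subtypeEquiv GQR.mem_Gam_iff)).symm.trans GQR.card_Gam
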